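/- arXiv:1510.02999 — 4 statements merged into one kernel-verified Lean document; each statement's English description precedes it below -/
import Mathlib

section
/- Let T > 0 and let v : [0,T]×ℝ³ → ℝ³, G : [0,T]×ℝ³ → M₃(ℝ), p : [0,T]×ℝ³ → ℝ, f : [0,T]×ℝ³ → ℝ³, g : [0,T]×ℝ³ → M₃(ℝ) be smooth functions, all compactly supported in the spatial variable uniformly in t, satisfying for all (t,x): ∂_t v_i − ∂_j G_{ij} = −∂_i p + f_i and ∂_t G_{ij} − ∂_j v_i = g_{ij} (summation over repeated indices). Define the ghost-weighted energy ℰ(t) = ∫_{ℝ³} e^{−q(t−r)} (|v(t,x)|² + ‖G(t,x)‖_F²) dx, where q(σ) = arctan σ. Then for every t ∈ (0,T), ℰ is differentiable at t and ℰ′(t) + ∫_{ℝ³} e^{−q(t−r)}/(1+(t−r)²) ( |v + Gω|² + ‖G − (Gω)ωᵀ‖_F² ) dx = 2∫_{ℝ³} e^{−q(t−r)} ( f·v + Σ_{i,j} g_{ij} G_{ij} ) dx − 2∫_{ℝ³} e^{−q(t−r)} v·∇p dx. -/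
open MeasureTheory

noncomputable section

/-- Three-dimensional Euclidean space. -/
abbrev E3 : Type := EuclideanSpace ℝ (Fin 3)

/-- The spatial partial derivative `∂_j u` of a scalar function on `ℝ³`. -/
noncomputable def pd (j : Fin 3) (u : E3 → ℝ) (x : E3) : ℝ :=
  fderiv ℝ u x (EuclideanSpace.single j 1)

/-- The ghost weight `q(σ) = arctan σ`, so that `q′(σ) = 1/(1+σ²)` and `|q| ≤ π/2`. -/
noncomputable def ghost (σ : ℝ) : ℝ := Real.arctan σ

/-- The ghost-weighted energy
`ℰ(t) = ∫ e^{−q(t−r)} (|v(t,x)|² + ‖G(t,x)‖_F²) dx`. -/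
noncomputable def ghostEnergy (v : ℝ → E3 → Fin 3 → ℝ)
    (G : ℝ → E3 → Fin 3 → Fin 3 → ℝ) (t : ℝ) : ℝ :=
  ∫ x : E3, Real.exp (-(ghost (t - ‖x‖))) *
    ((∑ i, (v t x i) ^ 2) + ∑ i, ∑ j, (G t x i j) ^ 2)

/-- The derivative of the scalar weight. -/
lemma gw_hasDerivAt (σ : ℝ) :
    HasDerivAt (fun s : ℝ => Real.exp (-(ghost s)))
      (-(Real.exp (-(ghost σ)) / (1 + σ ^ 2))) σ := by
  have h := ((Real.hasDerivAt_arctan σ).neg).exp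
  unfold ghost
  convert! h using 1
  simp only [Pi.neg_apply]
  ring

lemma gw_continuous : Continuous (fun s : ℝ => Real.exp (-(ghost s))) :=
  continuous_iff_continuousAt.2 fun σ => (gw_hasDerivAt σ).continuousAt

lemma gw_lipschitz : ∃ C, LipschitzWith C (fun s : ℝ => Real.exp (-(ghost s))) := by
  refine ⟨(Real.exp (Real.pi / 2)).toNNReal, ?_⟩
  apply lipschitzWith_of_nnnorm_deriv_le
  · exact fun σ => (gw_hasDerivAt σ).differentiableAt
  · intro σ
    rw [(gw_hasDerivAt σ).deriv, ← NNReal.coe_le_coe, coe_nnnorm, norm_neg, Real.norm_eq_abs,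
      abs_of_nonneg (by positivity), Real.coe_toNNReal _ (Real.exp_pos _).le]
    have h1 : Real.exp (-(ghost σ)) ≤ Real.exp (Real.pi / 2) := by
      apply Real.exp_le_exp.2
      have := Real.neg_pi_div_two_lt_arctan σ
      unfold ghost
      linarith
    exact (div_le_self (Real.exp_pos _).le (by nlinarith [sq_nonneg σ])).trans h1

/-- The spatial weight. -/
def gW (t : ℝ) (x : E3) : ℝ := Real.exp (-(ghost (t - ‖x‖)))

lemma gW_lipschitz (t : ℝ) : ∃ C, LipschitzWith C (gW t) := by
  obtain ⟨C, hC⟩ := gw_lipschitz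
  have h : LipschitzWith 1 (fun x : E3 => t - ‖x‖) := by
    refine LipschitzWith.of_dist_le_mul fun x y => ?_
    rw [Real.dist_eq, dist_eq_norm]
    have : t - ‖x‖ - (t - ‖y‖) = -(‖x‖ - ‖y‖) := by ring
    rw [this, abs_neg]
    simpa using abs_norm_sub_norm_le x y
  exact ⟨_, hC.comp h⟩

lemma gW_lineDeriv (t : ℝ) (x : E3) (hx : x ≠ 0) (j : Fin 3) :
    lineDeriv ℝ (gW t) x (EuclideanSpace.single j 1)
      = (Real.exp (-(ghost (t - ‖x‖))) / (1 + (t - ‖x‖) ^ 2)) * (x j / ‖x‖) := by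
  have hn : ‖x‖ ≠ 0 := norm_ne_zero_iff.2 hx
  have h1 := (hasStrictFDerivAt_norm_sq x).hasFDerivAt.sqrt (pow_ne_zero 2 hn)
  simp only [Real.sqrt_sq (norm_nonneg _)] at h1
  have h2 := (gw_hasDerivAt (t - ‖x‖)).comp_hasFDerivAt x (h1.const_sub t)
  have h3 := (h2.hasLineDerivAt (EuclideanSpace.single j 1)).lineDeriv
  change lineDeriv ℝ (gW t) x (EuclideanSpace.single j 1) = _ at h3
  rw [h3]
  simp
  field_simp
  left
  simp [EuclideanSpace.inner_single_right]

lemma compact_of_supp {u : E3 → ℝ} {R : ℝ} (hs : ∀ x, R ≤ ‖x‖ → u x = 0) :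
    HasCompactSupport u := by
  refine HasCompactSupport.intro (isCompact_closedBall (0 : E3) R) fun x hx => hs x ?_
  simp only [Metric.mem_closedBall, dist_zero_right, not_le] at hx
  exact hx.le

lemma integrable_of_supp {u : E3 → ℝ} {R : ℝ} (hu : Continuous u)
    (hs : ∀ x, R ≤ ‖x‖ → u x = 0) : Integrable u :=
  hu.integrable_of_hasCompactSupport (compact_of_supp hs)

lemma gW_continuous (t : ℝ) : Continuous (gW t) :=
  gw_continuous.comp (continuous_const.sub continuous_norm)

lemma gW_ibp (t : ℝ) {u : E3 → ℝ} {R : ℝ} (hu : ContDiff ℝ 1 u)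
    (hs : ∀ x, R ≤ ‖x‖ → u x = 0) (j : Fin 3) :
    Integrable (fun x => gW t x * pd j u x
        + lineDeriv ℝ (gW t) x (EuclideanSpace.single j 1) * u x) ∧
    Integrable (fun x => lineDeriv ℝ (gW t) x (EuclideanSpace.single j 1) * u x) ∧
    ∫ x, (gW t x * pd j u x
        + lineDeriv ℝ (gW t) x (EuclideanSpace.single j 1) * u x) = 0 := by
  obtain ⟨C, hC⟩ := gW_lipschitz t
  have hcs := compact_of_supp hs
  obtain ⟨D, hD⟩ := ContDiff.lipschitzWith_of_hasCompactSupport hcs hu (by simp)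
  have i1 : Integrable (fun x => lineDeriv ℝ (gW t) x (EuclideanSpace.single j 1) * u x) :=
    (hu.continuous.integrable_of_hasCompactSupport hcs).mul_of_top_right
      (hC.memLp_lineDeriv _)
  have hc : Continuous (fun x => pd j u x) :=
    (hu.continuous_fderiv (by simp)).clm_apply continuous_const
  have i2 : Integrable (fun x => gW t x * pd j u x) := by
    refine ((gW_continuous t).mul hc).integrable_of_hasCompactSupport ?_
    exact HasCompactSupport.mul_left (hcs.fderiv_apply ℝ _)
  refine ⟨i2.add i1, i1, ?_⟩
  rw [integral_add i2 i1, hC.integral_lineDeriv_mul_eq hD hcs]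
  rw [← integral_add i2]
  · rw [← integral_zero E3 ℝ]
    congr 1
    ext x
    rw [((hu.differentiable (by simp)) x).lineDeriv_eq_fderiv, map_neg]
    unfold pd
    ring
  · refine i2.neg.congr (Filter.Eventually.of_forall fun x => ?_)
    simp only [Pi.neg_apply]
    rw [((hu.differentiable (by simp)) x).lineDeriv_eq_fderiv, map_neg]
    unfold pd
    ring

/-- Differentiation of a weighted integral under the integral sign. -/
lemma gw_energy_deriv (h : ℝ × E3 → ℝ) (hh : ContDiff ℝ 1 h) (R : ℝ)
    (hs : ∀ t x, R ≤ ‖x‖ → h (t, x) = 0) (t : ℝ) :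
    Integrable (fun x : E3 => -(gW t x / (1 + (t - ‖x‖) ^ 2)) * h (t, x)
        + gW t x * deriv (fun s => h (s, x)) t) ∧
    HasDerivAt (fun s => ∫ x : E3, gW s x * h (s, x))
      (∫ x : E3, (-(gW t x / (1 + (t - ‖x‖) ^ 2)) * h (t, x)
        + gW t x * deriv (fun s => h (s, x)) t)) t := by
  have hd : ∀ s x, HasDerivAt (fun s => h (s, x)) (fderiv ℝ h (s, x) (1, 0)) s := by
    intro s x
    have h1 := ((hh.differentiable (by simp)) (s, x)).hasFDerivAt
    exact h1.comp_hasDerivAt s ((hasDerivAt_id s).prodMk (hasDerivAt_const s x))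
  have hW : Continuous (fun z : ℝ × E3 => gW z.1 z.2) :=
    gw_continuous.comp (continuous_fst.sub continuous_snd.norm)
  let F' : ℝ → E3 → ℝ := fun s x => -(gW s x / (1 + (s - ‖x‖) ^ 2)) * h (s, x)
        + gW s x * deriv (fun s => h (s, x)) s
  have hF'c : Continuous (fun z : ℝ × E3 => F' z.1 z.2) := by
    have e : (fun z : ℝ × E3 => F' z.1 z.2) = fun z : ℝ × E3 =>
        -(gW z.1 z.2 / (1 + (z.1 - ‖z.2‖) ^ 2)) * h z + gW z.1 z.2 * fderiv ℝ h z (1, 0) := by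
      ext z
      simp only [F', (hd z.1 z.2).deriv]
    rw [e]
    have c1 : Continuous (fun z => fderiv ℝ h z (1, 0)) :=
      (hh.continuous_fderiv (by simp)).clm_apply continuous_const
    have c2 : Continuous (fun z : ℝ × E3 => gW z.1 z.2 / (1 + (z.1 - ‖z.2‖) ^ 2)) := by
      refine hW.div (by fun_prop) fun z => ?_
      positivity
    exact (c2.neg.mul hh.continuous).add (hW.mul c1)
  have hF's : ∀ s x, R ≤ ‖x‖ → F' s x = 0 := by
    intro s x hx
    have : (fun s => h (s, x)) = fun _ => 0 := by
      ext s; exact hs s x hx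
    simp only [F', this, hs s x hx]
    simp
  obtain ⟨M, hM⟩ := ((isCompact_Icc (a := t - 1) (b := t + 1)).prod
    (isCompact_closedBall (0 : E3) R)).exists_bound_of_continuousOn hF'c.continuousOn
  have key := hasDerivAt_integral_of_dominated_loc_of_deriv_le (μ := (volume : Measure E3))
    (F := fun s x => gW s x * h (s, x)) (F' := F') (x₀ := t) (s := Set.Icc (t - 1) (t + 1))
    (bound := (Metric.closedBall (0 : E3) R).indicator fun _ => M)
    (Icc_mem_nhds (by linarith) (by linarith))
    (Filter.Eventually.of_forall fun s =>
      ((gW_continuous s).mul (hh.continuous.comp (by fun_prop))).aestronglyMeasurable)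
    (integrable_of_supp (R := R) ((gW_continuous t).mul (hh.continuous.comp (by fun_prop)))
      (fun x hx => by simp [hs t x hx]))
    (hF'c.comp (by fun_prop : Continuous fun x : E3 => (t, x))).aestronglyMeasurable
    (Filter.Eventually.of_forall fun x s hsx => by
      by_cases hx : x ∈ Metric.closedBall (0 : E3) R
      · rw [Set.indicator_of_mem hx]
        exact hM (s, x) ⟨hsx, hx⟩
      · rw [Set.indicator_of_notMem hx]
        simp only [Metric.mem_closedBall, dist_zero_right, not_le] at hx
        rw [hF's s x hx.le, norm_zero])
    ((integrable_indicator_iff measurableSet_closedBall).2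
      (integrableOn_const (measure_closedBall_lt_top.ne)))
    (Filter.Eventually.of_forall fun x s _ => by
      have a := (gw_hasDerivAt (s - ‖x‖)).comp s ((hasDerivAt_id s).sub_const ‖x‖)
      have b := a.mul (hd s x)
      rw [mul_one] at b
      have e : deriv (fun s => h (s, x)) s = fderiv ℝ h (s, x) (1, 0) := (hd s x).deriv
      simp only [F', e]
      exact b)
  exact key

lemma gw_integral_lin {S A C D : E3 → ℝ} (iS : Integrable S) (iA : Integrable A)
    (iC : Integrable C) (iD : Integrable D) :
    ∫ x, (2 * S x - A x + 2 * C x - 2 * D x)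
      = 2 * (∫ x, S x) - (∫ x, A x) + 2 * (∫ x, C x) - 2 * ∫ x, D x := by
  have i1 : Integrable (fun x => 2 * S x) := iS.const_mul 2
  have i2 : Integrable (fun x => 2 * S x - A x) := i1.sub iA
  have i3 : Integrable (fun x => 2 * C x) := iC.const_mul 2
  have i4 : Integrable (fun x => 2 * S x - A x + 2 * C x) := i2.add i3
  rw [integral_sub i4 (iD.const_mul 2), integral_add i2 i3, integral_sub i1 iA,
    integral_const_mul, integral_const_mul, integral_const_mul]

/-- the ghost-weight energy identity. For smooth `v, G, p, f, g` on
`[0,T] × ℝ³`, compactly supported in space uniformly in time, satisfying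
`∂_t v_i − ∂_j G_{ij} = −∂_i p + f_i` and `∂_t G_{ij} − ∂_j v_i = g_{ij}`,
the ghost-weighted energy `ℰ` is differentiable on `(0,T)` and
`ℰ′(t) + ∫ e^{−q}/(1+(t−r)²) (|v + Gω|² + ‖G − (Gω)ωᵀ‖_F²) dx
  = 2∫ e^{−q} (f·v + g_{ij}G_{ij}) dx − 2∫ e^{−q} v·∇p dx`. -/
theorem ghost_weight_energy_identity
    (T : ℝ) (hT : 0 < T)
    (v f : ℝ → E3 → Fin 3 → ℝ)
    (G g : ℝ → E3 → Fin 3 → Fin 3 → ℝ)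
    (p : ℝ → E3 → ℝ)
    (hv : ContDiff ℝ (⊤ : ℕ∞) (fun z : ℝ × E3 => v z.1 z.2))
    (hG : ContDiff ℝ (⊤ : ℕ∞) (fun z : ℝ × E3 => G z.1 z.2))
    (hp : ContDiff ℝ (⊤ : ℕ∞) (fun z : ℝ × E3 => p z.1 z.2))
    (hf : ContDiff ℝ (⊤ : ℕ∞) (fun z : ℝ × E3 => f z.1 z.2))
    (hg : ContDiff ℝ (⊤ : ℕ∞) (fun z : ℝ × E3 => g z.1 z.2))
    (R : ℝ)
    (hsupp : ∀ t x, R ≤ ‖x‖ →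
      v t x = 0 ∧ G t x = 0 ∧ p t x = 0 ∧ f t x = 0 ∧ g t x = 0)
    (heq1 : ∀ t ∈ Set.Icc (0 : ℝ) T, ∀ (x : E3) (i : Fin 3),
      deriv (fun s => v s x i) t - ∑ j, pd j (fun y => G t y i j) x
        = -pd i (fun y => p t y) x + f t x i)
    (heq2 : ∀ t ∈ Set.Icc (0 : ℝ) T, ∀ (x : E3) (i j : Fin 3),
      deriv (fun s => G s x i j) t - pd j (fun y => v t y i) x = g t x i j) :
    ∀ t ∈ Set.Ioo (0 : ℝ) T,
      ∃ E' : ℝ,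
        HasDerivAt (ghostEnergy v G) E' t ∧
        E' + (∫ x : E3,
            (Real.exp (-(ghost (t - ‖x‖))) / (1 + (t - ‖x‖) ^ 2)) *
              ((∑ i, (v t x i + ∑ j, G t x i j * (x j / ‖x‖)) ^ 2)
                + ∑ i, ∑ j,
                    (G t x i j - (∑ l, G t x i l * (x l / ‖x‖)) * (x j / ‖x‖)) ^ 2))
          = 2 * (∫ x : E3, Real.exp (-(ghost (t - ‖x‖))) *
                ((∑ i, f t x i * v t x i) + ∑ i, ∑ j, g t x i j * G t x i j))
            - 2 * ∫ x : E3, Real.exp (-(ghost (t - ‖x‖))) *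
                ∑ i, v t x i * pd i (fun y => p t y) x := by
  intro t ht
  have ht' : t ∈ Set.Icc (0 : ℝ) T := ⟨ht.1.le, ht.2.le⟩
  have hvi : ∀ i, ContDiff ℝ 1 (fun z : ℝ × E3 => v z.1 z.2 i) := fun i =>
    ((contDiff_pi.1 hv) i).of_le (by exact_mod_cast le_top)
  have hGij : ∀ i j, ContDiff ℝ 1 (fun z : ℝ × E3 => G z.1 z.2 i j) := fun i j =>
    (contDiff_pi.1 ((contDiff_pi.1 hG) i) j).of_le (by exact_mod_cast le_top)
  have hp1 : ContDiff ℝ 1 (fun z : ℝ × E3 => p z.1 z.2) := hp.of_le (by exact_mod_cast le_top)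
  have hfi : ∀ i, Continuous (fun x : E3 => f t x i) := fun i =>
    ((contDiff_pi.1 hf) i).continuous.comp (by fun_prop : Continuous fun x : E3 => (t, x))
  have hgij : ∀ i j, Continuous (fun x : E3 => g t x i j) := fun i j =>
    (contDiff_pi.1 ((contDiff_pi.1 hg) i) j).continuous.comp
      (by fun_prop : Continuous fun x : E3 => (t, x))
  have hemb : ContDiff ℝ 1 (fun x : E3 => (t, x)) := contDiff_const.prodMk contDiff_id
  have hvt : ∀ i, ContDiff ℝ 1 (fun x : E3 => v t x i) := fun i => (hvi i).comp hemb
  have hGt : ∀ i j, ContDiff ℝ 1 (fun x : E3 => G t x i j) := fun i j => (hGij i j).comp hemb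
  have hpt : ContDiff ℝ 1 (fun x : E3 => p t x) := hp1.comp hemb
  have hdp : ∀ i, Continuous (fun x : E3 => pd i (fun y => p t y) x) := fun i =>
    (hpt.continuous_fderiv (by simp)).clm_apply continuous_const
  let h : ℝ × E3 → ℝ := fun z => (∑ i, (v z.1 z.2 i) ^ 2) + ∑ i, ∑ j, (G z.1 z.2 i j) ^ 2
  have hh : ContDiff ℝ 1 h :=
    (ContDiff.sum fun i _ => (hvi i).pow 2).add
      (ContDiff.sum fun i _ => ContDiff.sum fun j _ => (hGij i j).pow 2)
  have hhs : ∀ s x, R ≤ ‖x‖ → h (s, x) = 0 := by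
    intro s x hx
    obtain ⟨h1, h2, -⟩ := hsupp s x hx
    simp [h, h1, h2]
  obtain ⟨iA, hA⟩ := gw_energy_deriv h hh R hhs t
  refine ⟨_, hA, ?_⟩
  -- the source terms
  have iC : Integrable (fun x : E3 => Real.exp (-(ghost (t - ‖x‖))) *
      ((∑ i, f t x i * v t x i) + ∑ i, ∑ j, g t x i j * G t x i j)) := by
    refine integrable_of_supp (R := R) ((gW_continuous t).mul ?_) fun x hx => ?_
    · exact (continuous_finsetSum _ fun i _ => (hfi i).mul (hvt i).continuous).add
        (continuous_finsetSum _ fun i _ => continuous_finsetSum _ fun j _ =>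
          (hgij i j).mul (hGt i j).continuous)
    · obtain ⟨h1, h2, -⟩ := hsupp t x hx
      simp [h1, h2]
  have iD : Integrable (fun x : E3 => Real.exp (-(ghost (t - ‖x‖))) *
      ∑ i, v t x i * pd i (fun y => p t y) x) := by
    refine integrable_of_supp (R := R) ((gW_continuous t).mul ?_) fun x hx => ?_
    · exact continuous_finsetSum _ fun i _ => (hvt i).continuous.mul (hdp i)
    · obtain ⟨h1, h2, -⟩ := hsupp t x hx
      simp [h1]
  -- integration by parts
  have hibp := fun i j => gW_ibp t (R := R) ((hvt i).mul (hGt i j))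
    (fun x hx => by
      obtain ⟨h1, h2, -⟩ := hsupp t x hx
      simp [h1]) j
  let S : E3 → ℝ := fun x => ∑ i, ∑ j, (gW t x * pd j (fun y => v t y i * G t y i j) x
        + lineDeriv ℝ (gW t) x (EuclideanSpace.single j 1) * (v t x i * G t x i j))
  have iS : Integrable S :=
    integrable_finsetSum _ fun i _ => integrable_finsetSum _ fun j _ => (hibp i j).1
  have hS : ∫ x, S x = 0 := by
    simp only [S]
    rw [integral_finsetSum _ fun i _ => integrable_finsetSum _ fun j _ => (hibp i j).1]
    refine Finset.sum_eq_zero fun i _ => ?_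
    rw [integral_finsetSum _ fun j _ => (hibp i j).1]
    exact Finset.sum_eq_zero fun j _ => (hibp i j).2.2
  -- time derivative of the energy density
  have hdt : ∀ x, deriv (fun s => h (s, x)) t =
      (∑ i, 2 * (v t x i * deriv (fun s => v s x i) t))
        + ∑ i, ∑ j, 2 * (G t x i j * deriv (fun s => G s x i j) t) := by
    intro x
    have hemb2 : ContDiff ℝ 1 (fun s : ℝ => (s, x)) := contDiff_id.prodMk contDiff_const
    have a : ∀ i, HasDerivAt (fun s => v s x i) (deriv (fun s => v s x i) t) t := fun i =>
      ((((hvi i).comp hemb2).differentiable (by simp)) t).hasDerivAt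
    have b : ∀ i j, HasDerivAt (fun s => G s x i j) (deriv (fun s => G s x i j) t) t :=
      fun i j => ((((hGij i j).comp hemb2).differentiable (by simp)) t).hasDerivAt
    have c := (HasDerivAt.fun_sum (u := Finset.univ) fun i _ => (a i).fun_pow 2).fun_add
      (HasDerivAt.fun_sum (u := Finset.univ) fun i _ =>
        HasDerivAt.fun_sum (u := Finset.univ) fun j _ => (b i j).fun_pow 2)
    refine c.deriv.trans ?_
    congr 1
    · exact Finset.sum_congr rfl fun i _ => by norm_num; ring
    · exact Finset.sum_congr rfl fun i _ => Finset.sum_congr rfl fun j _ => by norm_num; ring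
  have hprod : ∀ i j x, pd j (fun y => v t y i * G t y i j) x
      = v t x i * pd j (fun y => G t y i j) x + G t x i j * pd j (fun y => v t y i) x := by
    intro i j x
    unfold pd
    rw [fderiv_fun_mul ((hvt i).differentiable (by simp) x) ((hGt i j).differentiable (by simp) x)]
    simp
  -- the pointwise identity
  have hB : (fun x : E3 => (Real.exp (-(ghost (t - ‖x‖))) / (1 + (t - ‖x‖) ^ 2)) *
              ((∑ i, (v t x i + ∑ j, G t x i j * (x j / ‖x‖)) ^ 2)
                + ∑ i, ∑ j,
                    (G t x i j - (∑ l, G t x i l * (x l / ‖x‖)) * (x j / ‖x‖)) ^ 2))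
      =ᵐ[volume] fun x => 2 * S x
        - (-(gW t x / (1 + (t - ‖x‖) ^ 2)) * h (t, x) + gW t x * deriv (fun s => h (s, x)) t)
        + 2 * (Real.exp (-(ghost (t - ‖x‖))) *
      ((∑ i, f t x i * v t x i) + ∑ i, ∑ j, g t x i j * G t x i j))
        - 2 * (Real.exp (-(ghost (t - ‖x‖))) * ∑ i, v t x i * pd i (fun y => p t y) x) := by
    have hne : ∀ᵐ x : E3, x ≠ 0 := Measure.ae_ne volume 0
    filter_upwards [hne] with x hx
    have hn : ‖x‖ ≠ 0 := norm_ne_zero_iff.2 hx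
    have hω : (x 0 / ‖x‖) ^ 2 + (x 1 / ‖x‖) ^ 2 + (x 2 / ‖x‖) ^ 2 = 1 := by
      have := EuclideanSpace.norm_sq_eq x
      simp only [Fin.sum_univ_three, Real.norm_eq_abs, sq_abs] at this
      field_simp
      linarith
    have e1 : ∀ i, deriv (fun s => v s x i) t = ∑ j, pd j (fun y => G t y i j) x
        - pd i (fun y => p t y) x + f t x i := fun i => by linarith [heq1 t ht' x i]
    have e2 : ∀ i j, deriv (fun s => G s x i j) t = pd j (fun y => v t y i) x + g t x i j :=
      fun i j => by linarith [heq2 t ht' x i j]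
    rw [hdt]
    simp only [S, h, hprod, gW_lineDeriv t x hx, e1, e2]
    have hWdef : gW t x = Real.exp (-(ghost (t - ‖x‖))) := rfl
    rw [hWdef]
    generalize Real.exp (-(ghost (t - ‖x‖))) / (1 + (t - ‖x‖) ^ 2) = K
    generalize Real.exp (-(ghost (t - ‖x‖))) = W
    generalize hw : (fun j => x j / ‖x‖) = w
    have hw' : ∀ j, x j / ‖x‖ = w j := fun j => congrFun hw j
    simp only [hw'] at hω ⊢
    have hrow : ∀ i, ∑ j, (G t x i j - (∑ l, G t x i l * w l) * w j) ^ 2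
        = ∑ j, G t x i j ^ 2 - (∑ l, G t x i l * w l) ^ 2 := by
      intro i
      simp only [Fin.sum_univ_three]
      linear_combination (G t x i 0 * w 0 + G t x i 1 * w 1 + G t x i 2 * w 2) ^ 2 * hω
    simp only [hrow]
    simp only [Fin.sum_univ_three]
    ring
  rw [integral_congr_ae hB, gw_integral_lin iS iA iC iD, hS]
  ring

end
end

section
/- There exists a constant C > 0, independent of t and f, such that for every t ≥ 0 and every f ∈ C_c^∞(ℝ³): ⟨t⟩ · sup_{|x| ≤ ⟨t⟩/16} |f(x)| ≤ C ( ‖f‖_{L²(|x| ≤ ⟨t⟩/8)} + ‖⟨t−r⟩ ∇f‖_{L²(|x| ≤ ⟨t⟩/8)} + ‖⟨t−r⟩ ∇²f‖_{L²(|x| ≤ ⟨t⟩/8)} ), where r = |x| and ∇²f is the Hessian of f. -/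
open MeasureTheory

noncomputable section

/-- The Japanese bracket `⟨s⟩ = √(1+s²)`. -/
noncomputable def jb (s : ℝ) : ℝ := Real.sqrt (1 + s ^ 2)

set_option maxHeartbeats 400000 in
/-- Pointwise bound on the kernel. -/
lemma aux_pointwise (T r a b c : ℝ) (hT : 1 ≤ T) (hr0 : 0 ≤ r) (hr : r ≤ T / 16) :
    (T * ((-2 * r / (T/16)^2) * a
      + ((1 - r^2/(T/16)^2)
          - ((1 - r^2) / (1 + r^2)^2 * (1 - r^2/(T/16)^2) + r/(1+r^2) * (-2 * r / (T/16)^2))) * b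
      - r/(1+r^2) * (1 - r^2/(T/16)^2) * c)) ^ 2
    ≤ 1572864 * (1 / (1 + r^2)) * (r^2 * (a^2 + T^2 * b^2 + T^2 * c^2)) := by
  set R := T / 16 with hR
  have hTR : T = 16 * R := by rw [hR]; ring
  have hRpos : 0 < R := by rw [hR]; positivity
  have hR16 : 1 ≤ 16 * R := by linarith
  set w := 1 / (1 + r^2) with hw
  have hwpos : 0 < w := by positivity
  have hw1 : w * (1 + r^2) = 1 := by rw [hw]; field_simp
  have hwle : w ≤ 1 := by nlinarith
  have hrw : r^2 * w ≤ 1 := by nlinarith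
  set u := 1 / R with hu
  have hupos : 0 < u := by positivity
  have huR : u * R = 1 := by rw [hu]; field_simp
  have hu16 : u ≤ 16 := by nlinarith
  set s := r * u with hs
  have hs0 : 0 ≤ s := by positivity
  have hs1 : s ≤ 1 := by nlinarith
  set χ := 1 - s^2 with hχ
  have hχ0 : 0 ≤ χ := by nlinarith
  have hχ1 : χ ≤ 1 := by nlinarith
  set A := T * (-2 * (s * u)) with hA
  set k := (χ * (r^2 * w) * (1 + 2 * w) + 2 * s^2 * w) with hk
  set m := r * w * χ with hm
  have e : T * ((-2 * r / R^2) * a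
      + ((1 - r^2/R^2)
          - ((1 - r^2) / (1 + r^2)^2 * (1 - r^2/R^2) + r/(1+r^2) * (-2 * r / R^2))) * b
      - r/(1+r^2) * (1 - r^2/R^2) * c) = A * a + k * (T * b) - m * (T * c) := by
    rw [hA, hk, hm, hχ, hs, hu, hw]
    field_simp
    ring
  rw [e]
  have h1 : A^2 ≤ 524288 * w * r^2 := by
    have : A = - 32 * (r * u) := by
      rw [hA, hTR, hs]
      linear_combination (-32 * r * u) * huR
    rw [this]
    have : u^2 ≤ 512 * w := by
      have h2 : (1 + r^2) * u^2 ≤ 512 := by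
        have i1 : u^2 ≤ 16^2 := pow_le_pow_left₀ hupos.le hu16 2
        have i2 : s^2 ≤ 1^2 := pow_le_pow_left₀ hs0 hs1 2
        have i3 : s^2 = r^2 * u^2 := by rw [hs]; ring
        linarith
      have : u^2 = w * ((1 + r^2) * u^2) := by linear_combination (-u^2) * hw1
      rw [this]
      have := mul_le_mul_of_nonneg_left h2 hwpos.le
      linarith
    have := mul_le_mul_of_nonneg_left this (sq_nonneg r)
    linarith
  have hrw0 : 0 ≤ r^2 * w := by positivity
  have a6 : (r * w)^2 ≤ w * r^2 := by
    have := mul_le_mul_of_nonneg_left hwle hrw0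
    linarith
  have h2 : k^2 ≤ 524288 * w * r^2 := by
    have a1 : χ * (r^2 * w) * (1 + 2 * w) ≤ 3 * (r^2 * w) := by
      have : χ * (1 + 2 * w) ≤ 3 := by nlinarith
      nlinarith
    have a2 : 2 * s^2 * w ≤ 32 * (r * w) := by
      have : s^2 ≤ 16 * r := by
        have : s ^ 2 = s * r * u := by rw [hs]; ring
        have : s * u ≤ 16 := by nlinarith
        nlinarith
      nlinarith
    have a0 : 0 ≤ k := by positivity
    have a3 : k ≤ 3 * (r^2 * w) + 32 * (r * w) := by rw [hk]; linarith
    have a4 : k^2 ≤ (3 * (r^2 * w) + 32 * (r * w))^2 := by gcongr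
    have a5 : (r^2*w)^2 ≤ w * r^2 := by
      have := mul_le_mul_of_nonneg_left hrw hrw0
      linarith
    have a7 : (3 * (r^2 * w) + 32 * (r * w))^2 ≤ 2 * (9 * (r^2*w)^2 + 1024 * (r*w)^2) := by
      linarith [sq_nonneg (3 * (r^2*w) - 32 * (r*w))]
    linarith
  have h3 : m^2 ≤ 524288 * w * r^2 := by
    have : m^2 ≤ (r*w)^2 := by
      rw [hm, mul_pow]
      have : χ^2 ≤ 1 := pow_le_one₀ hχ0 hχ1
      exact mul_le_of_le_one_right (sq_nonneg _) this
    linarith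
  have h4 : (A * a + k * (T * b) - m * (T * c))^2
      ≤ 3 * (A^2 * a^2 + k^2 * (T*b)^2 + m^2 * (T*c)^2) := by
    linarith [sq_nonneg (A * a - k * (T * b)), sq_nonneg (A * a + m * (T * c)),
      sq_nonneg (k * (T * b) + m * (T * c))]
  have g1 := mul_le_mul_of_nonneg_right h1 (sq_nonneg a)
  have g2 := mul_le_mul_of_nonneg_right h2 (sq_nonneg (T*b))
  have g3 := mul_le_mul_of_nonneg_right h3 (sq_nonneg (T*c))
  calc _ ≤ _ := h4
    _ ≤ _ := by linarith

lemma aux_1d (T : ℝ) (hT : 1 ≤ T) (g g' g'' : ℝ → ℝ) (h1 : ∀ r, HasDerivAt g (g' r) r)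
    (h2 : ∀ r, HasDerivAt g' (g'' r) r) (hc : Continuous g'') :
    (T * g 0)^2 ≤ 3145728 *
      ∫ r in (0:ℝ)..(T/16), r^2 * (g r ^2 + T^2 * g' r ^2 + T^2 * g'' r ^2) := by
  set B := ∫ r in (0:ℝ)..(T/16), r^2 * (g r ^2 + T^2 * g' r ^2 + T^2 * g'' r ^2) with hB
  have hRpos : 0 < T / 16 := by positivity
  have hcg : Continuous g := continuous_iff_continuousAt.2 fun r => (h1 r).continuousAt
  have hcg' : Continuous g' := continuous_iff_continuousAt.2 fun r => (h2 r).continuousAt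
  have hB0 : 0 ≤ B := intervalIntegral.integral_nonneg hRpos.le fun r _ => by positivity
  set H : ℝ → ℝ := fun r => (1 - r^2/(T/16)^2) * g r - r/(1+r^2) * (1 - r^2/(T/16)^2) * g' r
  set H' : ℝ → ℝ := fun r => (-2 * r / (T/16)^2) * g r
      + ((1 - r^2/(T/16)^2)
          - ((1 - r^2) / (1 + r^2)^2 * (1 - r^2/(T/16)^2) + r/(1+r^2) * (-2 * r / (T/16)^2))) * g' r
      - r/(1+r^2) * (1 - r^2/(T/16)^2) * g'' r with hH'
  have hden : ∀ r : ℝ, 1 + r^2 ≠ 0 := fun r => by positivity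
  have hder : ∀ r, HasDerivAt H (H' r) r := by
    intro r
    have d2 : HasDerivAt (fun r : ℝ => r^2) (2 * r) r := by simpa using hasDerivAt_pow 2 r
    have dχ : HasDerivAt (fun r : ℝ => 1 - r^2/(T/16)^2) (-2 * r / (T/16)^2) r := by
      have := (d2.div_const ((T/16)^2)).const_sub 1
      exact this.congr_deriv (by ring)
    have dq : HasDerivAt (fun r : ℝ => r/(1+r^2)) ((1 - r^2) / (1 + r^2)^2) r := by
      have := (hasDerivAt_id r).div (d2.const_add 1) (hden r)
      exact this.congr_deriv (by simp only [id]; ring)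
    have := (dχ.mul (h1 r)).sub ((dq.mul dχ).mul (h2 r))
    exact this.congr_deriv (by simp only [hH', Pi.mul_apply]; ring)
  have hH'c : Continuous H' := by
    simp only [hH']
    have : ∀ r : ℝ, (1 + r^2)^2 ≠ 0 := fun r => by positivity
    fun_prop (disch := assumption)
  have hHint : ∫ r in (0:ℝ)..(T/16), H' r = - g 0 := by
    rw [intervalIntegral.integral_eq_sub_of_hasDerivAt (fun r _ => hder r)
      (hH'c.intervalIntegrable _ _)]
    have : (T/16)^2 ≠ 0 := by positivity
    simp [H, div_self this]
  have key : ∀ ε > 0, T * |g 0| ≤ ε + 1572864 / ε * B / 2 := by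
    intro ε hε
    have e1 : T * |g 0| = |∫ r in (0:ℝ)..(T/16), T * H' r| := by
      rw [intervalIntegral.integral_const_mul, hHint, abs_mul, abs_neg, abs_of_pos (by linarith : (0:ℝ) < T)]
    have hwc : Continuous fun r : ℝ => 1 / (1 + r^2) := by fun_prop (disch := assumption)
    have e2 : |∫ r in (0:ℝ)..(T/16), T * H' r| ≤ ∫ r in (0:ℝ)..(T/16),
        (ε / 2 * (1 / (1 + r^2)) +
          1572864 / (2 * ε) * (r^2 * (g r ^2 + T^2 * g' r ^2 + T^2 * g'' r ^2))) := by
      refine (intervalIntegral.abs_integral_le_integral_abs hRpos.le).trans ?_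
      refine intervalIntegral.integral_mono_on hRpos.le
        ((by fun_prop : Continuous fun r => |T * H' r|).intervalIntegrable _ _)
        (Continuous.intervalIntegrable (by fun_prop) _ _) ?_
      intro r hr
      have := aux_pointwise T r (g r) (g' r) (g'' r) hT hr.1 hr.2
      have hw : 0 < 1 / (1 + r^2) := by positivity
      have hS : 0 ≤ r^2 * (g r ^2 + T^2 * g' r ^2 + T^2 * g'' r ^2) := by positivity
      simp only [hH']
      generalize 1 / (1 + r^2) = w at *
      generalize r^2 * (g r ^2 + T^2 * g' r ^2 + T^2 * g'' r ^2) = S at *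
      apply abs_le_of_sq_le_sq _ (by positivity)
      refine this.trans ?_
      have h : 1572864 * w * S = 4 * (ε / 2 * w) * (1572864 / (2 * ε) * S) := by
        field_simp; norm_num
      rw [h]
      nlinarith [sq_nonneg (ε / 2 * w - 1572864 / (2 * ε) * S)]
    rw [intervalIntegral.integral_add (Continuous.intervalIntegrable (by fun_prop) _ _)
        (Continuous.intervalIntegrable (by fun_prop) _ _),
      intervalIntegral.integral_const_mul (ε / 2),
      intervalIntegral.integral_const_mul (1572864 / (2 * ε)), ← hB,
      integral_one_div_one_add_sq] at e2
    rw [e1]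
    refine e2.trans ?_
    have hat : Real.arctan (T/16) - Real.arctan 0 ≤ 2 := by
      rw [Real.arctan_zero]
      linarith [Real.arctan_lt_pi_div_two (T/16), Real.pi_lt_four]
    have : 1572864 / (2 * ε) * B = 1572864 / ε * B / 2 := by field_simp
    rw [this]
    nlinarith
  rcases eq_or_ne (g 0) 0 with h0 | h0
  · rw [h0]; simp; positivity
  · have hp : 0 < T * |g 0| := by have := abs_pos.2 h0; positivity
    have := key (T * |g 0| / 2) (by positivity)
    have hsq : (T * g 0)^2 = (T * |g 0|)^2 := by rw [mul_pow, mul_pow, sq_abs]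
    rw [hsq]
    generalize T * |g 0| = z at *
    have e : 1572864 / (z / 2) * B / 2 = 1572864 * B / z := by field_simp
    rw [e] at this
    have h3 : z / 2 ≤ 1572864 * B / z := by linarith
    rw [le_div_iff₀ hp] at h3
    nlinarith

lemma aux_polar (F : E3 → ENNReal) (hF : Measurable F) :
    ∫⁻ x, F x = ∫⁻ ω : Metric.sphere (0:E3) 1, (∫⁻ r in Set.Ioi (0:ℝ),
      ENNReal.ofReal (r^2) * F (r • (ω:E3))) ∂(volume : Measure E3).toSphere := by
  have hd : Module.finrank ℝ E3 - 1 = 2 := by simp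
  have mp := (volume : Measure E3).measurePreserving_homeomorphUnitSphereProd
  rw [hd] at mp
  have hm2 : Measurable fun p : Metric.sphere (0:E3) 1 × Set.Ioi (0:ℝ) =>
      F ((p.2:ℝ) • (p.1:E3)) := by fun_prop
  calc ∫⁻ x, F x = ∫⁻ x in ({0}ᶜ : Set E3), F x := by rw [restrict_compl_singleton]
    _ = ∫⁻ x : ({(0)}ᶜ : Set E3), F x.1 ∂((volume : Measure E3).comap (↑)) := by
        rw [← lintegral_subtype_comap (measurableSet_singleton _).compl]
    _ = ∫⁻ p : Metric.sphere (0:E3) 1 × Set.Ioi (0:ℝ), F ((p.2:ℝ) • (p.1:E3))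
          ∂((volume : Measure E3).toSphere.prod (.volumeIoiPow 2)) := by
        rw [← mp.lintegral_comp hm2]
        refine lintegral_congr fun x => ?_
        congr 1
        have : (x:E3) ≠ 0 := x.2
        simp [smul_smul, this]
    _ = ∫⁻ ω : Metric.sphere (0:E3) 1, (∫⁻ r : Set.Ioi (0:ℝ), F ((r:ℝ) • (ω:E3))
          ∂(Measure.volumeIoiPow 2)) ∂(volume : Measure E3).toSphere := by
        rw [lintegral_prod _ hm2.aemeasurable]
    _ = _ := by
        refine lintegral_congr fun ω => ?_
        rw [Measure.volumeIoiPow, lintegral_withDensity_eq_lintegral_mul _ (by fun_prop)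
          (by fun_prop)]
        simp only [Pi.mul_apply]
        rw [← lintegral_subtype_comap measurableSet_Ioi
          (f := fun r : ℝ => ENNReal.ofReal (r^2) * F (r • (ω:E3)))]

lemma aux_polar_bound (G : E3 → ℝ) (hG : Continuous G) (hG0 : ∀ x, 0 ≤ G x) (K R : ℝ)
    (hR : 0 < R)
    (h : ∀ ω : E3, ‖ω‖ = 1 → K ≤ ∫ r in (0:ℝ)..R, r^2 * G (r • ω)) :
    K * (volume : Measure E3).toSphere.real Set.univ ≤ ∫ x in Metric.closedBall 0 R, G x := by
  have hIn : IntegrableOn G (Metric.closedBall (0:E3) R) :=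
    hG.continuousOn.integrableOn_compact (isCompact_closedBall _ _)
  have hI0 : 0 ≤ ∫ x in Metric.closedBall (0:E3) R, G x := integral_nonneg fun x => hG0 x
  have hL : ENNReal.ofReal K * (volume : Measure E3).toSphere Set.univ
      ≤ ENNReal.ofReal (∫ x in Metric.closedBall 0 R, G x) := by
    rw [ofReal_integral_eq_lintegral_ofReal hIn (.of_forall hG0),
      ← lintegral_indicator Metric.isClosed_closedBall.measurableSet,
      aux_polar _ (hG.measurable.ennreal_ofReal.indicator
        Metric.isClosed_closedBall.measurableSet), ← lintegral_const]
    refine lintegral_mono fun ω => ?_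
    have hω : ‖(ω:E3)‖ = 1 := by simp
    refine (ENNReal.ofReal_le_ofReal (h ω hω)).trans ?_
    have hcont : Continuous fun r : ℝ => r^2 * G (r • (ω:E3)) := by fun_prop
    rw [intervalIntegral.integral_of_le hR.le, ofReal_integral_eq_lintegral_ofReal
      ((hcont.intervalIntegrable 0 R).1)
      (.of_forall fun r => mul_nonneg (sq_nonneg r) (hG0 _))]
    calc _ ≤ ∫⁻ r in Set.Ioc 0 R, ENNReal.ofReal (r^2) *
          (Metric.closedBall (0:E3) R).indicator (fun x => ENNReal.ofReal (G x)) (r • (ω:E3)) := by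
          refine setLIntegral_mono' measurableSet_Ioc fun r hr => ?_
          rw [Set.indicator_of_mem, ENNReal.ofReal_mul (sq_nonneg r)]
          simp [norm_smul, abs_of_pos hr.1, hr.2]
      _ ≤ _ := lintegral_mono_set Set.Ioc_subset_Ioi_self
  rcases le_or_gt K 0 with hK | hK
  · exact (mul_nonpos_of_nonpos_of_nonneg hK measureReal_nonneg).trans hI0
  · have := ENNReal.toReal_mono ENNReal.ofReal_ne_top hL
    rwa [ENNReal.toReal_mul, ENNReal.toReal_ofReal hK.le, ENNReal.toReal_ofReal hI0] at this

lemma pd_contDiff (j : Fin 3) (u : E3 → ℝ) (hu : ContDiff ℝ (⊤ : ℕ∞) u) :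
    ContDiff ℝ (⊤ : ℕ∞) (pd j u) := by
  unfold pd
  exact (hu.fderiv_right (m := (⊤ : ℕ∞)) (by simp)).clm_apply contDiff_const

lemma aux_line (u : E3 → ℝ) (hu : ContDiff ℝ (⊤ : ℕ∞) u) (x ω : E3) (r : ℝ) :
    HasDerivAt (fun r : ℝ => u (x + r • ω)) (∑ i, ω i * pd i u (x + r • ω)) r := by
  have hd : HasFDerivAt u (fderiv ℝ u (x + r • ω)) (x + r • ω) :=
    (hu.differentiable (by simp) _).hasFDerivAt
  have hl : HasDerivAt (fun r : ℝ => x + r • ω) ω r := by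
    simpa using ((hasDerivAt_id r).smul_const ω).const_add x
  have := hd.comp_hasDerivAt r hl
  refine this.congr_deriv ?_
  have hω : ω = ∑ i, ω i • EuclideanSpace.single i (1:ℝ) := by
    have := (EuclideanSpace.basisFun (Fin 3) ℝ).sum_repr ω
    simpa using this.symm
  unfold pd
  generalize fderiv ℝ u (x + r • ω) = L
  conv_lhs => rw [hω]
  rw [map_sum]
  simp only [map_smul, smul_eq_mul]

lemma aux_cs (ω : E3) (hω : ‖ω‖ = 1) (a : Fin 3 → ℝ) :
    (∑ i, ω i * a i)^2 ≤ ∑ i, a i ^ 2 := by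
  have h := Finset.sum_mul_sq_le_sq_mul_sq Finset.univ (fun i => ω i) a
  have h1 : ∑ i, ω i ^ 2 = 1 := by
    rw [← EuclideanSpace.real_norm_sq_eq, hω, one_pow]
  simpa [h1] using h

lemma aux_ray (T : ℝ) (hT : 1 ≤ T) (f : E3 → ℝ) (hf : ContDiff ℝ (⊤ : ℕ∞) f) (x ω : E3)
    (hω : ‖ω‖ = 1) :
    (T * f x)^2 / 3145728 ≤ ∫ r in (0:ℝ)..(T/16), r^2 * (f (x + r • ω) ^2
      + T^2 * ∑ i, pd i f (x + r • ω) ^2 + T^2 * ∑ i, ∑ j, pd i (pd j f) (x + r • ω) ^2) := by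
  have hp := fun j => pd_contDiff j f hf
  have hpp := fun i j => pd_contDiff i (pd j f) (hp j)
  have hc0 := hf.continuous
  have hc1 := fun j => (hp j).continuous
  have hc2 := fun i j => (hpp i j).continuous
  have := aux_1d T hT (fun r => f (x + r • ω)) (fun r => ∑ i, ω i * pd i f (x + r • ω))
    (fun r => ∑ j, ω j * ∑ i, ω i * pd i (pd j f) (x + r • ω))
    (fun r => aux_line f hf x ω r)
    (fun r => by
      exact HasDerivAt.fun_sum fun j _ => (aux_line (pd j f) (hp j) x ω r).const_mul (ω j))
    (by fun_prop)
  simp only [zero_smul, add_zero] at this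
  rw [div_le_iff₀' (by norm_num)]
  refine this.trans ?_
  gcongr
  refine intervalIntegral.integral_mono_on (by positivity)
    (Continuous.intervalIntegrable (by fun_prop) _ _)
    (Continuous.intervalIntegrable (by fun_prop) _ _) ?_
  intro r _
  have i1 := aux_cs ω hω (fun i => pd i f (x + r • ω))
  have i2 : (∑ j, ω j * ∑ i, ω i * pd i (pd j f) (x + r • ω))^2
      ≤ ∑ i, ∑ j, pd i (pd j f) (x + r • ω) ^2 := by
    rw [Finset.sum_comm]
    refine (aux_cs ω hω _).trans (Finset.sum_le_sum fun j _ => aux_cs ω hω _)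
  gcongr

lemma jb_lower (t r : ℝ) (ht : 0 ≤ t) (hr : r ≤ jb t / 8) :
    jb t ^ 2 ≤ 4 * jb (t - r) ^ 2 := by
  have h1 : jb t ^ 2 = 1 + t^2 := Real.sq_sqrt (by positivity)
  have h2 : jb (t - r) ^ 2 = 1 + (t - r)^2 := Real.sq_sqrt (by positivity)
  have h0 : 0 ≤ jb t := Real.sqrt_nonneg _
  rw [h2]
  rcases le_or_gt t 1 with h | h
  · nlinarith [sq_nonneg (t - r)]
  · have h3 : jb t ≤ 3 / 2 * t := by nlinarith
    have h4 : jb t / 2 ≤ t - r := by nlinarith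
    nlinarith

/-- there is a constant `C > 0`, independent of `t` and `f`, such that for every
`t ≥ 0` and every `f ∈ C_c^∞(ℝ³)`,
`⟨t⟩ sup_{|x| ≤ ⟨t⟩/16} |f(x)| ≤ C (‖f‖_{L²(|x|≤⟨t⟩/8)} + ‖⟨t−r⟩∇f‖_{L²(|x|≤⟨t⟩/8)}
  + ‖⟨t−r⟩∇²f‖_{L²(|x|≤⟨t⟩/8)})`. -/
theorem weighted_interior_decay :
    ∃ C > 0, ∀ t : ℝ, 0 ≤ t → ∀ f : E3 → ℝ, ContDiff ℝ (⊤ : ℕ∞) f → HasCompactSupport f →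
      ∀ x : E3, ‖x‖ ≤ jb t / 16 →
        jb t * |f x| ≤
          C * ((∫ y in {y : E3 | ‖y‖ ≤ jb t / 8}, (f y) ^ 2) ^ ((1 : ℝ) / 2)
            + (∫ y in {y : E3 | ‖y‖ ≤ jb t / 8},
                (jb (t - ‖y‖)) ^ 2 * ∑ i, (pd i f y) ^ 2) ^ ((1 : ℝ) / 2)
            + (∫ y in {y : E3 | ‖y‖ ≤ jb t / 8},
                (jb (t - ‖y‖)) ^ 2 * ∑ i, ∑ j, (pd i (pd j f) y) ^ 2) ^ ((1 : ℝ) / 2)) := by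
  set σ := (volume : Measure E3).toSphere.real Set.univ with hσ
  have hσpos : 0 < σ := by
    rw [hσ, Measure.toSphere_real_apply_univ]
    have : 0 < (volume : Measure E3).real (Metric.ball 0 1) :=
      ENNReal.toReal_pos (Metric.measure_ball_pos _ _ one_pos).ne' measure_ball_lt_top.ne
    have h3 : Module.finrank ℝ E3 = 3 := by simp
    rw [h3]
    positivity
  refine ⟨Real.sqrt (3145728 * 4 / σ), by positivity, ?_⟩
  intro t ht f hf _ x hx
  have hT : 1 ≤ jb t := by
    unfold jb
    rw [Real.one_le_sqrt]
    nlinarith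
  have hS : {y : E3 | ‖y‖ ≤ jb t / 8} = Metric.closedBall 0 (jb t / 8) := by
    ext y; simp
  rw [hS]
  have hp := fun j => pd_contDiff j f hf
  have hc0 := hf.continuous
  have hc1 := fun j => (hp j).continuous
  have hc2 := fun i j => (pd_contDiff i (pd j f) (hp j)).continuous
  have hjc : Continuous jb := by unfold jb; fun_prop
  set I0 := ∫ y in Metric.closedBall (0:E3) (jb t / 8), (f y) ^ 2 with hI0
  set J1 := ∫ y in Metric.closedBall (0:E3) (jb t / 8),
                (jb (t - ‖y‖)) ^ 2 * ∑ i, (pd i f y) ^ 2 with hJ1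
  set J2 := ∫ y in Metric.closedBall (0:E3) (jb t / 8),
                (jb (t - ‖y‖)) ^ 2 * ∑ i, ∑ j, (pd i (pd j f) y) ^ 2 with hJ2
  have p0 : 0 ≤ I0 := integral_nonneg fun y => by positivity
  have p1 : 0 ≤ J1 := integral_nonneg fun y => by positivity
  have p2 : 0 ≤ J2 := integral_nonneg fun y => by positivity
  set F : E3 → ℝ := fun y => f y ^2
      + jb t^2 * ∑ i, pd i f y ^2 + jb t^2 * ∑ i, ∑ j, pd i (pd j f) y ^2 with hF
  have hFc : Continuous F := by simp only [hF]; fun_prop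
  have hF0 : ∀ y, 0 ≤ F y := fun y => by simp only [hF]; positivity
  have hInt : ∀ u : E3 → ℝ, Continuous u → ∀ R : ℝ, ∀ z,
      IntegrableOn u (Metric.closedBall (z:E3) R) :=
    fun u hu R z => hu.continuousOn.integrableOn_compact (isCompact_closedBall _ _)
  have s1 := aux_polar_bound (fun z => F (x + z)) (by fun_prop) (fun z => hF0 _)
    ((jb t * f x)^2 / 3145728) (jb t / 16) (by positivity)
    (fun ω hω => aux_ray (jb t) hT f hf x ω hω)
  have s2 : ∫ z in Metric.closedBall (0:E3) (jb t / 16), F (x + z)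
      = ∫ y in Metric.closedBall x (jb t / 16), F y := by
    rw [← (measurePreserving_add_left volume x).setIntegral_preimage_emb
      (Homeomorph.addLeft x).measurableEmbedding F]
    congr 2
    ext z
    simp
  have s3 : ∫ y in Metric.closedBall x (jb t / 16), F y
      ≤ ∫ y in Metric.closedBall (0:E3) (jb t / 8), F y := by
    refine setIntegral_mono_set (hInt F hFc _ _) (.of_forall hF0) (LE.le.eventuallyLE ?_)
    refine Metric.closedBall_subset_closedBall' ?_
    rw [dist_zero_right]
    linarith
  have s4 : ∫ y in Metric.closedBall (0:E3) (jb t / 8), F y ≤ I0 + 4 * J1 + 4 * J2 := by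
    rw [hI0, hJ1, hJ2, ← integral_const_mul, ← integral_const_mul,
      ← integral_add (hInt _ (by fun_prop) _ _) (hInt _ (by fun_prop) _ _),
      ← integral_add (hInt _ (by fun_prop) _ _) (hInt _ (by fun_prop) _ _)]
    refine setIntegral_mono_on (hInt F hFc _ _) (hInt _ (by fun_prop) _ _)
      Metric.isClosed_closedBall.measurableSet ?_
    intro y hy
    have hy' : ‖y‖ ≤ jb t / 8 := by simpa using hy
    have hj := jb_lower t ‖y‖ ht hy'
    simp only [hF]
    rw [← mul_assoc, ← mul_assoc]
    gcongr
  rw [s2] at s1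
  have s5 : (jb t * f x)^2 / 3145728 * σ ≤ I0 + 4 * J1 + 4 * J2 := s1.trans (s3.trans s4)
  rw [← Real.sqrt_eq_rpow, ← Real.sqrt_eq_rpow, ← Real.sqrt_eq_rpow]
  have s6 : I0 + 4 * J1 + 4 * J2 ≤ 4 * (√I0 + √J1 + √J2)^2 := by
    have := Real.sq_sqrt p0
    have := Real.sq_sqrt p1
    have := Real.sq_sqrt p2
    have := Real.sqrt_nonneg I0
    have := Real.sqrt_nonneg J1
    have := Real.sqrt_nonneg J2
    have := mul_nonneg (Real.sqrt_nonneg I0) (Real.sqrt_nonneg J1)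
    have := mul_nonneg (Real.sqrt_nonneg I0) (Real.sqrt_nonneg J2)
    have := mul_nonneg (Real.sqrt_nonneg J1) (Real.sqrt_nonneg J2)
    linarith
  have s7 : (jb t * f x)^2 ≤ (Real.sqrt (3145728 * 4 / σ) * (√I0 + √J1 + √J2))^2 := by
    rw [mul_pow (Real.sqrt _), Real.sq_sqrt (by positivity)]
    have := s5.trans s6
    rw [div_mul_eq_mul_div, div_le_iff₀ (by norm_num)] at this
    rw [div_mul_eq_mul_div, le_div_iff₀ hσpos]
    linarith
  have := abs_le_of_sq_le_sq s7 (by positivity)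
  rwa [abs_mul, abs_of_pos (by linarith : 0 < jb t)] at this

end
end

section
/- There exists a constant C > 0 such that for every u ∈ C_c^∞(ℝ³; ℝ³) and every x ∈ ℝ³ with x ≠ 0: |x|^{1/2} |u(x)| ≤ C ( ‖∇u‖_{L²(ℝ³)} + Σ_{i=1}^{3} ‖∇(Ω̃_i u)‖_{L²(ℝ³)} ). -/
open MeasureTheory

noncomputable section

/-- Vector fields on `ℝ³`. -/
abbrev VF3 : Type := E3 → Fin 3 → ℝ

/-- The rotation generators `V¹ = e₂⊗e₃ − e₃⊗e₂`, `V² = e₃⊗e₁ − e₁⊗e₃`,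
`V³ = e₁⊗e₂ − e₂⊗e₁` (zero-based indexing). -/
def Vmat (i : Fin 3) : Matrix (Fin 3) (Fin 3) ℝ := fun j k =>
  if j = i + 1 ∧ k = i + 2 then 1 else if j = i + 2 ∧ k = i + 1 then -1 else 0

/-- The angular momentum operator `Ω_i` on scalar functions,
`Ω₁ = x₂∂₃ − x₃∂₂` etc. (zero-based, cyclic). -/
noncomputable def angOp (i : Fin 3) (u : E3 → ℝ) (x : E3) : ℝ :=
  x (i + 1) * pd (i + 2) u x - x (i + 2) * pd (i + 1) u x

/-- The modified angular momentum operator `Ω̃_i u = Ω_i u + V^i u` on vector fields. -/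
noncomputable def omtV (i : Fin 3) (u : VF3) : VF3 := fun x j =>
  angOp i (fun y => u y j) x + ∑ k, Vmat i j k * u x k

open scoped ENNReal

lemma aux_lintegral_E3 (h : E3 → ℝ≥0∞) (hm : Measurable h) :
    ∫⁻ z, h z = ∫⁻ a : ℝ, ∫⁻ p : ℝ × ℝ, h !₂[a, p.1, p.2] := by
  rw [← (PiLp.volume_preserving_toLp (Fin 3)).lintegral_comp hm]
  rw [← (volume_preserving_piFinSuccAbove (fun _ : Fin 3 => ℝ) 0).symm.lintegral_comp
    (by fun_prop)]
  rw [Measure.volume_eq_prod, lintegral_prod _ (by fun_prop)]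
  refine lintegral_congr fun a => ?_
  rw [← (volume_preserving_finTwoArrow ℝ).symm.lintegral_comp (by fun_prop)]
  refine lintegral_congr fun p => ?_
  congr 2
  funext i
  fin_cases i <;> simp [MeasurableEquiv.piFinSuccAbove, MeasurableEquiv.finTwoArrow,
    Fin.insertNthEquiv]

lemma aux_meas (h : E3 → ℝ≥0∞) (hm : Measurable h) {α : Type*} [MeasurableSpace α]
    (a b c : α → ℝ) (ha : Measurable a) (hb : Measurable b) (hc : Measurable c) :
    Measurable fun x => h !₂[a x, b x, c x] := by
  refine hm.comp ((WithLp.measurable_toLp 2 (Fin 3 → ℝ)).comp ?_)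
  refine measurable_pi_lambda _ fun i => ?_
  fin_cases i <;> simpa

lemma aux_polar_s4 (h : E3 → ℝ≥0∞) (hm : Measurable h) :
    ∫⁻ θ in Set.Ioo (-Real.pi) Real.pi, ∫⁻ s in Set.Ioi (0:ℝ), ∫⁻ ρ in Set.Ioo (0:ℝ) 1,
      ENNReal.ofReal ((1 + s) ^ 2 * Real.sin ρ) *
        h !₂[(1 + s) * Real.cos ρ, (1 + s) * Real.sin ρ * Real.cos θ,
          (1 + s) * Real.sin ρ * Real.sin θ] ≤ ∫⁻ z, h z := by
  have e1 : ∫⁻ z, h z = ∫⁻ θ in Set.Ioo (-Real.pi) Real.pi, ∫⁻ a : ℝ, ∫⁻ q in Set.Ioi (0:ℝ),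
      ENNReal.ofReal q * h !₂[a, q * Real.cos θ, q * Real.sin θ] := by
    rw [aux_lintegral_E3 h hm]
    have : ∀ a : ℝ, ∫⁻ p : ℝ × ℝ, h !₂[a, p.1, p.2] =
        ∫⁻ θ in Set.Ioo (-Real.pi) Real.pi, ∫⁻ q in Set.Ioi (0:ℝ),
          ENNReal.ofReal q * h !₂[a, q * Real.cos θ, q * Real.sin θ] := by
      intro a
      rw [← lintegral_comp_polarCoord_symm, polarCoord_target, Measure.volume_eq_prod,
        ← Measure.prod_restrict, lintegral_prod_symm]
      · simp
      · simp only [polarCoord_symm_apply, smul_eq_mul]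
        refine Measurable.aemeasurable (Measurable.mul (by fun_prop) ?_)
        apply aux_meas h hm <;> fun_prop
    simp_rw [this]
    rw [lintegral_lintegral_swap]
    refine Measurable.aemeasurable ?_
    refine Measurable.lintegral_prod_right' (f := fun p : (ℝ × ℝ) × ℝ =>
      ENNReal.ofReal p.2 * h !₂[p.1.1, p.2 * Real.cos p.1.2, p.2 * Real.sin p.1.2]) ?_
    refine Measurable.mul (by fun_prop) ?_
    apply aux_meas h hm <;> fun_prop
  rw [e1]
  refine lintegral_mono fun θ => ?_
  set k : ℝ × ℝ → ℝ≥0∞ := fun p => (Set.univ ×ˢ Set.Ioi (0:ℝ)).indicator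
    (fun p => ENNReal.ofReal p.2 * h !₂[p.1, p.2 * Real.cos θ, p.2 * Real.sin θ]) p with hk
  have hmk : Measurable k := by
    refine Measurable.indicator ?_ (MeasurableSet.univ.prod measurableSet_Ioi)
    refine Measurable.mul (by fun_prop) ?_
    apply aux_meas h hm <;> fun_prop
  have e2 : ∫⁻ a : ℝ, ∫⁻ q in Set.Ioi (0:ℝ),
      ENNReal.ofReal q * h !₂[a, q * Real.cos θ, q * Real.sin θ] = ∫⁻ p, k p := by
    rw [Measure.volume_eq_prod, lintegral_prod _ hmk.aemeasurable]
    refine lintegral_congr fun a => ?_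
    rw [← lintegral_indicator measurableSet_Ioi]
    refine lintegral_congr fun q => ?_
    simp [hk, Set.indicator]
  rw [e2, ← lintegral_comp_polarCoord_symm]
  have e3 : ∫⁻ p in Set.Ioi (1:ℝ) ×ˢ Set.Ioo (0:ℝ) 1,
      ENNReal.ofReal p.1 • k (polarCoord.symm p) ≤
      ∫⁻ p in polarCoord.target, ENNReal.ofReal p.1 • k (polarCoord.symm p) := by
    refine lintegral_mono_set ?_
    rw [polarCoord_target]
    refine Set.prod_mono (Set.Ioi_subset_Ioi zero_le_one) (Set.Ioo_subset_Ioo ?_ ?_)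
    · linarith [Real.pi_pos]
    · linarith [Real.pi_gt_three]
  refine le_trans (le_of_eq ?_) e3
  rw [Measure.volume_eq_prod, ← Measure.prod_restrict, lintegral_prod]
  swap
  · simp only [polarCoord_symm_apply, smul_eq_mul]
    refine Measurable.aemeasurable (Measurable.mul (by fun_prop) ?_)
    exact hmk.comp (by fun_prop)
  rw [← lintegral_indicator measurableSet_Ioi, ← lintegral_indicator measurableSet_Ioi]
  conv_rhs => rw [← lintegral_add_right_eq_self _ (1:ℝ)]
  refine lintegral_congr fun s => ?_
  by_cases hs : 0 < s
  · rw [Set.indicator_of_mem (by exact hs), Set.indicator_of_mem (by simpa using hs)]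
    refine setLIntegral_congr_fun measurableSet_Ioo fun ρ hρ => ?_
    have hsin : 0 < Real.sin ρ := Real.sin_pos_of_pos_of_lt_pi hρ.1
      (by linarith [Real.pi_gt_three, hρ.2])
    have hq : 0 < (s + 1) * Real.sin ρ := by positivity
    have : k (polarCoord.symm (s + 1, ρ)) = ENNReal.ofReal ((s + 1) * Real.sin ρ) *
        h !₂[(s + 1) * Real.cos ρ, (s + 1) * Real.sin ρ * Real.cos θ,
          (s + 1) * Real.sin ρ * Real.sin θ] := by
      simp only [hk, polarCoord_symm_apply]
      rw [Set.indicator_of_mem]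
      simpa using hq
    simp only [this, smul_eq_mul]
    rw [← mul_assoc, ← ENNReal.ofReal_mul (by positivity)]
    congr 2
    · ring
    · rw [add_comm]
  · rw [Set.indicator_of_notMem (by exact hs), Set.indicator_of_notMem (by simpa using hs)]

lemma aux_half_sin {ρ : ℝ} (h0 : 0 ≤ ρ) (h1 : ρ ≤ 1) : ρ ≤ 2 * Real.sin ρ := by
  have := Real.mul_le_sin h0 (by linarith [Real.pi_gt_three])
  have hpi : 1 / 2 ≤ 2 / Real.pi := by
    rw [div_le_div_iff₀ (by norm_num) Real.pi_pos]; linarith [Real.pi_le_four]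
  nlinarith

lemma aux_inv_sq : ∫⁻ s in Set.Ioi (0:ℝ), ENNReal.ofReal (((1 + s) ^ 2)⁻¹) ≤ 2 := by
  calc ∫⁻ s in Set.Ioi (0:ℝ), ENNReal.ofReal (((1 + s) ^ 2)⁻¹)
      ≤ ∫⁻ s in Set.Ioi (0:ℝ), ENNReal.ofReal ((1 + s ^ 2)⁻¹) := by
        refine setLIntegral_mono' measurableSet_Ioi fun s hs => ENNReal.ofReal_le_ofReal ?_
        have : (0:ℝ) < s := hs
        gcongr
        nlinarith
    _ = ENNReal.ofReal (∫ s in Set.Ioi (0:ℝ), (1 + s ^ 2)⁻¹) := by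
        rw [ofReal_integral_eq_lintegral_ofReal]
        · exact integrable_inv_one_add_sq.integrableOn
        · exact Filter.Eventually.of_forall fun s => by positivity
    _ ≤ 2 := by
        rw [integral_Ioi_inv_one_add_sq]
        rw [show (2:ℝ≥0∞) = ENNReal.ofReal 2 by simp]
        refine ENNReal.ofReal_le_ofReal ?_
        simp
        linarith [Real.pi_le_four]

lemma aux_tri : ∫⁻ σ in Set.Ioo (0:ℝ) 1, ∫⁻ ρ in Set.Ioo σ 1, ENNReal.ofReal (ρ⁻¹) ≤ 1 := by
  calc ∫⁻ σ in Set.Ioo (0:ℝ) 1, ∫⁻ ρ in Set.Ioo σ 1, ENNReal.ofReal (ρ⁻¹)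
      = ∫⁻ σ in Set.Ioo (0:ℝ) 1, ∫⁻ ρ in Set.Ioo (0:ℝ) 1,
          {p : ℝ × ℝ | p.1 < p.2}.indicator (fun p => ENNReal.ofReal (p.2⁻¹)) (σ, ρ) := by
        refine setLIntegral_congr_fun measurableSet_Ioo fun σ hσ => ?_
        rw [← lintegral_indicator measurableSet_Ioo, ← lintegral_indicator measurableSet_Ioo]
        refine lintegral_congr fun ρ => ?_
        simp only [Set.indicator, Set.mem_Ioo, Set.mem_ofPred_eq]
        have := hσ.1
        by_cases h1 : σ < ρ
        · simp [h1, this.trans h1]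
        · simp [h1]
    _ = ∫⁻ ρ in Set.Ioo (0:ℝ) 1, ∫⁻ σ in Set.Ioo (0:ℝ) 1,
          {p : ℝ × ℝ | p.1 < p.2}.indicator (fun p => ENNReal.ofReal (p.2⁻¹)) (σ, ρ) := by
        rw [lintegral_lintegral_swap]
        refine Measurable.aemeasurable (Measurable.indicator (by fun_prop) ?_)
        exact measurableSet_lt measurable_fst measurable_snd
    _ ≤ ∫⁻ ρ in Set.Ioo (0:ℝ) 1, 1 := by
        refine setLIntegral_mono' measurableSet_Ioo fun ρ hρ => ?_
        calc ∫⁻ σ in Set.Ioo (0:ℝ) 1,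
              {p : ℝ × ℝ | p.1 < p.2}.indicator (fun p => ENNReal.ofReal (p.2⁻¹)) (σ, ρ)
            ≤ ∫⁻ σ in Set.Ioo (0:ℝ) ρ, ENNReal.ofReal (ρ⁻¹) := by
              rw [← lintegral_indicator measurableSet_Ioo, ← lintegral_indicator measurableSet_Ioo]
              refine lintegral_mono fun σ => ?_
              simp only [Set.indicator, Set.mem_Ioo, Set.mem_ofPred_eq]
              by_cases h1 : σ < ρ
              · by_cases h2 : 0 < σ
                · simp only [h1, h2, and_self, if_true, true_and]; split_ifs <;> simp
                · simp [h2]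
              · simp [h1]
          _ = ENNReal.ofReal (ρ⁻¹ * ρ) := by
              rw [setLIntegral_const, Real.volume_Ioo, sub_zero,
                ENNReal.ofReal_mul (inv_nonneg.2 hρ.1.le)]
          _ ≤ 1 := by rw [inv_mul_cancel₀ hρ.1.ne']; simp
    _ = 1 := by simp

lemma aux_avg (c : ℝ≥0∞) (h : ℝ → ℝ → ℝ → ℝ)
    (hm : Measurable fun p : ℝ × ℝ × ℝ => h p.1 p.2.1 p.2.2)
    (l : ℝ) (hl : 0 < l)
    (H : ∀ θ, ∀ δ ∈ Set.Ioo (1/2:ℝ) 1, c ≤ 3 * (∫⁻ s in Set.Ioi (0:ℝ),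
        ENNReal.ofReal ((1 + s)⁻¹ * h s δ θ)) +
      ∫⁻ σ in Set.Ioo (0:ℝ) 1, ∫⁻ ρ in Set.Ioo σ 1, ENNReal.ofReal (h σ ρ θ)) :
    c ≤ 28 * (ENNReal.ofReal l + ENNReal.ofReal l⁻¹ *
      ∫⁻ θ in Set.Ioo (-Real.pi) Real.pi, ∫⁻ s in Set.Ioi (0:ℝ), ∫⁻ ρ in Set.Ioo (0:ℝ) 1,
        ENNReal.ofReal (h s ρ θ ^ 2 * Real.sin ρ)) := by
  set w : ℝ → ℝ → ℝ → ℝ≥0∞ := fun s ρ θ => ENNReal.ofReal (h s ρ θ ^ 2 * Real.sin ρ) with hw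
  have hmw : Measurable fun p : ℝ × ℝ × ℝ => w p.1 p.2.1 p.2.2 := by
    simp only [hw]; fun_prop
  have hw3 : ∀ θ, Measurable fun p : ℝ × ℝ => w p.1 p.2 θ := fun θ =>
    hmw.comp (g := fun p : ℝ × ℝ × ℝ => w p.1 p.2.1 p.2.2)
      (f := fun p : ℝ × ℝ => (p.1, p.2, θ)) (by fun_prop)
  have hw1 : ∀ ρ θ, Measurable fun s : ℝ => w s ρ θ := fun ρ θ =>
    (hw3 θ).comp (g := fun p : ℝ × ℝ => w p.1 p.2 θ) (f := fun s => (s, ρ)) (by fun_prop)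
  have hw2 : ∀ s θ, Measurable fun ρ : ℝ => w s ρ θ := fun s θ =>
    (hw3 θ).comp (g := fun p : ℝ × ℝ => w p.1 p.2 θ) (f := fun ρ => (s, ρ)) (by fun_prop)
  set K : ℝ → ℝ≥0∞ := fun θ => ∫⁻ s in Set.Ioi (0:ℝ), ∫⁻ ρ in Set.Ioo (0:ℝ) 1, w s ρ θ with hK
  have T1 : ∀ θ, ∀ δ ∈ Set.Ioo (1/2:ℝ) 1, (∫⁻ s in Set.Ioi (0:ℝ),
        ENNReal.ofReal ((1 + s)⁻¹ * h s δ θ)) ≤ ENNReal.ofReal l * 2 +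
        ENNReal.ofReal l⁻¹ * 4 * ∫⁻ s in Set.Ioi (0:ℝ), w s δ θ := by
    intro θ δ hδ
    have hs2 := aux_half_sin (by linarith [hδ.1]) hδ.2.le
    calc (∫⁻ s in Set.Ioi (0:ℝ), ENNReal.ofReal ((1 + s)⁻¹ * h s δ θ))
        ≤ ∫⁻ s in Set.Ioi (0:ℝ), (ENNReal.ofReal l * ENNReal.ofReal (((1 + s) ^ 2)⁻¹) +
          ENNReal.ofReal l⁻¹ * 4 * w s δ θ) := by
          refine setLIntegral_mono' measurableSet_Ioi fun s hs => ?_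
          have hs0 : (0:ℝ) < s := hs
          have h4 : (4:ℝ≥0∞) = ENNReal.ofReal 4 := by simp
          have hsn : 0 ≤ Real.sin δ := by linarith [hδ.1]
          simp only [hw, h4]
          rw [← ENNReal.ofReal_mul hl.le, ← ENNReal.ofReal_mul (by positivity),
            ← ENNReal.ofReal_mul (by positivity), ← ENNReal.ofReal_add (by positivity)
              (by positivity)]
          refine ENNReal.ofReal_le_ofReal ?_
          have e1 : 0 ≤ l⁻¹ * (l * (1 + s)⁻¹ - h s δ θ) ^ 2 := by positivity
          have e2 : l⁻¹ * (l * (1 + s)⁻¹ - h s δ θ) ^ 2 =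
            l * ((1 + s) ^ 2)⁻¹ - 2 * ((1 + s)⁻¹ * h s δ θ) + l⁻¹ * h s δ θ ^ 2 := by
            field_simp
            ring
          have e3 : 0 ≤ l⁻¹ * h s δ θ ^ 2 := by positivity
          have e4 : 0 ≤ l * ((1 + s) ^ 2)⁻¹ := by positivity
          have e5 : (l⁻¹ * h s δ θ ^ 2) * 1 ≤ (l⁻¹ * h s δ θ ^ 2) * (4 * Real.sin δ) :=
            mul_le_mul_of_nonneg_left (by linarith [hδ.1]) e3
          linarith
      _ = ENNReal.ofReal l * (∫⁻ s in Set.Ioi (0:ℝ), ENNReal.ofReal (((1 + s) ^ 2)⁻¹)) +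
          ENNReal.ofReal l⁻¹ * 4 * ∫⁻ s in Set.Ioi (0:ℝ), w s δ θ := by
          rw [lintegral_add_left (by fun_prop), lintegral_const_mul _ (by fun_prop),
            lintegral_const_mul _ (hw1 _ _)]
      _ ≤ _ := by gcongr; exact aux_inv_sq
  have T2 : ∀ θ, ∫⁻ σ in Set.Ioo (0:ℝ) 1, ∫⁻ ρ in Set.Ioo σ 1, ENNReal.ofReal (h σ ρ θ) ≤
      ENNReal.ofReal l + ENNReal.ofReal l⁻¹ * 2 * K θ := by
    intro θ
    calc ∫⁻ σ in Set.Ioo (0:ℝ) 1, ∫⁻ ρ in Set.Ioo σ 1, ENNReal.ofReal (h σ ρ θ)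
        ≤ ∫⁻ σ in Set.Ioo (0:ℝ) 1, (ENNReal.ofReal l * (∫⁻ ρ in Set.Ioo σ 1,
            ENNReal.ofReal (ρ⁻¹)) + ENNReal.ofReal l⁻¹ * 2 *
              ∫⁻ ρ in Set.Ioo (0:ℝ) 1, w σ ρ θ) := by
          refine setLIntegral_mono' measurableSet_Ioo fun σ hσ => ?_
          calc ∫⁻ ρ in Set.Ioo σ 1, ENNReal.ofReal (h σ ρ θ)
              ≤ ∫⁻ ρ in Set.Ioo σ 1, (ENNReal.ofReal l * ENNReal.ofReal (ρ⁻¹) +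
                  ENNReal.ofReal l⁻¹ * 2 * w σ ρ θ) := by
                refine setLIntegral_mono' measurableSet_Ioo fun ρ hρ => ?_
                have hρ0 : 0 < ρ := hσ.1.trans hρ.1
                have hs2 := aux_half_sin hρ0.le hρ.2.le
                have hsn : 0 ≤ Real.sin ρ := by linarith
                have h4 : (2:ℝ≥0∞) = ENNReal.ofReal 2 := by simp
                simp only [hw, h4]
                rw [← ENNReal.ofReal_mul hl.le, ← ENNReal.ofReal_mul (by positivity),
                  ← ENNReal.ofReal_mul (by positivity), ← ENNReal.ofReal_add (by positivity)
                    (by positivity)]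
                refine ENNReal.ofReal_le_ofReal ?_
                have e1 : 0 ≤ l⁻¹ * ρ * (l * ρ⁻¹ - h σ ρ θ) ^ 2 := by positivity
                have e2 : l⁻¹ * ρ * (l * ρ⁻¹ - h σ ρ θ) ^ 2 =
                  l * ρ⁻¹ - 2 * h σ ρ θ + l⁻¹ * h σ ρ θ ^ 2 * ρ := by
                  field_simp
                  ring
                have e3 : 0 ≤ l⁻¹ * h σ ρ θ ^ 2 := by positivity
                have e4 : 0 ≤ l * ρ⁻¹ := by positivity
                have e5 := mul_le_mul_of_nonneg_left hs2 e3
                have e6 := mul_nonneg e3 hsn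
                linarith
            _ = ENNReal.ofReal l * (∫⁻ ρ in Set.Ioo σ 1, ENNReal.ofReal (ρ⁻¹)) +
                  ENNReal.ofReal l⁻¹ * 2 * ∫⁻ ρ in Set.Ioo σ 1, w σ ρ θ := by
                rw [lintegral_add_left (by fun_prop), lintegral_const_mul _ (by fun_prop),
                  lintegral_const_mul _ (hw2 _ _)]
            _ ≤ _ := by
                gcongr
                exact hσ.1.le
      _ = ENNReal.ofReal l * (∫⁻ σ in Set.Ioo (0:ℝ) 1, ∫⁻ ρ in Set.Ioo σ 1,
            ENNReal.ofReal (ρ⁻¹)) + ENNReal.ofReal l⁻¹ * 2 *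
              ∫⁻ σ in Set.Ioo (0:ℝ) 1, ∫⁻ ρ in Set.Ioo (0:ℝ) 1, w σ ρ θ := by
          have hmm : Measurable fun σ => ∫⁻ ρ in Set.Ioo (0:ℝ) 1, w σ ρ θ :=
            (hw3 θ).lintegral_prod_right'
          rw [lintegral_add_right _ (by fun_prop), lintegral_const_mul _ hmm,
            lintegral_const_mul' _ _ ENNReal.ofReal_ne_top]
      _ ≤ ENNReal.ofReal l * 1 + ENNReal.ofReal l⁻¹ * 2 * K θ := by
          gcongr
          · exact aux_tri
          · exact lintegral_mono_set Set.Ioo_subset_Ioi_self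
      _ = _ := by rw [mul_one]
  have T3 : ∀ θ, c ≤ ENNReal.ofReal l * 7 + ENNReal.ofReal l⁻¹ * 28 * K θ := by
    intro θ
    have hc : ∀ δ ∈ Set.Ioo (1/2:ℝ) 1, c ≤ (ENNReal.ofReal l * 7 +
        ENNReal.ofReal l⁻¹ * 2 * K θ) +
        ENNReal.ofReal l⁻¹ * 12 * ∫⁻ s in Set.Ioi (0:ℝ), w s δ θ := by
      intro δ hδ
      refine (H θ δ hδ).trans ((add_le_add (mul_le_mul_right (T1 θ δ hδ) _) (T2 θ)).trans
        (le_of_eq ?_))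
      ring
    have hmm : Measurable fun δ => ∫⁻ s in Set.Ioi (0:ℝ), w s δ θ :=
      (hw3 θ).lintegral_prod_left'
    have hv : volume (Set.Ioo (1/2:ℝ) 1) = 2⁻¹ := by
      rw [Real.volume_Ioo, show (1 - 1/2 : ℝ) = 2⁻¹ by norm_num, ENNReal.ofReal_inv_of_pos
        (by norm_num)]; simp
    have key : c * 2⁻¹ ≤ (ENNReal.ofReal l * 7 +
        ENNReal.ofReal l⁻¹ * 2 * K θ) * 2⁻¹ + ENNReal.ofReal l⁻¹ * 12 * K θ := by
      calc c * 2⁻¹ = ∫⁻ δ in Set.Ioo (1/2:ℝ) 1, c := by rw [setLIntegral_const, hv]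
        _ ≤ _ := setLIntegral_mono' measurableSet_Ioo hc
        _ = (ENNReal.ofReal l * 7 + ENNReal.ofReal l⁻¹ * 2 * K θ) * 2⁻¹ +
            ENNReal.ofReal l⁻¹ * 12 *
              ∫⁻ δ in Set.Ioo (1/2:ℝ) 1, ∫⁻ s in Set.Ioi (0:ℝ), w s δ θ := by
          rw [lintegral_add_left (by fun_prop), setLIntegral_const, hv,
            lintegral_const_mul _ hmm]
        _ ≤ _ := by
          gcongr
          have hsw : K θ = ∫⁻ ρ in Set.Ioo (0:ℝ) 1, ∫⁻ s in Set.Ioi (0:ℝ), w s ρ θ :=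
            lintegral_lintegral_swap (f := fun s ρ => w s ρ θ) (hw3 θ).aemeasurable
          rw [hsw]
          exact lintegral_mono_set (Set.Ioo_subset_Ioo (by norm_num) le_rfl)
    have h2 : (2⁻¹ : ℝ≥0∞) * 2 = 1 := ENNReal.inv_mul_cancel (by norm_num) (by norm_num)
    calc c = c * 2⁻¹ * 2 := by rw [mul_assoc, h2, mul_one]
      _ ≤ ((ENNReal.ofReal l * 7 + ENNReal.ofReal l⁻¹ * 2 * K θ) * 2⁻¹ +
            ENNReal.ofReal l⁻¹ * 12 * K θ) * 2 := by gcongr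
      _ = (ENNReal.ofReal l * 7 + ENNReal.ofReal l⁻¹ * 2 * K θ) * (2⁻¹ * 2) +
            ENNReal.ofReal l⁻¹ * 24 * K θ := by ring
      _ = ENNReal.ofReal l * 7 + ENNReal.ofReal l⁻¹ * 26 * K θ := by rw [h2]; ring
      _ ≤ _ := by gcongr; norm_num
  calc c = ∫⁻ θ in Set.Ioo (0:ℝ) 1, c := by simp
    _ ≤ ∫⁻ θ in Set.Ioo (0:ℝ) 1, (ENNReal.ofReal l * 7 + ENNReal.ofReal l⁻¹ * 28 * K θ) :=
        lintegral_mono fun θ => T3 θ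
    _ = ENNReal.ofReal l * 7 + ENNReal.ofReal l⁻¹ * 28 * ∫⁻ θ in Set.Ioo (0:ℝ) 1, K θ := by
        rw [lintegral_add_left (by fun_prop), lintegral_const_mul' _ _
          (ENNReal.mul_ne_top ENNReal.ofReal_ne_top (by norm_num))]
        simp
    _ ≤ ENNReal.ofReal l * 28 + ENNReal.ofReal l⁻¹ * 28 *
          ∫⁻ θ in Set.Ioo (-Real.pi) Real.pi, K θ := by
        gcongr
        · norm_num
        · linarith [Real.pi_pos]
        · linarith [Real.pi_gt_three]
    _ = _ := by ring

lemma aux_ftc {φ φ' : ℝ → ℝ} (h : ∀ x, HasDerivAt φ (φ' x) x) (hc : Continuous φ') {a b : ℝ}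
    (hab : a ≤ b) : ‖φ a‖ₑ ≤ ‖φ b‖ₑ + ∫⁻ x in Set.Ioo a b, ‖φ' x‖ₑ := by
  have e := intervalIntegral.integral_eq_sub_of_hasDerivAt (a := a) (b := b)
    (fun x _ => h x) (hc.intervalIntegrable _ _)
  have e2 : φ a = φ b - ∫ y in a..b, φ' y := by rw [e]; ring
  rw [e2]
  refine (enorm_sub_le).trans ?_
  gcongr
  rw [intervalIntegral.integral_of_le hab, integral_Ioc_eq_integral_Ioo]
  exact enorm_integral_le_lintegral_enorm _

/-- unit vector at angle `ρ` -/
def aux_om (e m : E3) (ρ : ℝ) : E3 := Real.cos ρ • e + Real.sin ρ • m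

/-- derivative of the unit vector at angle `ρ` -/
def aux_om' (e m : E3) (ρ : ℝ) : E3 := -Real.sin ρ • e + Real.cos ρ • m

lemma aux_om_deriv (e m : E3) (ρ : ℝ) : HasDerivAt (aux_om e m) (aux_om' e m ρ) ρ :=
  ((Real.hasDerivAt_cos ρ).smul_const e).add ((Real.hasDerivAt_sin ρ).smul_const m)

lemma aux_om_cont (e m : E3) : Continuous (aux_om e m) := by unfold aux_om; fun_prop

lemma aux_om'_cont (e m : E3) : Continuous (aux_om' e m) := by unfold aux_om'; fun_prop

lemma aux_shift (k : ℝ → ℝ → ℝ≥0∞) (hk : Measurable fun p : ℝ × ℝ => k p.1 p.2) (δ : ℝ)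
    (h1 : δ ≤ 1) :
    ∫⁻ ρ in Set.Ioo 0 δ, ∫⁻ σ in Set.Ioo 0 (δ - ρ), k σ (ρ + σ) ≤
      ∫⁻ σ in Set.Ioo (0:ℝ) 1, ∫⁻ ρ in Set.Ioo σ 1, k σ ρ := by
  set T : Set (ℝ × ℝ) := {p | 0 < p.1 ∧ 0 < p.2 ∧ p.1 + p.2 < δ} with hT
  have hTm : MeasurableSet T := by
    refine (measurableSet_lt measurable_const measurable_fst).inter
      ((measurableSet_lt measurable_const measurable_snd).inter
        (measurableSet_lt (measurable_fst.add measurable_snd) measurable_const))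
  have hkm : Measurable fun p : ℝ × ℝ => k p.2 (p.1 + p.2) :=
    hk.comp (g := fun p : ℝ × ℝ => k p.1 p.2) (f := fun p : ℝ × ℝ => (p.2, p.1 + p.2))
      (by fun_prop)
  calc ∫⁻ ρ in Set.Ioo 0 δ, ∫⁻ σ in Set.Ioo 0 (δ - ρ), k σ (ρ + σ)
      ≤ ∫⁻ ρ, ∫⁻ σ, T.indicator (fun p => k p.2 (p.1 + p.2)) (ρ, σ) := by
        rw [← lintegral_indicator measurableSet_Ioo]
        refine lintegral_mono fun ρ => ?_
        by_cases hρ : ρ ∈ Set.Ioo 0 δ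
        · rw [Set.indicator_of_mem hρ, ← lintegral_indicator measurableSet_Ioo]
          refine lintegral_mono fun σ => ?_
          by_cases hσ : σ ∈ Set.Ioo 0 (δ - ρ)
          · rw [Set.indicator_of_mem hσ, Set.indicator_of_mem]
            exact ⟨hρ.1, hσ.1, by simpa using by linarith [hσ.2]⟩
          · rw [Set.indicator_of_notMem hσ]; exact zero_le
        · rw [Set.indicator_of_notMem hρ]; exact zero_le
    _ = ∫⁻ σ, ∫⁻ ρ, T.indicator (fun p => k p.2 (p.1 + p.2)) (ρ, σ) := by
        rw [lintegral_lintegral_swap]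
        exact (hkm.indicator hTm).aemeasurable
    _ ≤ _ := by
        rw [← lintegral_indicator measurableSet_Ioo]
        refine lintegral_mono fun σ => ?_
        by_cases hσ : σ ∈ Set.Ioo (0:ℝ) 1
        · rw [Set.indicator_of_mem hσ, ← lintegral_indicator measurableSet_Ioo]
          conv_rhs => rw [← lintegral_add_right_eq_self _ σ]
          refine lintegral_mono fun ρ => ?_
          by_cases hp : (ρ, σ) ∈ T
          · have h2 : ρ + σ < δ := hp.2.2
            have h3 : 0 < ρ := hp.1
            rw [Set.indicator_of_mem hp, Set.indicator_of_mem]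
            exact ⟨by linarith, by linarith⟩
          · rw [Set.indicator_of_notMem hp]; exact zero_le
        · have : ∀ ρ, (ρ, σ) ∉ T := by
            intro ρ hp
            have h2 : ρ + σ < δ := hp.2.2
            have h3 : 0 < ρ := hp.1
            have h4 : 0 < σ := hp.2.1
            exact hσ ⟨h4, by linarith⟩
          simp [Set.indicator_of_notMem (this _)]

lemma aux_path (f g N : E3 → ℝ) (e m : E3) (R : ℝ) (hR : 0 < R)
    (hf : ContDiff ℝ 1 f) (hg : ContDiff ℝ 1 g) (hfc : HasCompactSupport f)
    (hN0 : ∀ y, 0 ≤ N y)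
    (hNf : ∀ y v, |fderiv ℝ f y v| ≤ N y * ‖v‖)
    (hNg : ∀ y v, |fderiv ℝ g y v| ≤ 6 * N y * ‖v‖)
    (hom : ∀ ρ, ‖aux_om e m ρ‖ = 1) (hom' : ∀ ρ, ‖aux_om' e m ρ‖ = 1)
    (hfg : ∀ r ρ : ℝ, fderiv ℝ f (r • aux_om e m ρ) (r • aux_om' e m ρ) = g (r • aux_om e m ρ))
    (δ : ℝ) (hδ : δ ∈ Set.Ioo (1/2:ℝ) 1) :
    ‖f (R • e)‖ₑ ≤ 3 * (∫⁻ s in Set.Ioi (0:ℝ),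
        ENNReal.ofReal ((1 + s)⁻¹ * (12 * (R * (1 + s)) * N ((R * (1 + s)) • aux_om e m δ)))) +
      ∫⁻ σ in Set.Ioo (0:ℝ) 1, ∫⁻ ρ in Set.Ioo σ 1,
        ENNReal.ofReal (12 * (R * (1 + σ)) * N ((R * (1 + σ)) • aux_om e m ρ)) := by
  have hδ0 : 0 < δ := by linarith [hδ.1]
  have hfd : Differentiable ℝ f := hf.differentiable (by norm_num)
  have hgd : Differentiable ℝ g := hg.differentiable (by norm_num)
  have hf' : Continuous (fderiv ℝ f) := hf.continuous_fderiv (by norm_num)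
  have hg' : Continuous (fderiv ℝ g) := hg.continuous_fderiv (by norm_num)
  have homc := aux_om_cont e m
  have homc' := aux_om'_cont e m
  have hgc : Continuous g := hg.continuous
  -- radial step
  have S1 : ‖f ((R * (1 + 0)) • aux_om e m δ)‖ₑ ≤ ∫⁻ s in Set.Ioi (0:ℝ),
        ENNReal.ofReal ((1 + s)⁻¹ * (12 * (R * (1 + s)) * N ((R * (1 + s)) • aux_om e m δ))) := by
    obtain ⟨M, hM⟩ := hfc.isCompact.isBounded.exists_norm_le
    set T : ℝ := max M 0 / R with hTdef
    have hT0 : 0 ≤ T := by positivity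
    have hz : f ((R * (1 + T)) • aux_om e m δ) = 0 := by
      by_contra hne
      have := hM _ (subset_tsupport f hne)
      rw [norm_smul, hom, mul_one, Real.norm_of_nonneg (by positivity)] at this
      have h2 : R * (1 + T) = R + max M 0 := by rw [hTdef]; field_simp
      linarith [le_max_left M 0]
    have hd : ∀ s : ℝ, HasDerivAt (fun s : ℝ => f ((R * (1 + s)) • aux_om e m δ))
        (fderiv ℝ f ((R * (1 + s)) • aux_om e m δ) (R • aux_om e m δ)) s := by
      intro s
      have h1 : HasDerivAt (fun s : ℝ => (R * (1 + s)) • aux_om e m δ) (R • aux_om e m δ) s := by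
        have : HasDerivAt (fun s : ℝ => R * (1 + s)) R s := by
          simpa using ((hasDerivAt_id s).const_add 1).const_mul R
        exact this.smul_const _
      exact (hfd _).hasFDerivAt.comp_hasDerivAt s h1
    have h3 := aux_ftc hd (by fun_prop) hT0
    rw [hz, enorm_zero, zero_add] at h3
    refine h3.trans ((lintegral_mono_set Set.Ioo_subset_Ioi_self).trans ?_)
    refine setLIntegral_mono' measurableSet_Ioi fun s hs => ?_
    have hs0 : (0:ℝ) < s := hs
    rw [Real.enorm_eq_ofReal_abs]
    refine ENNReal.ofReal_le_ofReal ((hNf _ _).trans ?_)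
    rw [norm_smul, hom, Real.norm_of_nonneg hR.le]
    have h5 := mul_nonneg hR.le (hN0 ((R * (1 + s)) • aux_om e m δ))
    have h6 : (1 + s)⁻¹ * (12 * (R * (1 + s)) * N ((R * (1 + s)) • aux_om e m δ)) =
      12 * (R * N ((R * (1 + s)) • aux_om e m δ)) := by
      field_simp
    rw [h6]; linarith
  -- angular step
  have S2 : ‖f ((R * (1 + 0)) • aux_om e m 0)‖ₑ ≤ ‖f ((R * (1 + 0)) • aux_om e m δ)‖ₑ +
      ∫⁻ ρ in Set.Ioo 0 δ, ‖g ((R * (1 + 0)) • aux_om e m ρ)‖ₑ := by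
    refine aux_ftc (φ := fun ρ => f ((R * (1 + 0)) • aux_om e m ρ))
      (φ' := fun ρ => g ((R * (1 + 0)) • aux_om e m ρ)) ?_ (by fun_prop) hδ0.le
    intro ρ
    rw [← hfg]
    have h1 : HasDerivAt (fun ρ => (R * (1 + 0)) • aux_om e m ρ)
        ((R * (1 + 0)) • aux_om' e m ρ) ρ := (aux_om_deriv e m ρ).const_smul (R * (1 + 0))
    exact (hfd _).hasFDerivAt.comp_hasDerivAt ρ h1
  -- diagonal step
  have S3 : ∀ ρ ∈ Set.Ioo 0 δ, ‖g ((R * (1 + 0)) • aux_om e m ρ)‖ₑ ≤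
      ‖g ((R * (1 + (δ - ρ))) • aux_om e m δ)‖ₑ + ∫⁻ σ in Set.Ioo 0 (δ - ρ),
        ‖fderiv ℝ g ((R * (1 + σ)) • aux_om e m (ρ + σ))
          ((R * (1 + σ)) • aux_om' e m (ρ + σ) + R • aux_om e m (ρ + σ))‖ₑ := by
    intro ρ hρ
    have := aux_ftc (φ := fun σ => g ((R * (1 + σ)) • aux_om e m (ρ + σ)))
      (φ' := fun σ => fderiv ℝ g ((R * (1 + σ)) • aux_om e m (ρ + σ))
          ((R * (1 + σ)) • aux_om' e m (ρ + σ) + R • aux_om e m (ρ + σ)))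
      ?_ (by fun_prop) (a := 0) (b := δ - ρ) (by linarith [hρ.2])
    · simpa using this
    · intro σ
      have h1 : HasDerivAt (fun s : ℝ => R * (1 + s)) R σ := by
        simpa using ((hasDerivAt_id σ).const_add 1).const_mul R
      have h2 : HasDerivAt (fun s : ℝ => aux_om e m (ρ + s)) (aux_om' e m (ρ + σ)) σ :=
        (aux_om_deriv e m (ρ + σ)).comp_const_add ρ σ
      exact (hgd _).hasFDerivAt.comp_hasDerivAt σ (h1.smul h2)
  have S4 : ∫⁻ ρ in Set.Ioo 0 δ, ‖g ((R * (1 + (δ - ρ))) • aux_om e m δ)‖ₑ ≤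
      ∫⁻ s in Set.Ioi (0:ℝ),
        ENNReal.ofReal ((1 + s)⁻¹ * (12 * (R * (1 + s)) * N ((R * (1 + s)) • aux_om e m δ))) := by
    rw [← lintegral_indicator measurableSet_Ioo, ← lintegral_indicator measurableSet_Ioi]
    conv_rhs => rw [← lintegral_sub_left_eq_self _ δ]
    refine lintegral_mono fun ρ => ?_
    by_cases hρ : ρ ∈ Set.Ioo 0 δ
    · have hs0 : 0 < δ - ρ := by linarith [hρ.2]
      rw [Set.indicator_of_mem hρ, Set.indicator_of_mem (by exact hs0)]
      rw [Real.enorm_eq_ofReal_abs]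
      have hs1 : δ - ρ < 1 := by linarith [hρ.1, hδ.2]
      generalize δ - ρ = s at *
      refine ENNReal.ofReal_le_ofReal ?_
      rw [← hfg]
      refine (hNf _ _).trans ?_
      rw [norm_smul, hom', Real.norm_of_nonneg (by positivity)]
      have h5 := mul_nonneg hR.le (hN0 ((R * (1 + s)) • aux_om e m δ))
      have h6 : (1 + s)⁻¹ * (12 * (R * (1 + s)) * N ((R * (1 + s)) • aux_om e m δ)) =
        12 * (R * N ((R * (1 + s)) • aux_om e m δ)) := by
        field_simp
      rw [h6]
      nlinarith
    · rw [Set.indicator_of_notMem hρ]; exact zero_le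
  have S5 : ∫⁻ ρ in Set.Ioo 0 δ, ∫⁻ σ in Set.Ioo 0 (δ - ρ),
        ‖fderiv ℝ g ((R * (1 + σ)) • aux_om e m (ρ + σ))
          ((R * (1 + σ)) • aux_om' e m (ρ + σ) + R • aux_om e m (ρ + σ))‖ₑ ≤
      ∫⁻ σ in Set.Ioo (0:ℝ) 1, ∫⁻ ρ in Set.Ioo σ 1,
        ENNReal.ofReal (12 * (R * (1 + σ)) * N ((R * (1 + σ)) • aux_om e m ρ)) := by
    refine (aux_shift (fun σ ρ => ‖fderiv ℝ g ((R * (1 + σ)) • aux_om e m ρ)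
          ((R * (1 + σ)) • aux_om' e m ρ + R • aux_om e m ρ)‖ₑ) ?_ δ hδ.2.le).trans ?_
    · refine Continuous.measurable ?_
      fun_prop
    · refine setLIntegral_mono' measurableSet_Ioo fun σ hσ => ?_
      refine lintegral_mono fun ρ => ?_
      have hσ0 := hσ.1
      rw [Real.enorm_eq_ofReal_abs]
      refine ENNReal.ofReal_le_ofReal ((hNg _ _).trans ?_)
      have hv : ‖(R * (1 + σ)) • aux_om' e m ρ + R • aux_om e m ρ‖ ≤ 2 * (R * (1 + σ)) := by
        refine (norm_add_le _ _).trans ?_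
        rw [norm_smul, norm_smul, hom, hom', Real.norm_of_nonneg hR.le,
          Real.norm_of_nonneg (by positivity)]
        nlinarith
      have := mul_le_mul_of_nonneg_left hv (mul_nonneg (by norm_num : (0:ℝ) ≤ 6)
        (hN0 ((R * (1 + σ)) • aux_om e m ρ)))
      linarith
  have S0 : R • e = (R * (1 + 0)) • aux_om e m 0 := by simp [aux_om]
  rw [S0]
  have S6 : ∫⁻ ρ in Set.Ioo 0 δ, ‖g ((R * (1 + 0)) • aux_om e m ρ)‖ₑ ≤
      (∫⁻ ρ in Set.Ioo 0 δ, ‖g ((R * (1 + (δ - ρ))) • aux_om e m δ)‖ₑ) +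
      ∫⁻ ρ in Set.Ioo 0 δ, ∫⁻ σ in Set.Ioo 0 (δ - ρ),
        ‖fderiv ℝ g ((R * (1 + σ)) • aux_om e m (ρ + σ))
          ((R * (1 + σ)) • aux_om' e m (ρ + σ) + R • aux_om e m (ρ + σ))‖ₑ := by
    rw [← lintegral_add_left (Continuous.measurable (by fun_prop))]
    exact setLIntegral_mono' measurableSet_Ioo S3
  refine S2.trans ((add_le_add S1 (S6.trans (add_le_add S4 S5))).trans ?_)
  rw [← add_assoc]
  gcongr
  rw [← two_mul]
  gcongr
  norm_num

/-- squared gradient -/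
def aux_gs (f : E3 → ℝ) (y : E3) : ℝ := ∑ l, (pd l f y) ^ 2

/-- energy density -/
def aux_EE (f : E3 → ℝ) (y : E3) : ℝ := aux_gs f y + ∑ i, aux_gs (angOp i f) y

lemma aux_gs_nonneg (f : E3 → ℝ) (y : E3) : 0 ≤ aux_gs f y :=
  Finset.sum_nonneg fun _ _ => sq_nonneg _

lemma aux_EE_nonneg (f : E3 → ℝ) (y : E3) : 0 ≤ aux_EE f y :=
  add_nonneg (aux_gs_nonneg _ _) (Finset.sum_nonneg fun _ _ => aux_gs_nonneg _ _)

lemma aux_fderiv_pd (f : E3 → ℝ) (y v : E3) : fderiv ℝ f y v = ∑ l, v l * pd l f y := by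
  have hv : v = ∑ l, v l • (EuclideanSpace.single l (1:ℝ) : E3) := by
    ext i
    fin_cases i <;> simp [Fin.sum_univ_three]
  conv_lhs => rw [hv]
  simp [pd]

lemma aux_fderiv_le (f : E3 → ℝ) (y v : E3) :
    |fderiv ℝ f y v| ≤ Real.sqrt (aux_gs f y) * ‖v‖ := by
  rw [aux_fderiv_pd]
  refine abs_le_of_sq_le_sq ?_ (by positivity)
  rw [mul_pow, Real.sq_sqrt (aux_gs_nonneg _ _), EuclideanSpace.real_norm_sq_eq, mul_comm]
  exact Finset.sum_mul_sq_le_sq_mul_sq _ _ _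

lemma aux_pd_smooth {f : E3 → ℝ} (hf : ContDiff ℝ (⊤ : ℕ∞) f) (l : Fin 3) :
    ContDiff ℝ (⊤ : ℕ∞) (pd l f) := by
  unfold pd
  exact (hf.fderiv_right (m := (⊤ : ℕ∞)) (by simp)).clm_apply contDiff_const

lemma aux_coord_smooth (i : Fin 3) : ContDiff ℝ (⊤ : ℕ∞) (fun x : E3 => x i) := by
  fun_prop

lemma aux_ang_smooth {f : E3 → ℝ} (hf : ContDiff ℝ (⊤ : ℕ∞) f) (i : Fin 3) :
    ContDiff ℝ (⊤ : ℕ∞) (angOp i f) := by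
  unfold angOp
  exact ((aux_coord_smooth _).mul (aux_pd_smooth hf _)).sub
    ((aux_coord_smooth _).mul (aux_pd_smooth hf _))

lemma aux_pd_supp {f : E3 → ℝ} (hf : HasCompactSupport f) (l : Fin 3) :
    HasCompactSupport (pd l f) :=
  hf.fderiv_apply (𝕜 := ℝ) _

lemma aux_ang_supp {f : E3 → ℝ} (hf : HasCompactSupport f) (i : Fin 3) :
    HasCompactSupport (angOp i f) := by
  unfold angOp
  exact ((aux_pd_supp hf _).mul_left).sub ((aux_pd_supp hf _).mul_left)

lemma aux_gs_cont {f : E3 → ℝ} (hf : ContDiff ℝ (⊤ : ℕ∞) f) : Continuous (aux_gs f) := by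
  unfold aux_gs
  exact continuous_finsetSum _ fun l _ => ((aux_pd_smooth hf l).continuous).pow 2

lemma aux_EE_cont {f : E3 → ℝ} (hf : ContDiff ℝ (⊤ : ℕ∞) f) : Continuous (aux_EE f) := by
  unfold aux_EE
  exact (aux_gs_cont hf).add
    (continuous_finsetSum _ fun i _ => aux_gs_cont (aux_ang_smooth hf i))

lemma aux_gs_int {f : E3 → ℝ} (hf : ContDiff ℝ (⊤ : ℕ∞) f) (hc : HasCompactSupport f) :
    Integrable (aux_gs f) := by
  unfold aux_gs
  refine integrable_finsetSum _ fun l _ => ?_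
  refine Continuous.integrable_of_hasCompactSupport ((aux_pd_smooth hf l).continuous.pow 2) ?_
  simp only [pow_two]
  exact (aux_pd_supp hc l).mul_left

lemma aux_EE_int {f : E3 → ℝ} (hf : ContDiff ℝ (⊤ : ℕ∞) f) (hc : HasCompactSupport f) :
    Integrable (aux_EE f) :=
  (aux_gs_int hf hc).add
    (integrable_finsetSum _ fun i _ => aux_gs_int (aux_ang_smooth hf i) (aux_ang_supp hc i))

/-- cross product -/
def aux_n (e m : E3) (i : Fin 3) : ℝ := e (i + 1) * m (i + 2) - e (i + 2) * m (i + 1)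

/-- angular derivative along `e × m` -/
def aux_g (f : E3 → ℝ) (e m : E3) (y : E3) : ℝ := ∑ i, aux_n e m i * angOp i f y

lemma aux_g_smooth {f : E3 → ℝ} (hf : ContDiff ℝ (⊤ : ℕ∞) f) (e m : E3) :
    ContDiff ℝ (⊤ : ℕ∞) (aux_g f e m) := by
  unfold aux_g
  exact ContDiff.sum fun i _ => contDiff_const.mul (aux_ang_smooth hf i)

lemma aux_coord_le {e : E3} (he : ‖e‖ = 1) (i : Fin 3) : |e i| ≤ 1 := by
  rw [← he]; exact PiLp.norm_apply_le e i

lemma aux_n_le {e m : E3} (he : ‖e‖ = 1) (hm : ‖m‖ = 1) (i : Fin 3) : |aux_n e m i| ≤ 2 := by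
  unfold aux_n
  refine (abs_sub _ _).trans ?_
  rw [abs_mul, abs_mul]
  have h1 := mul_le_mul (aux_coord_le he (i+1)) (aux_coord_le hm (i+2)) (abs_nonneg _) zero_le_one
  have h2 := mul_le_mul (aux_coord_le he (i+2)) (aux_coord_le hm (i+1)) (abs_nonneg _) zero_le_one
  linarith

lemma aux_Nf (f : E3 → ℝ) (y v : E3) :
    |fderiv ℝ f y v| ≤ Real.sqrt (aux_EE f y) * ‖v‖ := by
  refine (aux_fderiv_le f y v).trans ?_
  gcongr
  unfold aux_EE
  linarith [Finset.sum_nonneg fun i (_ : i ∈ Finset.univ) => aux_gs_nonneg (angOp i f) y]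

lemma aux_Ng {f : E3 → ℝ} (hf : ContDiff ℝ (⊤ : ℕ∞) f) {e m : E3} (he : ‖e‖ = 1) (hm : ‖m‖ = 1)
    (y v : E3) :
    |fderiv ℝ (aux_g f e m) y v| ≤ 6 * Real.sqrt (aux_EE f y) * ‖v‖ := by
  have h1 : fderiv ℝ (aux_g f e m) y v = ∑ i, aux_n e m i * fderiv ℝ (angOp i f) y v := by
    have hd : ∀ i, HasFDerivAt (angOp i f) (fderiv ℝ (angOp i f) y) y := fun i =>
      ((aux_ang_smooth hf i).differentiable (by simp) y).hasFDerivAt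
    have : HasFDerivAt (aux_g f e m) (∑ i, aux_n e m i • fderiv ℝ (angOp i f) y) y := by
      unfold aux_g
      exact HasFDerivAt.fun_sum fun i _ => (hd i).const_mul _
    rw [this.fderiv]
    simp
  rw [h1]
  refine (Finset.abs_sum_le_sum_abs _ _).trans ?_
  have h2 : ∀ i ∈ Finset.univ, |aux_n e m i * fderiv ℝ (angOp i f) y v| ≤
      2 * (Real.sqrt (aux_EE f y) * ‖v‖) := by
    intro i _
    rw [abs_mul]
    refine mul_le_mul (aux_n_le he hm i) ((aux_fderiv_le _ y v).trans ?_) (abs_nonneg _)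
      (by norm_num)
    gcongr
    unfold aux_EE
    have := Finset.single_le_sum (f := fun i => aux_gs (angOp i f) y)
      (fun i _ => aux_gs_nonneg (angOp i f) y) (Finset.mem_univ i)
    linarith [aux_gs_nonneg f y]
  refine (Finset.sum_le_sum h2).trans (le_of_eq ?_)
  simp
  ring

lemma aux_fg (f : E3 → ℝ) {e m : E3} (he : ∑ i, e i * e i = 1) (hm : ∑ i, m i * m i = 1)
    (hem : ∑ i, e i * m i = 0) (r ρ : ℝ) :
    fderiv ℝ f (r • aux_om e m ρ) (r • aux_om' e m ρ) = aux_g f e m (r • aux_om e m ρ) := by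
  rw [aux_fderiv_pd]
  unfold aux_g angOp aux_n
  generalize hy : r • aux_om e m ρ = y
  have hyi : ∀ i, y i = r * (Real.cos ρ * e i + Real.sin ρ * m i) := by
    intro i; rw [← hy]; simp [aux_om]; ring
  have hwi : ∀ i, (r • aux_om' e m ρ) i = r * (-Real.sin ρ * e i + Real.cos ρ * m i) := by
    intro i; simp [aux_om']; ring
  simp only [hwi, hyi]
  simp only [Fin.sum_univ_three] at *
  have a1 : (0 : Fin 3) + 1 = 1 := rfl
  have a2 : (0 : Fin 3) + 2 = 2 := rfl
  have a3 : (1 : Fin 3) + 1 = 2 := rfl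
  have a4 : (1 : Fin 3) + 2 = 0 := rfl
  have a5 : (2 : Fin 3) + 1 = 0 := rfl
  have a6 : (2 : Fin 3) + 2 = 1 := rfl
  simp only [a1, a2, a3, a4, a5, a6]
  generalize pd 0 f y = p0
  generalize pd 1 f y = p1
  generalize pd 2 f y = p2
  linear_combination (-(m 0 * p0 + m 1 * p1 + m 2 * p2) * r * Real.cos ρ) * he +
    (-(m 0 * p0 + m 1 * p1 + m 2 * p2) * r * Real.sin ρ +
      (e 0 * p0 + e 1 * p1 + e 2 * p2) * r * Real.cos ρ) * hem +
    ((e 0 * p0 + e 1 * p1 + e 2 * p2) * r * Real.sin ρ) * hm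

lemma aux_om_norm {e m : E3} (he : ‖e‖ = 1) (hm : ‖m‖ = 1) (hem : inner ℝ e m = 0) (ρ : ℝ) :
    ‖aux_om e m ρ‖ = 1 ∧ ‖aux_om' e m ρ‖ = 1 := by
  have key : ∀ a b : ℝ, a ^ 2 + b ^ 2 = 1 → ‖a • e + b • m‖ = 1 := by
    intro a b hab
    have : ‖a • e + b • m‖ ^ 2 = 1 := by
      rw [norm_add_sq_real, norm_smul, norm_smul, he, hm, inner_smul_left, inner_smul_right, hem]
      simpa using hab
    nlinarith [norm_nonneg (a • e + b • m)]
  refine ⟨key _ _ (by simp), key _ _ (by simp)⟩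

lemma aux_scalar {f : E3 → ℝ} (hf : ContDiff ℝ (⊤ : ℕ∞) f) (hc : HasCompactSupport f)
    {x : E3} (hx : x ≠ 0) {l : ℝ} (hl : 0 < l) :
    |f x| ≤ 28 * (l + l⁻¹ * (144 * ‖x‖⁻¹ * ∫ y, aux_EE f y)) := by
  have hR : 0 < ‖x‖ := norm_pos_iff.2 hx
  set R := ‖x‖ with hRdef
  obtain ⟨b, hb⟩ : ∃ b : OrthonormalBasis (Fin 3) ℝ E3, b 0 = R⁻¹ • x := by
    have hv : Orthonormal ℝ (({0} : Set (Fin 3)).domRestrict (fun _ : Fin 3 => R⁻¹ • x)) := by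
      constructor
      · intro i
        simp [norm_smul, ← hRdef, hR.ne', abs_of_pos hR]
      · intro i j hij
        exact absurd (Subsingleton.elim i j) hij
    obtain ⟨b, hb⟩ := hv.exists_orthonormalBasis_extension_of_card_eq (by simp)
    exact ⟨b, hb 0 rfl⟩
  set e := b 0 with hedef
  have hxe : x = R • e := by rw [hb, smul_smul, mul_inv_cancel₀ hR.ne', one_smul]
  set m : ℝ → E3 := fun θ => aux_om (b 1) (b 2) θ with hmdef
  have hbn : ∀ i, ‖b i‖ = 1 := b.orthonormal.1
  have hb0 : ∀ i j, i ≠ j → inner ℝ (b i) (b j) = 0 := fun i j h => b.orthonormal.2 h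
  have hmn : ∀ θ, ‖m θ‖ = 1 := fun θ =>
    (aux_om_norm (hbn 1) (hbn 2) (hb0 1 2 (by decide)) θ).1
  have hem : ∀ θ, inner ℝ e (m θ) = 0 := fun θ => by
    simp only [hmdef, aux_om, inner_add_right, inner_smul_right]
    rw [hb0 0 1 (by decide), hb0 0 2 (by decide)]; simp
  have hin : ∀ v w : E3, inner ℝ v w = ∑ i, v i * w i := fun v w => by
    simp [PiLp.inner_apply, mul_comm]
  set h : ℝ → ℝ → ℝ → ℝ := fun s ρ θ => 12 * (R * (1 + s)) *
    Real.sqrt (aux_EE f ((R * (1 + s)) • aux_om e (m θ) ρ)) with hh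
  have hEc := aux_EE_cont hf
  have hmeas : Measurable fun p : ℝ × ℝ × ℝ => h p.1 p.2.1 p.2.2 := by
    refine Continuous.measurable ?_
    simp only [hh, hmdef, aux_om]
    fun_prop
  have A := aux_avg ‖f x‖ₑ h hmeas l hl (fun θ δ hδ => by
    have hno := aux_om_norm (hbn 0) (hmn θ) (hem θ)
    have := aux_path f (aux_g f e (m θ)) (fun y => Real.sqrt (aux_EE f y)) e (m θ) R hR
      (hf.of_le (by exact_mod_cast le_top)) ((aux_g_smooth hf e (m θ)).of_le
        (by exact_mod_cast le_top)) hc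
      (fun y => Real.sqrt_nonneg _) (aux_Nf f) (aux_Ng hf (hbn 0) (hmn θ))
      (fun ρ => (hno ρ).1) (fun ρ => (hno ρ).2)
      (aux_fg f (by rw [← hin, real_inner_self_eq_norm_sq, hbn]; norm_num)
        (by rw [← hin, real_inner_self_eq_norm_sq, hmn]; norm_num) (by rw [← hin, hem]))
      δ hδ
    rw [← hxe] at this
    exact this)
  set k : E3 → ℝ≥0∞ := fun z =>
    ENNReal.ofReal (144 * R ^ 2 * aux_EE f (R • b.repr.symm z)) with hk
  have hkm : Measurable k := by
    refine ENNReal.measurable_ofReal.comp (Continuous.measurable ?_)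
    have := b.repr.symm.continuous
    fun_prop
  have B : ∫⁻ θ in Set.Ioo (-Real.pi) Real.pi, ∫⁻ s in Set.Ioi (0:ℝ), ∫⁻ ρ in Set.Ioo (0:ℝ) 1,
        ENNReal.ofReal (h s ρ θ ^ 2 * Real.sin ρ) ≤ ∫⁻ z, k z := by
    refine le_trans (le_of_eq ?_) (aux_polar_s4 k hkm)
    refine lintegral_congr fun θ => lintegral_congr fun s => lintegral_congr fun ρ => ?_
    have hy : (R * (1 + s)) • aux_om e (m θ) ρ = R • b.repr.symm
        !₂[(1 + s) * Real.cos ρ, (1 + s) * Real.sin ρ * Real.cos θ,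
          (1 + s) * Real.sin ρ * Real.sin θ] := by
      rw [← OrthonormalBasis.sum_repr_symm]
      simp only [Fin.sum_univ_three, hmdef, aux_om, hedef]
      simp only [Matrix.cons_val]
      module
    simp only [hk]
    rw [← ENNReal.ofReal_mul' (mul_nonneg (by positivity) (aux_EE_nonneg _ _)), ← hy]
    congr 1
    simp only [hh, mul_pow, Real.sq_sqrt (aux_EE_nonneg _ _)]
    ring
  have D : ∫⁻ z, k z = ENNReal.ofReal (144 * R⁻¹ * ∫ y, aux_EE f y) := by
    have hm0 : Measurable fun y => ENNReal.ofReal (aux_EE f y) :=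
      ENNReal.measurable_ofReal.comp hEc.measurable
    have hm1 : Measurable fun y => ENNReal.ofReal (aux_EE f (R • y)) :=
      hm0.comp (measurable_const_smul R)
    have d1 : ∫⁻ z, k z = ENNReal.ofReal (144 * R ^ 2) *
        ∫⁻ z, ENNReal.ofReal (aux_EE f (R • b.repr.symm z)) := by
      rw [← lintegral_const_mul' _ _ ENNReal.ofReal_ne_top]
      refine lintegral_congr fun z => ?_
      simp only [hk]
      rw [ENNReal.ofReal_mul (by positivity)]
    have d2 : ∫⁻ z, ENNReal.ofReal (aux_EE f (R • b.repr.symm z)) =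
        ∫⁻ z, ENNReal.ofReal (aux_EE f (R • z)) :=
      b.repr.symm.measurePreserving.lintegral_comp hm1
    have d3 : ∫⁻ z : E3, ENNReal.ofReal (aux_EE f (R • z)) =
        ENNReal.ofReal ((R ^ 3)⁻¹) * ∫⁻ z, ENNReal.ofReal (aux_EE f z) := by
      rw [← lintegral_map (μ := volume) (g := fun z : E3 => R • z) hm0 (measurable_const_smul R),
        Measure.map_addHaar_smul volume hR.ne', lintegral_smul_measure]
      simp [abs_of_pos hR]
    rw [d1, d2, d3, ← ofReal_integral_eq_lintegral_ofReal (aux_EE_int hf hc)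
      (Filter.Eventually.of_forall (aux_EE_nonneg f)), ← mul_assoc,
      ← ENNReal.ofReal_mul (by positivity), ← ENNReal.ofReal_mul (by positivity)]
    congr 2
    field_simp
  have hI : 0 ≤ ∫ y, aux_EE f y := integral_nonneg (aux_EE_nonneg f)
  have F : ‖f x‖ₑ ≤ ENNReal.ofReal (28 * (l + l⁻¹ * (144 * R⁻¹ * ∫ y, aux_EE f y))) := by
    refine A.trans ?_
    rw [ENNReal.ofReal_mul (by norm_num), ENNReal.ofReal_add hl.le (by positivity),
      ENNReal.ofReal_mul (by positivity), ← D]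
    have : ENNReal.ofReal 28 = 28 := by simp
    rw [this]
    gcongr
  rw [Real.enorm_eq_ofReal_abs] at F
  exact (ENNReal.ofReal_le_ofReal_iff (by positivity)).1 F

lemma aux_opt {c T : ℝ} (hT : 0 ≤ T) (h : ∀ l : ℝ, 0 < l → c ≤ 28 * (l + l⁻¹ * T)) :
    c ≤ 56 * Real.sqrt T := by
  rcases hT.eq_or_lt with h0 | h0
  · subst h0
    simp only [mul_zero, add_zero, Real.sqrt_zero] at *
    by_contra hc
    push Not at hc
    have := h (c / 56) (by positivity)
    linarith
  · have hs : 0 < Real.sqrt T := Real.sqrt_pos.2 h0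
    have := h _ hs
    have h2 : (Real.sqrt T)⁻¹ * T = Real.sqrt T := by
      rw [inv_mul_eq_iff_eq_mul₀ hs.ne', Real.mul_self_sqrt hT]
    rw [h2] at this
    linarith

lemma aux_comp_smooth {u : VF3} (hu : ContDiff ℝ (⊤ : ℕ∞) u) (j : Fin 3) :
    ContDiff ℝ (⊤ : ℕ∞) (fun z => u z j) := contDiff_pi.1 hu j

lemma aux_comp_supp {u : VF3} (hu : HasCompactSupport u) (j : Fin 3) :
    HasCompactSupport (fun z => u z j) :=
  hu.comp_left (g := fun v : Fin 3 → ℝ => v j) rfl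

lemma aux_omt_smooth {u : VF3} (hu : ContDiff ℝ (⊤ : ℕ∞) u) (i : Fin 3) :
    ContDiff ℝ (⊤ : ℕ∞) (omtV i u) := by
  refine contDiff_pi.2 fun j => ?_
  unfold omtV
  exact (aux_ang_smooth (aux_comp_smooth hu j) i).add
    (ContDiff.sum fun k _ => contDiff_const.mul (aux_comp_smooth hu k))

lemma aux_omt_supp {u : VF3} (hu : HasCompactSupport u) (i : Fin 3) :
    HasCompactSupport (omtV i u) := by
  have h : ∀ j, HasCompactSupport (fun z => omtV i u z j) := by
    intro j
    unfold omtV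
    simp only [Fin.sum_univ_three]
    exact (aux_ang_supp (aux_comp_supp hu j) i).add ((((aux_comp_supp hu 0).mul_left).add
      ((aux_comp_supp hu 1).mul_left)).add ((aux_comp_supp hu 2).mul_left))
  refine HasCompactSupport.intro (((h 0).isCompact.union (h 1).isCompact).union (h 2).isCompact)
    fun x hx => ?_
  simp only [Set.mem_union, not_or] at hx
  funext j
  have h0 := image_eq_zero_of_notMem_tsupport hx.1.1
  have h1 := image_eq_zero_of_notMem_tsupport hx.1.2
  have h2 := image_eq_zero_of_notMem_tsupport hx.2
  fin_cases j
  · exact h0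
  · exact h1
  · exact h2

/-- squared gradient of a vector field -/
def aux_D (u : VF3) (y : E3) : ℝ := ∑ l, ∑ j, (pd l (fun z => u z j) y) ^ 2

lemma aux_D_eq (u : VF3) (y : E3) : aux_D u y = ∑ j, aux_gs (fun z => u z j) y := by
  unfold aux_D aux_gs
  exact Finset.sum_comm

lemma aux_D_int {u : VF3} (hu : ContDiff ℝ (⊤ : ℕ∞) u) (hc : HasCompactSupport u) :
    Integrable (aux_D u) := by
  simp only [funext (aux_D_eq u)]
  exact integrable_finsetSum _ fun j _ => aux_gs_int (aux_comp_smooth hu j) (aux_comp_supp hc j)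

lemma aux_D_nonneg (u : VF3) (y : E3) : 0 ≤ aux_D u y :=
  Finset.sum_nonneg fun _ _ => Finset.sum_nonneg fun _ _ => sq_nonneg _

lemma aux_V_le (i j k : Fin 3) : |Vmat i j k| ≤ 1 := by
  unfold Vmat
  split_ifs <;> simp

lemma aux_pd_omt {u : VF3} (hu : ContDiff ℝ (⊤ : ℕ∞) u) (i j l : Fin 3) (y : E3) :
    pd l (fun z => omtV i u z j) y = pd l (angOp i (fun z => u z j)) y +
      ∑ k, Vmat i j k * pd l (fun z => u z k) y := by
  have hd : HasFDerivAt (angOp i (fun z => u z j)) (fderiv ℝ (angOp i (fun z => u z j)) y) y :=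
    ((aux_ang_smooth (aux_comp_smooth hu j) i).differentiable (by simp) y).hasFDerivAt
  have hk : ∀ k, HasFDerivAt (fun z => u z k) (fderiv ℝ (fun z => u z k) y) y := fun k =>
    ((aux_comp_smooth hu k).differentiable (by simp) y).hasFDerivAt
  have : HasFDerivAt (fun z => omtV i u z j) (fderiv ℝ (angOp i (fun z => u z j)) y +
      ∑ k, Vmat i j k • fderiv ℝ (fun z => u z k) y) y := by
    unfold omtV
    exact hd.add (HasFDerivAt.fun_sum fun k _ => (hk k).const_mul _)
  unfold pd
  rw [this.fderiv]
  simp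

lemma aux_sq_le (a b0 b1 b2 v0 v1 v2 : ℝ) (h0 : |v0| ≤ 1) (h1 : |v1| ≤ 1) (h2 : |v2| ≤ 1) :
    (a - (v0 * b0 + v1 * b1 + v2 * b2)) ^ 2 ≤ 4 * (a ^ 2 + (b0 ^ 2 + b1 ^ 2 + b2 ^ 2)) := by
  have key : ∀ v b : ℝ, |v| ≤ 1 → (v * b) ^ 2 ≤ b ^ 2 := by
    intro v b hv
    rw [mul_pow]
    have : v ^ 2 ≤ 1 := (sq_le_one_iff_abs_le_one v).2 hv
    nlinarith [sq_nonneg b]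
  have k0 := key v0 b0 h0
  have k1 := key v1 b1 h1
  have k2 := key v2 b2 h2
  generalize v0 * b0 = c0 at *
  generalize v1 * b1 = c1 at *
  generalize v2 * b2 = c2 at *
  nlinarith [sq_nonneg (a + c0), sq_nonneg (a + c1), sq_nonneg (a + c2), sq_nonneg (c0 - c1),
    sq_nonneg (c0 - c2), sq_nonneg (c1 - c2)]

lemma aux_EE_le {u : VF3} (hu : ContDiff ℝ (⊤ : ℕ∞) u) (j : Fin 3) (y : E3) :
    aux_EE (fun z => u z j) y ≤ 13 * (aux_D u y + ∑ i, aux_D (omtV i u) y) := by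
  have h1 : ∀ v : VF3, aux_gs (fun z => v z j) y ≤ aux_D v y := fun v => by
    rw [aux_D_eq]
    exact Finset.single_le_sum (f := fun j => aux_gs (fun z => v z j) y)
      (fun j _ => aux_gs_nonneg _ y) (Finset.mem_univ j)
  have h2 : ∀ i, aux_gs (angOp i (fun z => u z j)) y ≤
      4 * (aux_D (omtV i u) y + aux_D u y) := by
    intro i
    refine le_trans ?_ (mul_le_mul_of_nonneg_left (add_le_add_left (h1 (omtV i u)) _)
      (by norm_num))
    unfold aux_gs aux_D
    rw [← Finset.sum_add_distrib, Finset.mul_sum]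
    refine Finset.sum_le_sum fun l _ => ?_
    have := aux_pd_omt hu i j l y
    have h3 : pd l (angOp i (fun z => u z j)) y = pd l (fun z => omtV i u z j) y -
      ∑ k, Vmat i j k * pd l (fun z => u z k) y := by rw [this]; ring
    rw [h3]
    simp only [Fin.sum_univ_three]
    exact aux_sq_le _ _ _ _ _ _ _ (aux_V_le _ _ _) (aux_V_le _ _ _) (aux_V_le _ _ _)
  unfold aux_EE
  have h3 := Finset.sum_le_sum fun i (_ : i ∈ Finset.univ) => h2 i
  have h4 : ∑ i : Fin 3, 4 * (aux_D (omtV i u) y + aux_D u y) =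
    4 * ∑ i, aux_D (omtV i u) y + 12 * aux_D u y := by
    rw [← Finset.mul_sum, Finset.sum_add_distrib]; simp; ring
  have h5 : 0 ≤ ∑ i, aux_D (omtV i u) y := Finset.sum_nonneg fun i _ => aux_D_nonneg _ _
  linarith [h1 u]

lemma aux_sqrt_add {a b : ℝ} (ha : 0 ≤ a) (hb : 0 ≤ b) :
    Real.sqrt (a + b) ≤ Real.sqrt a + Real.sqrt b := by
  rw [Real.sqrt_le_left (by positivity)]
  nlinarith [Real.sq_sqrt ha, Real.sq_sqrt hb, Real.sqrt_nonneg a, Real.sqrt_nonneg b,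
    mul_nonneg (Real.sqrt_nonneg a) (Real.sqrt_nonneg b)]

lemma aux_comp_bound {u : VF3} (hu : ContDiff ℝ (⊤ : ℕ∞) u) (hc : HasCompactSupport u)
    {x : E3} (hx : x ≠ 0) (j : Fin 3) :
    Real.sqrt ‖x‖ * |u x j| ≤ 2464 *
      Real.sqrt ((∫ y, aux_D u y) + ∑ i, ∫ y, aux_D (omtV i u) y) := by
  have hR : 0 < ‖x‖ := norm_pos_iff.2 hx
  set S := (∫ y, aux_D u y) + ∑ i, ∫ y, aux_D (omtV i u) y with hS
  have hDi : ∀ i, Integrable (aux_D (omtV i u)) := fun i =>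
    aux_D_int (aux_omt_smooth hu i) (aux_omt_supp hc i)
  have hS0 : 0 ≤ S := add_nonneg (integral_nonneg (aux_D_nonneg u))
    (Finset.sum_nonneg fun i _ => integral_nonneg (aux_D_nonneg _))
  have hE : ∫ y, aux_EE (fun z => u z j) y ≤ 13 * S := by
    have e1 : 13 * S = ∫ y, 13 * (aux_D u y + ∑ i, aux_D (omtV i u) y) := by
      rw [integral_const_mul, integral_add (aux_D_int hu hc)
        (integrable_finsetSum _ fun i _ => hDi i), integral_finsetSum _ fun i _ => hDi i]
    rw [e1]
    refine integral_mono (aux_EE_int (aux_comp_smooth hu j) (aux_comp_supp hc j)) ?_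
      (aux_EE_le hu j)
    exact ((aux_D_int hu hc).add (integrable_finsetSum _ fun i _ => hDi i)).const_mul 13
  have hb : |u x j| ≤ 56 * Real.sqrt (1936 * ‖x‖⁻¹ * S) := by
    refine aux_opt (by positivity) fun l hl => ?_
    refine (aux_scalar (aux_comp_smooth hu j) (aux_comp_supp hc j) hx hl).trans ?_
    gcongr 28 * (l + l⁻¹ * ?_)
    calc 144 * ‖x‖⁻¹ * ∫ y, aux_EE (fun z => u z j) y ≤ 144 * ‖x‖⁻¹ * (13 * S) := by gcongr
      _ ≤ 1936 * ‖x‖⁻¹ * S := by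
        have : 0 ≤ ‖x‖⁻¹ * S := by positivity
        linarith
  calc Real.sqrt ‖x‖ * |u x j| ≤ Real.sqrt ‖x‖ * (56 * Real.sqrt (1936 * ‖x‖⁻¹ * S)) := by gcongr
    _ = 56 * Real.sqrt (44 ^ 2 * S) := by
      rw [mul_left_comm, ← Real.sqrt_mul hR.le]
      congr 2
      field_simp
      ring
    _ = 2464 * Real.sqrt S := by
      rw [Real.sqrt_mul (by norm_num), Real.sqrt_sq (by norm_num)]; ring

/-- there is a constant `C > 0` such that for every `u ∈ C_c^∞(ℝ³;ℝ³)` and every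
`x ≠ 0`, `|x|^{1/2} |u(x)| ≤ C (‖∇u‖_{L²} + Σᵢ ‖∇(Ω̃_i u)‖_{L²})`. -/
theorem weighted_sobolev_half_power :
    ∃ C > 0, ∀ u : VF3, ContDiff ℝ (⊤ : ℕ∞) u → HasCompactSupport u →
      ∀ x : E3, x ≠ 0 →
        ‖x‖ ^ ((1 : ℝ) / 2) * Real.sqrt (∑ j, (u x j) ^ 2) ≤
          C * ((∫ y, ∑ l, ∑ j, (pd l (fun z => u z j) y) ^ 2) ^ ((1 : ℝ) / 2)
            + ∑ i : Fin 3,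
              (∫ y, ∑ l, ∑ j, (pd l (fun z => omtV i u z j) y) ^ 2) ^ ((1 : ℝ) / 2)) := by
  refine ⟨7392, by norm_num, fun u hu hc x hx => ?_⟩
  have hb := aux_comp_bound hu hc hx
  change _ ≤ 7392 * ((∫ y, aux_D u y) ^ ((1 : ℝ) / 2)
    + ∑ i : Fin 3, (∫ y, aux_D (omtV i u) y) ^ ((1 : ℝ) / 2))
  simp only [← Real.sqrt_eq_rpow]
  have hI0 : 0 ≤ ∫ y, aux_D u y := integral_nonneg (aux_D_nonneg u)
  have hI : ∀ i, 0 ≤ ∫ y, aux_D (omtV i u) y := fun i => integral_nonneg (aux_D_nonneg _)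
  have hsq : Real.sqrt ((∫ y, aux_D u y) + ∑ i, ∫ y, aux_D (omtV i u) y) ≤
      Real.sqrt (∫ y, aux_D u y) + ∑ i : Fin 3, Real.sqrt (∫ y, aux_D (omtV i u) y) := by
    simp only [Fin.sum_univ_three]
    refine (aux_sqrt_add hI0 (add_nonneg (add_nonneg (hI 0) (hI 1)) (hI 2))).trans ?_
    have h1 := aux_sqrt_add (add_nonneg (hI 0) (hI 1)) (hI 2)
    have h2 := aux_sqrt_add (hI 0) (hI 1)
    linarith
  have hu3 : Real.sqrt (∑ j, (u x j) ^ 2) ≤ |u x 0| + |u x 1| + |u x 2| := by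
    simp only [Fin.sum_univ_three]
    refine (aux_sqrt_add (by positivity) (by positivity)).trans ?_
    refine (add_le_add_left (aux_sqrt_add (by positivity) (by positivity)) _).trans ?_
    simp only [Real.sqrt_sq_eq_abs]
    exact le_rfl
  have h3 := mul_le_mul_of_nonneg_left hu3 (Real.sqrt_nonneg ‖x‖)
  have h4 := hb 0
  have h5 := hb 1
  have h6 := hb 2
  linarith
end
end

section
/- There exists a constant C > 0 such that for every u ∈ C_c^∞(ℝ³; ℝ³) and every x ∈ ℝ³ with x ≠ 0, writing r = |x|: r |u(x)| ≤ C ( Σ_{|α| ≤ 1} ‖∂_ρ Ω̃^α u‖_{L²(|y| ≥ r)} )^{1/2} · ( Σ_{|α| ≤ 2} ‖Ω̃^α u‖_{L²(|y| ≥ r)} )^{1/2}, where ∂_ρ = (y/|y|)·∇ is the radial derivative and Ω̃^α denotes an iterated product of at most |α| of the operators Ω̃₁, Ω̃₂, Ω̃₃. -/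
open MeasureTheory

noncomputable section

/-- The radial derivative `∂_ρ = (y/|y|)·∇`, applied componentwise to a vector field. -/
noncomputable def radV (u : VF3) : VF3 := fun x j =>
  ∑ k, (x k / ‖x‖) * pd k (fun y => u y j) x

/-- The `L²` norm of a vector field over the exterior region `{|y| ≥ r}`. -/
noncomputable def l2tail (r : ℝ) (u : VF3) : ℝ :=
  (∫ y in {y : E3 | r ≤ ‖y‖}, ∑ j, (u y j) ^ 2) ^ ((1 : ℝ) / 2)

abbrev I01 : Measure ℝ := volume.restrict (Set.Icc 0 1)

lemma cs_sq {α : Type*} [MeasurableSpace α] (μ : Measure α) {f g : α → ENNReal}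
    (hf : Measurable f) (hg : Measurable g) :
    (∫⁻ x, f x * g x ∂μ) ^ 2 ≤ (∫⁻ x, f x ^ 2 ∂μ) * (∫⁻ x, g x ^ 2 ∂μ) := by
  have h := ENNReal.lintegral_mul_le_Lp_mul_Lq μ (p := 2) (q := 2)
    (by constructor <;> norm_num) hf.aemeasurable hg.aemeasurable
  have h2 := pow_le_pow_left' h 2
  rw [mul_pow] at h2
  have e : ∀ z : ENNReal, (z ^ ((1:ℝ)/2)) ^ 2 = z := by
    intro z
    rw [← ENNReal.rpow_natCast, ← ENNReal.rpow_mul]; norm_num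
  rw [e, e] at h2
  simpa using h2

lemma enorm_ftc {φ : ℝ → ℝ} (hφ : ContDiff ℝ 1 φ) {a b : ℝ} {S : Set ℝ}
    (h : Set.uIcc a b ⊆ S) :
    ‖φ b‖ₑ ≤ ‖φ a‖ₑ + ∫⁻ x in S, ‖deriv φ x‖ₑ := by
  have hd : Continuous (deriv φ) := hφ.continuous_deriv le_rfl
  have e : φ b = φ a + ∫ x in a..b, deriv φ x := by
    rw [intervalIntegral.integral_deriv_eq_sub
      (fun x _ => (hφ.differentiable one_ne_zero).differentiableAt) (hd.intervalIntegrable _ _)]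
    ring
  rw [e]
  refine (enorm_add_le _ _).trans ?_
  gcongr
  have : ‖∫ x in a..b, deriv φ x‖ₑ = ‖∫ x in Set.uIoc a b, deriv φ x‖ₑ := by
    rw [← ofReal_norm, intervalIntegral.norm_intervalIntegral_eq, ofReal_norm]
  rw [this]
  refine (enorm_integral_le_lintegral_enorm _).trans ?_
  exact lintegral_mono_set (Set.uIoc_subset_uIcc.trans h)

lemma sob1 {φ : ℝ → ℝ} (hφ : ContDiff ℝ 1 φ) {ψ : ℝ → ENNReal}
    (hψ : ∀ s, ‖deriv φ s‖ₑ ≤ 2 * ψ s) {s : ℝ} (hs : s ∈ Set.Icc (0:ℝ) 1) :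
    ‖φ s‖ₑ ^ 2 ≤ ∫⁻ σ, ‖φ σ‖ₑ * (‖φ σ‖ₑ + 4 * ψ σ) ∂I01 := by
  have h2 : ContDiff ℝ 1 (fun x => φ x ^ 2) := hφ.pow 2
  have hd : ∀ x, deriv (fun x => φ x ^ 2) x = 2 * φ x * deriv φ x := by
    intro x
    have := ((hφ.differentiable one_ne_zero) x).hasDerivAt.pow 2
    have h := this.deriv
    simp only [Nat.cast_ofNat, Nat.add_one_sub_one, pow_one] at h
    exact h
  have key : ∀ σ ∈ Set.Icc (0:ℝ) 1, ‖φ s‖ₑ ^ 2 ≤ ‖φ σ‖ₑ ^ 2 + ∫⁻ x, ‖φ x‖ₑ * (4 * ψ x) ∂I01 := by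
    intro σ hσ
    have := enorm_ftc h2 (a := σ) (b := s) (S := Set.Icc 0 1) (Set.uIcc_subset_Icc hσ hs)
    simp only [enorm_pow] at this
    refine this.trans ?_
    gcongr with x
    rw [hd, enorm_mul, enorm_mul]
    have : ‖(2:ℝ)‖ₑ = 2 := by simp [← ofReal_norm]
    rw [this]
    calc 2 * ‖φ x‖ₑ * ‖deriv φ x‖ₑ ≤ 2 * ‖φ x‖ₑ * (2 * ψ x) := by gcongr; exact hψ x
      _ = _ := by ring
  have hone : ∀ c : ENNReal, ∫⁻ σ, c ∂I01 = c := by intro c; simp [I01]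
  calc ‖φ s‖ₑ ^ 2 = ∫⁻ σ, ‖φ s‖ₑ ^ 2 ∂I01 := (hone _).symm
    _ ≤ ∫⁻ σ, (‖φ σ‖ₑ ^ 2 + ∫⁻ x, ‖φ x‖ₑ * (4 * ψ x) ∂I01) ∂I01 := by
        apply setLIntegral_mono' measurableSet_Icc key
    _ = ∫⁻ σ, ‖φ σ‖ₑ ^ 2 ∂I01 + ∫⁻ x, ‖φ x‖ₑ * (4 * ψ x) ∂I01 := by
        rw [lintegral_add_right _ measurable_const, hone]
    _ = _ := by
        rw [← lintegral_add_left (by have := hφ.continuous; fun_prop)]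
        congr 1; ext x; ring

lemma lady {F K : ℝ × ℝ → ENNReal} (hF : Measurable F) (hK : Measurable K)
    (h1 : ∀ s ∈ Set.Icc (0:ℝ) 1, ∀ t ∈ Set.Icc (0:ℝ) 1,
      F (s, t) ^ 2 ≤ ∫⁻ σ, F (σ, t) * K (σ, t) ∂I01)
    (h2 : ∀ s ∈ Set.Icc (0:ℝ) 1, ∀ t ∈ Set.Icc (0:ℝ) 1,
      F (s, t) ^ 2 ≤ ∫⁻ τ, F (s, τ) * K (s, τ) ∂I01) :
    ∫⁻ p, F p ^ 4 ∂(I01.prod I01) ≤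
      (∫⁻ p, F p ^ 2 ∂(I01.prod I01)) * (∫⁻ p, K p ^ 2 ∂(I01.prod I01)) := by
  refine le_trans ?_ (cs_sq _ hF hK)
  have hFK : Measurable (fun p => F p * K p) := hF.mul hK
  calc ∫⁻ p, F p ^ 4 ∂(I01.prod I01) = ∫⁻ s, ∫⁻ t, F (s, t) ^ 4 ∂I01 ∂I01 :=
        lintegral_prod _ (hF.pow_const 4).aemeasurable
    _ ≤ ∫⁻ s, ∫⁻ t, (∫⁻ τ, F (s, τ) * K (s, τ) ∂I01) * (∫⁻ σ, F (σ, t) * K (σ, t) ∂I01) ∂I01 ∂I01 := by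
        apply setLIntegral_mono' measurableSet_Icc
        intro s hs
        apply setLIntegral_mono' measurableSet_Icc
        intro t ht
        calc F (s, t) ^ 4 = F (s, t) ^ 2 * F (s, t) ^ 2 := by ring
          _ ≤ _ := mul_le_mul' (h2 s hs t ht) (h1 s hs t ht)
    _ = (∫⁻ s, (∫⁻ τ, F (s, τ) * K (s, τ) ∂I01) ∂I01) *
          ∫⁻ t, (∫⁻ σ, F (σ, t) * K (σ, t) ∂I01) ∂I01 := by
        rw [← lintegral_mul_const _ (Measurable.lintegral_prod_right' hFK)]
        congr 1; ext s
        rw [lintegral_const_mul _ (Measurable.lintegral_prod_left' hFK)]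
    _ = _ := by
        rw [pow_two, ← lintegral_prod _ hFK.aemeasurable, ← lintegral_prod_symm _ hFK.aemeasurable]

lemma trace_abs {r : ℝ} {F D K : ℝ × (ℝ × ℝ) → ENNReal}
    (hF : Measurable F) (hD : Measurable D) (hK : Measurable K) (hFK : ∀ p, F p ≤ K p)
    (hr2 : ∀ ρ, r ≤ ρ → ∀ q, F (ρ, q) ^ 2 ≤ ∫⁻ σ in Set.Ici r, 2 * (F (σ, q) * D (σ, q)))
    (hr3 : ∀ q, F (r, q) ^ 3 ≤ ∫⁻ σ in Set.Ici r, 3 * (F (σ, q) ^ 2 * D (σ, q)))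
    (h1 : ∀ ρ, ∀ s ∈ Set.Icc (0:ℝ) 1, ∀ t ∈ Set.Icc (0:ℝ) 1, r ≤ ρ → 
      F (ρ, s, t) ^ 2 ≤ ∫⁻ σ, F (ρ, σ, t) * K (ρ, σ, t) ∂I01)
    (h2 : ∀ ρ, ∀ s ∈ Set.Icc (0:ℝ) 1, ∀ t ∈ Set.Icc (0:ℝ) 1, r ≤ ρ → 
      F (ρ, s, t) ^ 2 ≤ ∫⁻ τ, F (ρ, s, τ) * K (ρ, s, τ) ∂I01) :
    (∫⁻ q, F (r, q) ^ 3 ∂(I01.prod I01)) ^ 4 ≤ 324 *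
      ((∫⁻ q, (∫⁻ ρ in Set.Ici r, D (ρ, q) ^ 2) ∂(I01.prod I01)) *
       (∫⁻ q, (∫⁻ ρ in Set.Ici r, K (ρ, q) ^ 2) ∂(I01.prod I01))) ^ 3 := by
  set ν := (volume : Measure ℝ).restrict (Set.Ici r) with hν
  set m := I01.prod I01 with hm
  set P := ν.prod m with hP
  have sw : ∀ G : ℝ × (ℝ × ℝ) → ENNReal, Measurable G →
      ∫⁻ q, ∫⁻ ρ, G (ρ, q) ∂ν ∂m = ∫⁻ p, G p ∂P := by
    intro G hG
    rw [hP, lintegral_prod_symm _ hG.aemeasurable]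
  rw [sw (fun p => D p ^ 2) (hD.pow_const 2), sw (fun p => K p ^ 2) (hK.pow_const 2)]
  set A := ∫⁻ p, D p ^ 2 ∂P with hA
  set B := ∫⁻ p, K p ^ 2 ∂P with hB
  have hFD : (∫⁻ p, F p * D p ∂P) ^ 2 ≤ A * B := by
    refine (cs_sq P hF hD).trans ?_
    rw [mul_comm]
    refine mul_le_mul' le_rfl (lintegral_mono fun p => ?_)
    exact pow_le_pow_left' (hFK p) 2
  set X := ∫⁻ p, F p * D p ∂P with hX
  have hN : ∀ ρ, r ≤ ρ → ∫⁻ q, F (ρ, q) ^ 2 ∂m ≤ 2 * X := by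
    intro ρ hρ
    calc ∫⁻ q, F (ρ, q) ^ 2 ∂m ≤ ∫⁻ q, ∫⁻ σ, 2 * (F (σ, q) * D (σ, q)) ∂ν ∂m :=
          lintegral_mono (fun q => hr2 ρ hρ q)
      _ = ∫⁻ p, 2 * (F p * D p) ∂P :=
          sw (fun p => 2 * (F p * D p)) (by fun_prop)
      _ = _ := lintegral_const_mul _ (by fun_prop)
  have hF4 : ∫⁻ p, F p ^ 4 ∂P ≤ 2 * X * B := by
    calc ∫⁻ p, F p ^ 4 ∂P = ∫⁻ ρ, ∫⁻ q, F (ρ, q) ^ 4 ∂m ∂ν :=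
          lintegral_prod _ (hF.pow_const 4).aemeasurable
      _ ≤ ∫⁻ ρ, 2 * X * ∫⁻ q, K (ρ, q) ^ 2 ∂m ∂ν := by
          apply setLIntegral_mono' measurableSet_Ici
          intro ρ hρ
          refine (lady (F := fun q => F (ρ, q)) (K := fun q => K (ρ, q)) (by fun_prop) (by fun_prop)
            (fun s hs t ht => h1 ρ s hs t ht hρ) (fun s hs t ht => h2 ρ s hs t ht hρ)).trans ?_
          gcongr
          exact hN ρ hρ
      _ = _ := by
          rw [lintegral_const_mul _ (Measurable.lintegral_prod_right' (hK.pow_const 2)), hB, hP,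
            lintegral_prod _ (hK.pow_const 2).aemeasurable]
  have hT : ∫⁻ q, F (r, q) ^ 3 ∂m ≤ 3 * ∫⁻ p, F p ^ 2 * D p ∂P := by
    calc ∫⁻ q, F (r, q) ^ 3 ∂m ≤ ∫⁻ q, ∫⁻ σ, 3 * (F (σ, q) ^ 2 * D (σ, q)) ∂ν ∂m :=
          lintegral_mono (fun q => hr3 q)
      _ = ∫⁻ p, 3 * (F p ^ 2 * D p) ∂P :=
          sw (fun p => 3 * (F p ^ 2 * D p)) (by fun_prop)
      _ = _ := lintegral_const_mul _ (by fun_prop)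
  have hY : (∫⁻ p, F p ^ 2 * D p ∂P) ^ 2 ≤ (2 * X * B) * A := by
    refine (cs_sq P (hF.pow_const 2) hD).trans ?_
    gcongr
    refine le_trans (le_of_eq ?_) hF4
    congr 1; ext p; ring
  calc (∫⁻ q, F (r, q) ^ 3 ∂m) ^ 4 ≤ (3 * ∫⁻ p, F p ^ 2 * D p ∂P) ^ 4 := by gcongr
    _ = 81 * ((∫⁻ p, F p ^ 2 * D p ∂P) ^ 2) ^ 2 := by ring
    _ ≤ 81 * ((2 * X * B) * A) ^ 2 := by gcongr
    _ = 324 * (X ^ 2 * (A * B) ^ 2) := by ring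
    _ ≤ 324 * ((A * B) * (A * B) ^ 2) := by gcongr
    _ = _ := by ring


lemma scaleL {c : ℝ} (hc : 0 < c) {h : ℝ → ENNReal} (hh : Measurable h) :
    ENNReal.ofReal c * ∫⁻ x, h (c * x) = ∫⁻ x, h x := by
  have e := Real.smul_map_volume_mul_left hc.ne'
  conv_rhs => rw [← e]
  rw [lintegral_smul_measure, lintegral_map hh (by fun_prop), abs_of_pos hc, smul_eq_mul]

lemma I01_eq : I01 = (volume : Measure ℝ).restrict (Set.Ioc 0 1) :=
  (Measure.restrict_congr_set Ioc_ae_eq_Icc).symm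

lemma scale01 {c : ℝ} (hc : 0 < c) (hc1 : c ≤ 1) {h : ℝ → ENNReal} (hh : Measurable h) :
    ENNReal.ofReal c * ∫⁻ x, h (c * x) ∂I01 ≤ ∫⁻ x, h x ∂I01 := by
  have h2 : Measurable ((Set.Icc (0:ℝ) 1).indicator h) := hh.indicator measurableSet_Icc
  rw [← lintegral_indicator measurableSet_Icc, ← lintegral_indicator measurableSet_Icc,
    ← scaleL hc h2]
  gcongr with x
  by_cases hx : x ∈ Set.Icc (0:ℝ) 1
  · rw [Set.indicator_of_mem hx, Set.indicator_of_mem]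
    exact ⟨mul_nonneg hc.le hx.1, mul_le_one₀ hc1 hx.1 hx.2⟩
  · rw [Set.indicator_of_notMem hx]; simp

lemma int_half : ∫⁻ η, (ENNReal.ofReal η) ^ (-(1:ℝ)/2) ∂I01 ≤ 2 := by
  rw [I01_eq]
  have hi : IntegrableOn (fun x : ℝ => x ^ (-(1:ℝ)/2)) (Set.Ioc 0 1) := by
    have := intervalIntegral.intervalIntegrable_rpow' (a := 0) (b := 1) (r := -(1:ℝ)/2) (by norm_num)
    rwa [intervalIntegrable_iff_integrableOn_Ioc_of_le zero_le_one] at this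
  have e : ∫⁻ η in Set.Ioc (0:ℝ) 1, (ENNReal.ofReal η) ^ (-(1:ℝ)/2)
      = ∫⁻ η in Set.Ioc (0:ℝ) 1, ENNReal.ofReal (η ^ (-(1:ℝ)/2)) := by
    apply setLIntegral_congr_fun measurableSet_Ioc
    intro x hx
    exact ENNReal.ofReal_rpow_of_pos hx.1
  rw [e, ← ofReal_integral_eq_lintegral_ofReal hi]
  · rw [← intervalIntegral.integral_of_le zero_le_one, integral_rpow (by left; norm_num)]
    norm_num
  · filter_upwards [ae_restrict_mem measurableSet_Ioc] with x hx
    exact Real.rpow_nonneg hx.1.le _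

/-- Morrey kernel estimate. -/
lemma fan {G : ℝ × ℝ → ENNReal} (hG : Measurable G) :
    ∫⁻ θ, ∫⁻ η, G (η, η * θ) ∂I01 ∂I01 ≤ 2 * (∫⁻ p, G p ^ 3 ∂(I01.prod I01)) ^ ((1:ℝ)/3) := by
  have hone : ∀ c : ENNReal, ∫⁻ σ, c ∂I01 = c := by intro c; simp [I01]
  have hG' : Measurable (fun p : ℝ × ℝ => G (p.1, p.1 * p.2)) := by fun_prop
  set f : ℝ × ℝ → ENNReal := fun p => (ENNReal.ofReal p.1) ^ (-(1:ℝ)/3) with hf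
  set g : ℝ × ℝ → ENNReal := fun p => (ENNReal.ofReal p.1) ^ ((1:ℝ)/3) * G (p.1, p.1 * p.2) with hg
  have hfm : Measurable f := by fun_prop
  have hgm : Measurable g := by fun_prop
  have hfg : ∫⁻ θ, ∫⁻ η, G (η, η * θ) ∂I01 ∂I01 = ∫⁻ p, (f * g) p ∂(I01.prod I01) := by
    rw [lintegral_prod_symm _ (hfm.mul hgm).aemeasurable]
    congr 1; ext θ
    rw [I01_eq]
    apply setLIntegral_congr_fun measurableSet_Ioc
    intro x hx
    simp only [hf, hg, Pi.mul_apply]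
    rw [← mul_assoc, ← ENNReal.rpow_add _ _ (by simpa using hx.1) (by simp)]
    norm_num
  rw [hfg]
  refine (ENNReal.lintegral_mul_le_Lp_mul_Lq _ (p := 3/2) (q := 3)
    (by constructor <;> norm_num) hfm.aemeasurable hgm.aemeasurable).trans ?_
  have h1 : ∫⁻ p, f p ^ ((3:ℝ)/2) ∂(I01.prod I01) ≤ 2 := by
    rw [lintegral_prod _ (by fun_prop)]
    refine le_trans (le_of_eq ?_) int_half
    congr 1; ext x
    simp only [hf]
    rw [hone, ← ENNReal.rpow_mul]; norm_num
  have h2 : ∫⁻ p, g p ^ (3:ℝ) ∂(I01.prod I01) ≤ ∫⁻ p, G p ^ 3 ∂(I01.prod I01) := by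
    rw [lintegral_prod _ (by fun_prop), lintegral_prod _ (by fun_prop)]
    conv_lhs => rw [I01_eq]
    conv_rhs => rw [I01_eq]
    apply setLIntegral_mono' measurableSet_Ioc
    intro x hx
    rw [← I01_eq]
    refine le_trans (le_of_eq ?_) (scale01 (h := fun t => G (x, t) ^ 3) hx.1 hx.2 (by fun_prop))
    rw [← lintegral_const_mul _ (by fun_prop)]
    congr 1; ext y
    simp only [hg]
    rw [ENNReal.mul_rpow_of_nonneg _ _ (by norm_num), ← ENNReal.rpow_mul]
    norm_num
  gcongr
  calc (∫⁻ p, f p ^ ((3:ℝ)/2) ∂(I01.prod I01)) ^ (1 / ((3:ℝ)/2)) ≤ 2 ^ (1 / ((3:ℝ)/2)) := by gcongr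
    _ ≤ 2 ^ (1:ℝ) := ENNReal.rpow_le_rpow_of_exponent_le (by norm_num) (by norm_num)
    _ = 2 := by simp

/-- Scalar radial derivative. -/
def rad1 (g : E3 → ℝ) (x : E3) : ℝ := ∑ k, (x k / ‖x‖) * pd k g x

def wv (R : E3 ≃ₗᵢ[ℝ] E3) (q : ℝ × ℝ) : E3 := R (!₂[1, q.1, q.2])

def om (R : E3 ≃ₗᵢ[ℝ] E3) (q : ℝ × ℝ) : E3 := ‖wv R q‖⁻¹ • wv R q

lemma wv_norm_sq (R : E3 ≃ₗᵢ[ℝ] E3) (q : ℝ × ℝ) : ‖wv R q‖ ^ 2 = 1 + q.1 ^ 2 + q.2 ^ 2 := by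
  rw [wv, R.norm_map, EuclideanSpace.norm_sq_eq, Fin.sum_univ_three]
  simp

lemma wv_one_le (R : E3 ≃ₗᵢ[ℝ] E3) (q : ℝ × ℝ) : 1 ≤ ‖wv R q‖ := by
  have := wv_norm_sq R q
  nlinarith [sq_nonneg q.1, sq_nonneg q.2, norm_nonneg (wv R q)]

lemma wv_le_two (R : E3 ≃ₗᵢ[ℝ] E3) {q : ℝ × ℝ} (h1 : q.1 ∈ Set.Icc (0:ℝ) 1)
    (h2 : q.2 ∈ Set.Icc (0:ℝ) 1) : ‖wv R q‖ ≤ 2 := by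
  have := wv_norm_sq R q
  have a : q.1 ^ 2 ≤ 1 := by nlinarith [h1.1, h1.2]
  have b : q.2 ^ 2 ≤ 1 := by nlinarith [h2.1, h2.2]
  nlinarith [norm_nonneg (wv R q)]

lemma wv_ne (R : E3 ≃ₗᵢ[ℝ] E3) (q : ℝ × ℝ) : wv R q ≠ 0 := by
  intro h
  have := wv_one_le R q
  rw [h, norm_zero] at this
  linarith

lemma om_norm (R : E3 ≃ₗᵢ[ℝ] E3) (q : ℝ × ℝ) : ‖om R q‖ = 1 := by
  rw [om, norm_smul, norm_inv, norm_norm, inv_mul_cancel₀]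
  exact norm_ne_zero_iff.2 (wv_ne R q)

lemma wv_contDiff (R : E3 ≃ₗᵢ[ℝ] E3) : ContDiff ℝ 1 (wv R) := by
  unfold wv
  apply R.contDiff.comp
  rw [contDiff_euclidean]
  intro i
  fin_cases i <;> simp <;> fun_prop

lemma om_contDiff (R : E3 ≃ₗᵢ[ℝ] E3) : ContDiff ℝ 1 (om R) := by
  unfold om
  have h := wv_contDiff R
  exact ((h.norm ℝ (wv_ne R)).inv (fun q => norm_ne_zero_iff.2 (wv_ne R q))).smul h

lemma lint_E3 (G : E3 → ENNReal) (hG : Measurable G) :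
    ∫⁻ y, G y = ∫⁻ h : ℝ, ∫⁻ a : ℝ, ∫⁻ b : ℝ, G (!₂[h, a, b]) := by
  have h1 := (EuclideanSpace.volume_preserving_symm_measurableEquiv_toLp (Fin 3)).symm
  have h2 := (volume_preserving_piFinSuccAbove (fun _ : Fin 3 => ℝ) 0).symm
  have h3 := (volume_preserving_finTwoArrow ℝ).symm
  refine (h1.lintegral_comp hG).symm.trans ?_
  refine (h2.lintegral_comp (hG.comp h1.measurable)).symm.trans ?_
  rw [Measure.volume_eq_prod, lintegral_prod _ (by
    exact ((hG.comp h1.measurable).comp h2.measurable).aemeasurable)]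
  congr 1; ext h
  rw [← h3.lintegral_comp (by
    exact ((hG.comp h1.measurable).comp h2.measurable).comp measurable_prodMk_left)]
  rw [Measure.volume_eq_prod, lintegral_prod _ (by
    exact ((((hG.comp h1.measurable).comp h2.measurable).comp measurable_prodMk_left).comp
      h3.measurable).aemeasurable)]
  congr 1; ext a; congr 1; ext b
  congr 1
  ext i
  fin_cases i <;> rfl

lemma cov (R : E3 ≃ₗᵢ[ℝ] E3) {r : ℝ} (hr : 0 < r) {F : E3 → ENNReal} (hF : Measurable F) :
    ENNReal.ofReal r ^ 2 * ∫⁻ q, (∫⁻ ρ in Set.Ici r, F (ρ • om R q)) ∂(I01.prod I01) ≤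
      8 * ∫⁻ y in {y : E3 | r ≤ ‖y‖}, F y := by
  have hS : MeasurableSet {y : E3 | r ≤ ‖y‖} := measurableSet_le measurable_const measurable_norm
  have hRm : Measurable R := R.continuous.measurable
  set Ft : E3 → ENNReal := {y : E3 | r ≤ ‖y‖}.indicator F with hFt
  have hFtm : Measurable Ft := hF.indicator hS
  have hwm : Measurable (wv R) := (wv_contDiff R).continuous.measurable
  have hom : Measurable (om R) := (om_contDiff R).continuous.measurable
  have hvec : ∀ h s t : ℝ, R (!₂[h, h * s, h * t]) = h • wv R (s, t) := by
    intro h s t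
    rw [wv, ← map_smul]
    congr 1
    ext i; fin_cases i <;> simp
  have hm3 : Measurable (fun p : ℝ × ℝ × ℝ => (!₂[p.1, p.2.1, p.2.2] : E3)) := by
    apply Continuous.measurable
    apply (PiLp.continuous_toLp 2 (fun _ : Fin 3 => ℝ)).comp
    apply continuous_pi
    intro i; fin_cases i <;> simp <;> fun_prop
  obtain ⟨G, hGdef, hmG⟩ : ∃ G : ℝ × ℝ × ℝ → ENNReal,
      (∀ h a b, Ft (R (!₂[h, a, b])) = G (h, a, b)) ∧ Measurable G :=
    ⟨fun p => Ft (R (!₂[p.1, p.2.1, p.2.2] : E3)), fun _ _ _ => rfl, hFtm.comp (hRm.comp hm3)⟩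
  have hGv : ∀ h s t, Ft (h • wv R (s, t)) = G (h, h * s, h * t) := by
    intro h s t; rw [← hvec, hGdef]
  -- step 1
  have s1 : ∫⁻ y in {y : E3 | r ≤ ‖y‖}, F y
      = ∫⁻ h : ℝ, ∫⁻ a : ℝ, ∫⁻ b : ℝ, G (h, a, b) := by
    rw [← lintegral_indicator hS, ← hFt, ← R.measurePreserving.lintegral_comp hFtm]
    simp only [← hGdef]
    exact lint_E3 _ (hFtm.comp hRm)
  have s2 : ∀ h : ℝ, 0 < h → ∫⁻ q, ENNReal.ofReal h ^ 2 * Ft (h • wv R q) ∂(I01.prod I01) ≤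
      ∫⁻ a : ℝ, ∫⁻ b : ℝ, G (h, a, b) := by
    intro h hh
    have hmh : Measurable (fun p : ℝ × ℝ => G (h, p)) := by fun_prop
    have hms : Measurable (fun q : ℝ × ℝ => ENNReal.ofReal h ^ 2 * Ft (h • wv R q)) := by fun_prop
    have hmq : Measurable (fun q : ℝ × ℝ => Ft (h • wv R q)) := by fun_prop
    rw [lintegral_prod _ hms.aemeasurable]
    calc ∫⁻ s, ∫⁻ t, ENNReal.ofReal h ^ 2 * Ft (h • wv R (s, t)) ∂I01 ∂I01
        ≤ ∫⁻ s, ∫⁻ t, ENNReal.ofReal h ^ 2 * Ft (h • wv R (s, t)) := by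
          refine (lintegral_mono' Measure.restrict_le_self (fun s => ?_))
          exact lintegral_mono' Measure.restrict_le_self le_rfl
      _ = ∫⁻ s, ENNReal.ofReal h * ∫⁻ b, G (h, h * s, b) := by
          congr 1; ext s
          have hmb : Measurable (fun b : ℝ => G (h, h * s, b)) := by fun_prop
          rw [← scaleL hh hmb]
          simp only [hGv]
          rw [lintegral_const_mul _ (by fun_prop)]
          ring
      _ = ENNReal.ofReal h * ∫⁻ s, ∫⁻ b, G (h, h * s, b) := by
          rw [lintegral_const_mul]
          exact (Measurable.lintegral_prod_right' hmh).comp (measurable_const_mul h)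
      _ = _ := scaleL hh (h := fun a => ∫⁻ b, G (h, a, b))
          (Measurable.lintegral_prod_right' hmh)
  have hmφ : Measurable (fun p : ℝ × ℝ × ℝ => ENNReal.ofReal p.1 ^ 2 * Ft (p.1 • wv R p.2)) := by
    fun_prop
  have s3 : ∫⁻ q, (∫⁻ h in Set.Ioi (0:ℝ), ENNReal.ofReal h ^ 2 * Ft (h • wv R q)) ∂(I01.prod I01)
      ≤ ∫⁻ y in {y : E3 | r ≤ ‖y‖}, F y := by
    rw [s1, lintegral_lintegral_swap (by
      exact (hmφ.comp measurable_swap).aemeasurable)]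
    refine le_trans ?_ (setLIntegral_le_lintegral (Set.Ioi 0) _)
    exact setLIntegral_mono' measurableSet_Ioi (fun h hh => s2 h hh)
  have s4 : ∀ q : ℝ × ℝ, q ∈ Set.Icc (0:ℝ) 1 ×ˢ Set.Icc (0:ℝ) 1 →
      ENNReal.ofReal r ^ 2 * ∫⁻ ρ in Set.Ici r, F (ρ • om R q) ≤
      8 * ∫⁻ h in Set.Ioi (0:ℝ), ENNReal.ofReal h ^ 2 * Ft (h • wv R q) := by
    intro q hq
    set n := ‖wv R q‖ with hn
    have hn1 : 1 ≤ n := wv_one_le R q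
    have hn2 : n ≤ 2 := wv_le_two R hq.1 hq.2
    have hn0 : 0 < n⁻¹ := by positivity
    have hmi : Measurable ((Set.Ioi (0:ℝ)).indicator
        (fun h => ENNReal.ofReal h ^ 2 * Ft (h • wv R q))) :=
      (hmφ.comp (measurable_prodMk_right (y := q))).indicator measurableSet_Ioi
    have hmF : Measurable (fun ρ : ℝ => F (ρ • om R q)) := by fun_prop
    have h8 : (1 : ENNReal) ≤ 8 * (ENNReal.ofReal n⁻¹ * ENNReal.ofReal n⁻¹ ^ 2) := by
      have hn3 : (1:ℝ)/2 ≤ n⁻¹ := by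
        rw [one_div]; exact inv_anti₀ (by linarith) hn2
      have e8 : (8:ENNReal) = ENNReal.ofReal 8 := by simp
      rw [e8, ← ENNReal.ofReal_pow hn0.le, ← ENNReal.ofReal_mul hn0.le,
        ← ENNReal.ofReal_mul (by norm_num), ← ENNReal.ofReal_one]
      apply ENNReal.ofReal_le_ofReal
      nlinarith [pow_le_pow_left₀ (by norm_num) hn3 3]
    rw [← lintegral_indicator measurableSet_Ioi, ← scaleL hn0 hmi,
      ← lintegral_indicator measurableSet_Ici, ← lintegral_const_mul _ (hmF.indicator measurableSet_Ici),
      ← mul_assoc, ← lintegral_const_mul _ (by exact hmi.comp (measurable_const_mul _))]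
    apply lintegral_mono
    intro ρ
    beta_reduce
    by_cases hρ : ρ ∈ Set.Ici r
    · have hρ' : r ≤ ρ := hρ
      have hρ0 : 0 < ρ := hr.trans_le hρ'
      rw [Set.indicator_of_mem hρ, Set.indicator_of_mem (by exact mul_pos hn0 hρ0)]
      have ev : (n⁻¹ * ρ) • wv R q = ρ • om R q := by
        rw [om, smul_smul, mul_comm]
      have eF : Ft (ρ • om R q) = F (ρ • om R q) := by
        rw [hFt, Set.indicator_of_mem]
        simp only [Set.mem_ofPred_eq]
        rw [norm_smul, om_norm, mul_one, Real.norm_eq_abs, abs_of_pos hρ0]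
        exact hρ'
      rw [ev, eF, ENNReal.ofReal_mul hn0.le]
      calc ENNReal.ofReal r ^ 2 * F (ρ • om R q) ≤ ENNReal.ofReal ρ ^ 2 * F (ρ • om R q) := by gcongr
        _ ≤ (8 * (ENNReal.ofReal n⁻¹ * ENNReal.ofReal n⁻¹ ^ 2)) * (ENNReal.ofReal ρ ^ 2 * F (ρ • om R q)) :=
          le_mul_of_one_le_left zero_le h8
        _ = _ := by ring
    · rw [Set.indicator_of_notMem hρ, mul_zero]
      exact zero_le
  have hmo : Measurable (fun q => ∫⁻ ρ in Set.Ici r, F (ρ • om R q)) := by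
    have : Measurable (fun p : (ℝ × ℝ) × ℝ => F (p.2 • om R p.1)) := by fun_prop
    exact this.lintegral_prod_right'
  have hmw : Measurable (fun q => ∫⁻ h in Set.Ioi (0:ℝ), ENNReal.ofReal h ^ 2 * Ft (h • wv R q)) := by
    have : Measurable (fun p : (ℝ × ℝ) × ℝ => ENNReal.ofReal p.2 ^ 2 * Ft (p.2 • wv R p.1)) := by
      fun_prop
    exact this.lintegral_prod_right'
  calc _ = ∫⁻ q, ENNReal.ofReal r ^ 2 * (∫⁻ ρ in Set.Ici r, F (ρ • om R q)) ∂(I01.prod I01) :=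
        (lintegral_const_mul _ hmo).symm
    _ ≤ ∫⁻ q, 8 * (∫⁻ h in Set.Ioi (0:ℝ), ENNReal.ofReal h ^ 2 * Ft (h • wv R q)) ∂(I01.prod I01) := by
        rw [I01, Measure.prod_restrict]
        exact setLIntegral_mono' (measurableSet_Icc.prod measurableSet_Icc) s4
    _ = 8 * ∫⁻ q, (∫⁻ h in Set.Ioi (0:ℝ), ENNReal.ofReal h ^ 2 * Ft (h • wv R q)) ∂(I01.prod I01) :=
        lintegral_const_mul _ hmw
    _ ≤ _ := by gcongr

lemma fderiv_expand (g : E3 → ℝ) (y τ : E3) : fderiv ℝ g y τ = ∑ k, τ k * pd k g y := by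
  have e : τ = ∑ k, τ k • (EuclideanSpace.single k (1:ℝ) : E3) := by
    ext i
    fin_cases i <;> simp [Fin.sum_univ_three]
  conv_lhs => rw [e]
  rw [map_sum]
  simp [pd]

lemma tangential (g : E3 → ℝ) (y τ : E3) (h : inner ℝ y τ = 0) (hn : ‖τ‖ ≤ 2 * ‖y‖) :
    |fderiv ℝ g y τ| ≤ 2 * ∑ i, |angOp i g y| := by
  rcases eq_or_ne y 0 with rfl | hy
  · have : τ = 0 := by
      rw [norm_zero, mul_zero] at hn
      exact norm_le_zero_iff.1 hn
    rw [this, map_zero, abs_zero]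
    positivity
  have hpos : 0 < ‖y‖ ^ 2 := by positivity
  have hn2 : ‖τ‖ ^ 2 ≤ 4 * ‖y‖ ^ 2 := by nlinarith [norm_nonneg τ, norm_nonneg y]
  rw [fderiv_expand]
  rw [EuclideanSpace.norm_sq_eq, EuclideanSpace.norm_sq_eq] at hn2
  rw [EuclideanSpace.norm_sq_eq] at hpos
  rw [PiLp.inner_apply] at h
  simp only [Fin.sum_univ_three, Real.norm_eq_abs, sq_abs, angOp] at *
  simp only [show (0:Fin 3) + 1 = 1 from rfl, show (0:Fin 3) + 2 = 2 from rfl,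
    show (1:Fin 3) + 1 = 2 from rfl, show (1:Fin 3) + 2 = 0 from rfl,
    show (2:Fin 3) + 1 = 0 from rfl, show (2:Fin 3) + 2 = 1 from rfl]
  simp only [RCLike.inner_apply, conj_trivial] at h
  generalize pd 0 g y = p0
  generalize pd 1 g y = p1
  generalize pd 2 g y = p2
  generalize y 0 = y0 at *
  generalize y 1 = y1 at *
  generalize y 2 = y2 at *
  generalize τ 0 = t0 at *
  generalize τ 1 = t1 at *
  generalize τ 2 = t2 at *
  set n := y0 ^ 2 + y1 ^ 2 + y2 ^ 2 with hnn
  have hc : ∀ c : ℝ, c ^ 2 ≤ n * (t0 ^ 2 + t1 ^ 2 + t2 ^ 2) → |c| ≤ 2 * n := by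
    intro c hc
    apply abs_le_of_sq_le_sq (by nlinarith) (by linarith)
  have c0 : |y1 * t2 - y2 * t1| ≤ 2 * n := hc _ (by
    rw [hnn]; nlinarith [sq_nonneg (y0*t0+y1*t1+y2*t2), sq_nonneg (y2*t0-y0*t2), sq_nonneg (y0*t1-y1*t0)])
  have c1 : |y2 * t0 - y0 * t2| ≤ 2 * n := hc _ (by
    rw [hnn]; nlinarith [sq_nonneg (y0*t0+y1*t1+y2*t2), sq_nonneg (y1*t2-y2*t1), sq_nonneg (y0*t1-y1*t0)])
  have c2 : |y0 * t1 - y1 * t0| ≤ 2 * n := hc _ (by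
    rw [hnn]; nlinarith [sq_nonneg (y0*t0+y1*t1+y2*t2), sq_nonneg (y1*t2-y2*t1), sq_nonneg (y2*t0-y0*t2)])
  have key : n * (t0 * p0 + t1 * p1 + t2 * p2) =
      (y1 * t2 - y2 * t1) * (y1 * p2 - y2 * p1) + (y2 * t0 - y0 * t2) * (y2 * p0 - y0 * p2)
      + (y0 * t1 - y1 * t0) * (y0 * p1 - y1 * p0) := by
    rw [hnn]; linear_combination (y0 * p0 + y1 * p1 + y2 * p2) * h
  have : n * |t0 * p0 + t1 * p1 + t2 * p2| ≤ n * (2 * (|y1 * p2 - y2 * p1| + |y2 * p0 - y0 * p2| + |y0 * p1 - y1 * p0|)) := by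
    calc n * |t0 * p0 + t1 * p1 + t2 * p2| = |n * (t0 * p0 + t1 * p1 + t2 * p2)| := by
          rw [abs_mul, abs_of_pos hpos]
      _ ≤ |y1 * t2 - y2 * t1| * |y1 * p2 - y2 * p1| + |y2 * t0 - y0 * t2| * |y2 * p0 - y0 * p2|
          + |y0 * t1 - y1 * t0| * |y0 * p1 - y1 * p0| := by
          rw [key, ← abs_mul, ← abs_mul, ← abs_mul]; exact abs_add_three _ _ _
      _ ≤ 2 * n * |y1 * p2 - y2 * p1| + 2 * n * |y2 * p0 - y0 * p2| + 2 * n * |y0 * p1 - y1 * p0| := by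
          gcongr
      _ = _ := by ring
  exact le_of_mul_le_mul_left this hpos

lemma curve_deriv (R : E3 ≃ₗᵢ[ℝ] E3) {g : E3 → ℝ} (hg : ContDiff ℝ 1 g) (ρ a b c d : ℝ)
    (hb : |b| ≤ 1) (hd : |d| ≤ 1) (η : ℝ) :
    ‖deriv (fun η => g (ρ • om R (a + b * η, c + d * η))) η‖ₑ ≤
      2 * ∑ i, ‖angOp i g (ρ • om R (a + b * η, c + d * η))‖ₑ := by
  set w : ℝ → E3 := fun η => wv R (a + b * η, c + d * η) with hw
  set o : ℝ → E3 := fun η => om R (a + b * η, c + d * η) with ho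
  have how : ∀ x, w x = ‖w x‖ • o x := by
    intro x
    simp only [hw, ho, om]
    rw [smul_smul, mul_inv_cancel₀ (norm_ne_zero_iff.2 (wv_ne R _)), one_smul]
  have hod : DifferentiableAt ℝ o η := by
    have := (om_contDiff R).differentiable one_ne_zero
    have h2 : DifferentiableAt ℝ (fun η : ℝ => (a + b * η, c + d * η)) η := by fun_prop
    exact DifferentiableAt.comp (g := om R) η this.differentiableAt h2
  have hwd : HasDerivAt w (R (!₂[0, b, d])) η := by
    have e : w = fun η => R (!₂[1, a, c]) + η • R (!₂[0, b, d]) := by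
      ext1 x
      simp only [hw, wv]
      rw [← map_smul, ← map_add]
      congr 1
      ext i; fin_cases i <;> simp [mul_comm]
    rw [e]
    simpa using ((hasDerivAt_id η).smul_const (R (!₂[0, b, d]))).const_add (R (!₂[1, a, c]))
  have hwn : ‖(R (!₂[0, b, d]) : E3)‖ ≤ 2 := by
    have : ‖(R (!₂[0, b, d]) : E3)‖ ^ 2 = b ^ 2 + d ^ 2 := by
      rw [R.norm_map, EuclideanSpace.norm_sq_eq, Fin.sum_univ_three]
      simp
    have h1 : b ^ 2 ≤ 1 := by rw [← sq_abs]; nlinarith [abs_nonneg b]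
    have h2 : d ^ 2 ≤ 1 := by rw [← sq_abs]; nlinarith [abs_nonneg d]
    nlinarith [norm_nonneg (R (!₂[0, b, d]) : E3)]
  have hnd : DifferentiableAt ℝ (fun x => ‖w x‖) η :=
    hwd.differentiableAt.norm ℝ (wv_ne R _)
  have hperp : inner ℝ (o η) (deriv o η) = 0 := by
    have h1 := hod.hasDerivAt.norm_sq
    have h2 : (fun x => ‖o x‖ ^ 2) = fun _ => (1:ℝ) := by
      ext x; simp only [ho]; rw [om_norm]; norm_num
    have h3 := h1.unique (by rw [h2]; exact hasDerivAt_const _ _)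
    linarith
  have hno : ‖o η‖ = 1 := om_norm R _
  have hdn : ‖deriv o η‖ ≤ 2 := by
    have h1 : HasDerivAt w (‖w η‖ • deriv o η + deriv (fun x => ‖w x‖) η • o η) η := by
      have := hnd.hasDerivAt.smul hod.hasDerivAt
      refine this.congr_of_eventuallyEq (Filter.Eventually.of_forall fun x => ?_)
      exact how x
    have h2 := hwd.unique h1
    have h3 : ‖(R (!₂[0, b, d]) : E3)‖ ^ 2 = ‖w η‖ ^ 2 * ‖deriv o η‖ ^ 2 + (deriv (fun x => ‖w x‖) η) ^ 2 := by
      rw [h2, @norm_add_sq_real, norm_smul, norm_smul, hno, inner_smul_left, inner_smul_right,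
        real_inner_comm, hperp]
      simp [mul_pow]
    have h4 : 1 ≤ ‖w η‖ := wv_one_le R _
    have h5 : ‖deriv o η‖ ^ 2 ≤ ‖w η‖ ^ 2 * ‖deriv o η‖ ^ 2 :=
      le_mul_of_one_le_left (by positivity) (by nlinarith)
    nlinarith [norm_nonneg (deriv o η), norm_nonneg (R (!₂[0, b, d]) : E3),
      sq_nonneg (deriv (fun x => ‖w x‖) η)]
  have hder : HasDerivAt (fun x => g (ρ • o x)) (fderiv ℝ g (ρ • o η) (ρ • deriv o η)) η := by
    exact ((hg.differentiable one_ne_zero) _).hasFDerivAt.comp_hasDerivAt η (hod.hasDerivAt.const_smul ρ)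
  have := tangential g (ρ • o η) (ρ • deriv o η)
    (by rw [inner_smul_left, inner_smul_right, hperp]; simp)
    (by rw [norm_smul, norm_smul, hno]; nlinarith [norm_nonneg ρ])
  rw [← hder.deriv] at this
  have h2 := ENNReal.ofReal_le_ofReal this
  rw [ENNReal.ofReal_mul (by norm_num), ENNReal.ofReal_sum_of_nonneg (fun _ _ => abs_nonneg _)] at h2
  simpa [← ofReal_norm] using h2

lemma radial_deriv {g : E3 → ℝ} (hg : ContDiff ℝ 1 g) {ω : E3} (hω : ‖ω‖ = 1) {ρ : ℝ} (hρ : 0 < ρ) :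
    HasDerivAt (fun ρ : ℝ => g (ρ • ω)) (rad1 g (ρ • ω)) ρ := by
  have h1 : HasDerivAt (fun ρ : ℝ => ρ • ω) ω ρ := by
    simpa using (hasDerivAt_id ρ).smul_const ω
  have := ((hg.differentiable one_ne_zero) (ρ • ω)).hasFDerivAt.comp_hasDerivAt ρ h1
  have e : rad1 g (ρ • ω) = fderiv ℝ g (ρ • ω) ω := by
    rw [fderiv_expand, rad1]
    congr 1; ext k
    rw [norm_smul, hω, mul_one, Real.norm_eq_abs, abs_of_pos hρ]
    rw [PiLp.smul_apply, smul_eq_mul]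
    field_simp
  rw [e]
  exact this

lemma pd_cont {g : E3 → ℝ} (hg : ContDiff ℝ 1 g) (k : Fin 3) : Continuous (pd k g) := by
  unfold pd
  exact (hg.continuous_fderiv one_ne_zero).clm_apply continuous_const

lemma angOp_cont {g : E3 → ℝ} (hg : ContDiff ℝ 1 g) (i : Fin 3) : Continuous (angOp i g) := by
  unfold angOp
  have h := pd_cont hg
  have h1 := h (i + 1)
  have h2 := h (i + 2)
  fun_prop

lemma rad1_meas {g : E3 → ℝ} (hg : ContDiff ℝ 1 g) : Measurable (rad1 g) := by
  unfold rad1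
  apply Finset.measurable_sum
  intro k _
  have h := (pd_cont hg k).measurable
  have h2 : Measurable (fun x : E3 => x k) := by
    have : Continuous (fun x : E3 => x k) := by fun_prop
    exact this.measurable
  fun_prop

/-- The control function `|g| + 4 Σ |Ω_i g|`. -/
def kf (g : E3 → ℝ) (y : E3) : ENNReal := ‖g y‖ₑ + 4 * ∑ i, ‖angOp i g y‖ₑ

lemma kf_meas {g : E3 → ℝ} (hg : ContDiff ℝ 1 g) : Measurable (kf g) := by
  unfold kf
  have h := fun i => (angOp_cont hg i).measurable
  have h2 := hg.continuous.measurable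
  fun_prop

lemma comp_contDiff (R : E3 ≃ₗᵢ[ℝ] E3) {g : E3 → ℝ} (hg : ContDiff ℝ 1 g) (ρ a b c d : ℝ) :
    ContDiff ℝ 1 (fun η : ℝ => g (ρ • om R (a + b * η, c + d * η))) := by
  apply hg.comp
  apply ContDiff.const_smul
  have : ContDiff ℝ 1 (fun η : ℝ => (a + b * η, c + d * η)) := by fun_prop
  exact (om_contDiff R).comp this

lemma radial_pow {g : E3 → ℝ} (hg : ContDiff ℝ 1 g) (hc : HasCompactSupport g) {ω : E3}
    (hω : ‖ω‖ = 1) {r ρ : ℝ} (hr : 0 < r) (hρ : r ≤ ρ) (n : ℕ) :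
    ‖g (ρ • ω)‖ₑ ^ (n + 1) ≤
      ∫⁻ σ in Set.Ici r, (n + 1) * (‖g (σ • ω)‖ₑ ^ n * ‖rad1 g (σ • ω)‖ₑ) := by
  have hφ : ContDiff ℝ 1 (fun ρ : ℝ => g (ρ • ω) ^ (n + 1)) := by
    apply ContDiff.pow
    apply hg.comp
    fun_prop
  obtain ⟨M, hM⟩ := hc.isCompact.isBounded.exists_norm_le
  have hz : g ((max ρ (M + 1)) • ω) = 0 := by
    by_contra hne
    have := hM _ (subset_tsupport _ hne)
    rw [norm_smul, hω, mul_one, Real.norm_eq_abs] at this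
    have h2 := le_abs_self (max ρ (M + 1))
    have h3 := le_max_right ρ (M + 1)
    linarith
  have h := enorm_ftc hφ (a := max ρ (M + 1)) (b := ρ) (S := Set.Ici r) (by
    rw [Set.uIcc_of_ge (le_max_left _ _)]
    exact fun x hx => hρ.trans hx.1)
  rw [hz] at h
  simp only [enorm_pow] at h
  rw [enorm_zero, zero_pow (by omega), zero_add] at h
  refine h.trans ?_
  apply setLIntegral_mono' measurableSet_Ici
  intro σ hσ
  have hσ0 : 0 < σ := hr.trans_le hσ
  have hd := (radial_deriv hg hω hσ0).pow (n + 1)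
  have hd2 : deriv (fun ρ : ℝ => g (ρ • ω) ^ (n + 1)) σ = _ := hd.deriv
  rw [hd2, enorm_mul, enorm_mul, Nat.add_sub_cancel, enorm_pow]
  have : ‖((n + 1 : ℕ) : ℝ)‖ₑ = (n + 1 : ENNReal) := by
    rw [← ofReal_norm, Real.norm_natCast, ENNReal.ofReal_natCast]; push_cast; rfl
  rw [this, mul_assoc]

lemma trace_main (R : E3 ≃ₗᵢ[ℝ] E3) {g : E3 → ℝ} (hg : ContDiff ℝ 1 g)
    (hc : HasCompactSupport g) {r : ℝ} (hr : 0 < r) :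
    ENNReal.ofReal r ^ 12 * (∫⁻ q, ‖g (r • om R q)‖ₑ ^ 3 ∂(I01.prod I01)) ^ 4 ≤
      324 * 64 ^ 3 * ((∫⁻ y in {y : E3 | r ≤ ‖y‖}, ‖rad1 g y‖ₑ ^ 2) *
        (∫⁻ y in {y : E3 | r ≤ ‖y‖}, kf g y ^ 2)) ^ 3 := by
  have hom : Measurable (om R) := (om_contDiff R).continuous.measurable
  have hgm := hg.continuous.measurable
  have hrm := rad1_meas hg
  have hkm := kf_meas hg
  have T := trace_abs (r := r) (F := fun p => ‖g (p.1 • om R p.2)‖ₑ)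
    (D := fun p => ‖rad1 g (p.1 • om R p.2)‖ₑ) (K := fun p => kf g (p.1 • om R p.2))
    (by fun_prop) (by fun_prop) (by fun_prop) (fun p => le_self_add)
    (fun ρ hρ q => by
      have := radial_pow hg hc (om_norm R q) hr hρ 1
      norm_num at this
      exact this)
    (fun q => by
      have := radial_pow hg hc (om_norm R q) hr le_rfl 2
      norm_num at this
      exact this)
    (fun ρ s hs t ht _ => by
      have := sob1 (comp_contDiff R hg ρ 0 1 t 0) (curve_deriv R hg ρ 0 1 t 0 (by simp) (by simp)) hs
      simpa [kf] using this)
    (fun ρ s hs t ht _ => by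
      have := sob1 (comp_contDiff R hg ρ s 0 0 1) (curve_deriv R hg ρ s 0 0 1 (by simp) (by simp)) ht
      simpa [kf] using this)
  have c1 := cov R hr (F := fun y => ‖rad1 g y‖ₑ ^ 2) (by fun_prop)
  have c2 := cov R hr (F := fun y => kf g y ^ 2) (by fun_prop)
  calc _ ≤ ENNReal.ofReal r ^ 12 * (324 *
      ((∫⁻ q, (∫⁻ ρ in Set.Ici r, ‖rad1 g (ρ • om R q)‖ₑ ^ 2) ∂(I01.prod I01)) *
       (∫⁻ q, (∫⁻ ρ in Set.Ici r, kf g (ρ • om R q) ^ 2) ∂(I01.prod I01))) ^ 3) := by gcongr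
    _ = 324 * ((ENNReal.ofReal r ^ 2 * (∫⁻ q, (∫⁻ ρ in Set.Ici r, ‖rad1 g (ρ • om R q)‖ₑ ^ 2) ∂(I01.prod I01))) *
       (ENNReal.ofReal r ^ 2 * (∫⁻ q, (∫⁻ ρ in Set.Ici r, kf g (ρ • om R q) ^ 2) ∂(I01.prod I01)))) ^ 3 := by ring
    _ ≤ 324 * ((8 * ∫⁻ y in {y : E3 | r ≤ ‖y‖}, ‖rad1 g y‖ₑ ^ 2) *
        (8 * ∫⁻ y in {y : E3 | r ≤ ‖y‖}, kf g y ^ 2)) ^ 3 := by gcongr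
    _ = _ := by ring

lemma morrey_main (R : E3 ≃ₗᵢ[ℝ] E3) {f : E3 → ℝ} (hf : ContDiff ℝ 1 f) (r : ℝ) :
    ‖f (r • om R (0, 0))‖ₑ ≤ 2 * (∫⁻ q, ‖f (r • om R q)‖ₑ ^ 3 ∂(I01.prod I01)) ^ ((1:ℝ)/3) +
      2 * ∑ i, 2 * (∫⁻ q, ‖angOp i f (r • om R q)‖ₑ ^ 3 ∂(I01.prod I01)) ^ ((1:ℝ)/3) := by
  have hom : Measurable (om R) := (om_contDiff R).continuous.measurable
  have hfm := hf.continuous.measurable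
  have ham := fun i => (angOp_cont hf i).measurable
  have hone : ∀ c : ENNReal, ∫⁻ σ, c ∂I01 = c := by intro c; simp [I01]
  have key : ∀ θ ∈ Set.Icc (0:ℝ) 1, ‖f (r • om R (0, 0))‖ₑ ≤
      ∫⁻ η, (‖f (r • om R (η, η * θ))‖ₑ + 2 * ∑ i, ‖angOp i f (r • om R (η, η * θ))‖ₑ) ∂I01 := by
    intro θ hθ
    have hφ := comp_contDiff R hf r 0 1 0 θ
    have hd := curve_deriv R hf r 0 1 0 θ (by simp) (by rw [abs_le]; constructor <;> linarith [hθ.1, hθ.2])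
    set φ : ℝ → ℝ := fun η => f (r • om R (0 + 1 * η, 0 + θ * η)) with hφd
    have hψ : ContDiff ℝ 1 (fun η : ℝ => (1 - η) * φ η) := by fun_prop
    have h := enorm_ftc hψ (a := 1) (b := 0) (S := Set.Icc 0 1) (by
      rw [Set.uIcc_of_ge zero_le_one])
    simp only [sub_zero, one_mul, sub_self, zero_mul, enorm_zero, zero_add] at h
    have e0 : φ 0 = f (r • om R (0, 0)) := by simp [hφd]
    rw [e0] at h
    refine h.trans ?_
    apply setLIntegral_mono' measurableSet_Icc
    intro η hη
    have hdd : HasDerivAt (fun η : ℝ => (1 - η) * φ η) ((-1) * φ η + (1 - η) * deriv φ η) η := by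
      apply HasDerivAt.mul
      · simpa using (hasDerivAt_id η).const_sub 1
      · exact ((hφ.differentiable one_ne_zero) η).hasDerivAt
    rw [hdd.deriv]
    refine (enorm_add_le _ _).trans ?_
    have e1 : ∀ η, om R (0 + 1 * η, 0 + θ * η) = om R (η, η * θ) := by intro η; simp [mul_comm]
    rw [enorm_mul, enorm_mul]
    have e2 : ‖(-1:ℝ)‖ₑ = 1 := by simp [← ofReal_norm]
    have e3 : ‖1 - η‖ₑ ≤ 1 := by
      rw [← ofReal_norm, Real.norm_eq_abs, ← ENNReal.ofReal_one]
      apply ENNReal.ofReal_le_ofReal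
      rw [abs_le]; constructor <;> linarith [hη.1, hη.2]
    rw [e2, one_mul]
    have hdη := hd η
    rw [e1] at hdη
    have e4 : φ η = f (r • om R (η, η * θ)) := by simp only [hφd, e1]
    rw [e4]
    refine add_le_add le_rfl ?_
    calc ‖1 - η‖ₑ * ‖deriv φ η‖ₑ ≤ 1 * _ := mul_le_mul' e3 hdη
      _ = _ := one_mul _
  have hm1 : Measurable (fun p : ℝ × ℝ => ‖f (r • om R (p.2, p.2 * p.1))‖ₑ) := by fun_prop
  have hm2 : ∀ i, Measurable (fun p : ℝ × ℝ => ‖angOp i f (r • om R (p.2, p.2 * p.1))‖ₑ) := by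
    intro i; fun_prop
  calc ‖f (r • om R (0, 0))‖ₑ = ∫⁻ θ, ‖f (r • om R (0, 0))‖ₑ ∂I01 := (hone _).symm
    _ ≤ ∫⁻ θ, ∫⁻ η, (‖f (r • om R (η, η * θ))‖ₑ + 2 * ∑ i, ‖angOp i f (r • om R (η, η * θ))‖ₑ) ∂I01 ∂I01 :=
        setLIntegral_mono' measurableSet_Icc key
    _ = ∫⁻ θ, ∫⁻ η, ‖f (r • om R (η, η * θ))‖ₑ ∂I01 ∂I01 +
        2 * ∑ i, ∫⁻ θ, ∫⁻ η, ‖angOp i f (r • om R (η, η * θ))‖ₑ ∂I01 ∂I01 := by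
        have : ∀ θ, ∫⁻ η, (‖f (r • om R (η, η * θ))‖ₑ + 2 * ∑ i, ‖angOp i f (r • om R (η, η * θ))‖ₑ) ∂I01
            = ∫⁻ η, ‖f (r • om R (η, η * θ))‖ₑ ∂I01 + 2 * ∑ i, ∫⁻ η, ‖angOp i f (r • om R (η, η * θ))‖ₑ ∂I01 := by
          intro θ
          rw [lintegral_add_left (by fun_prop), lintegral_const_mul _ (by fun_prop),
            lintegral_finsetSum _ (fun i _ => by fun_prop)]
        simp only [this]
        have hs := fun i => (hm2 i).lintegral_prod_right' (ν := I01)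
        rw [lintegral_add_left (hm1.lintegral_prod_right'), lintegral_const_mul _ (by fun_prop),
            lintegral_finsetSum _ (fun i _ => hs i)]
    _ ≤ _ := by
        gcongr with i
        · exact fan (G := fun q => ‖f (r • om R q)‖ₑ) (by fun_prop)
        · exact fan (G := fun q => ‖angOp i f (r • om R q)‖ₑ) (by fun_prop)

/-- Tail `L²` norm for `ENNReal`-valued functions. -/
def NN (r : ℝ) (k : E3 → ENNReal) : ENNReal :=
  (∫⁻ y in {y : E3 | r ≤ ‖y‖}, k y ^ 2) ^ ((1:ℝ)/2)

lemma NN_mono {r : ℝ} {k k' : E3 → ENNReal} (h : ∀ y, k y ≤ k' y) : NN r k ≤ NN r k' := by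
  unfold NN
  gcongr with y
  exact h y

lemma NN_add {r : ℝ} {k k' : E3 → ENNReal} (hk : Measurable k) (hk' : Measurable k') :
    NN r (fun y => k y + k' y) ≤ NN r k + NN r k' := by
  have := ENNReal.lintegral_Lp_add_le (μ := volume.restrict {y : E3 | r ≤ ‖y‖}) (p := 2)
    hk.aemeasurable hk'.aemeasurable (by norm_num)
  simpa [NN] using this

lemma NN_mul {r : ℝ} {k : E3 → ENNReal} (hk : Measurable k) (c : ENNReal) :
    NN r (fun y => c * k y) = c * NN r k := by
  unfold NN
  simp only [mul_pow]
  rw [lintegral_const_mul _ (by fun_prop), ENNReal.mul_rpow_of_nonneg _ _ (by norm_num)]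
  congr 1
  rw [← ENNReal.rpow_natCast, ← ENNReal.rpow_mul]; norm_num

lemma NN_sum3 {r : ℝ} {k : Fin 3 → E3 → ENNReal} (hk : ∀ i, Measurable (k i)) :
    NN r (fun y => ∑ i, k i y) ≤ ∑ i, NN r (k i) := by
  simp only [Fin.sum_univ_three]
  have h0 := hk 0
  have h1 := hk 1
  have h2 := hk 2
  refine (NN_add (by fun_prop) (by fun_prop)).trans ?_
  gcongr
  exact NN_add (by fun_prop) (by fun_prop)

lemma trace_root (R : E3 ≃ₗᵢ[ℝ] E3) {g : E3 → ℝ} (hg : ContDiff ℝ 1 g)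
    (hc : HasCompactSupport g) {r : ℝ} (hr : 0 < r) :
    ENNReal.ofReal r * (∫⁻ q, ‖g (r • om R q)‖ₑ ^ 3 ∂(I01.prod I01)) ^ ((1:ℝ)/3) ≤
      5 * NN r (fun y => ‖rad1 g y‖ₑ) ^ ((1:ℝ)/2) * NN r (kf g) ^ ((1:ℝ)/2) := by
  have h := trace_main R hg hc hr
  unfold NN
  generalize (∫⁻ q, ‖g (r • om R q)‖ₑ ^ 3 ∂(I01.prod I01)) = X at *
  generalize (∫⁻ y in {y : E3 | r ≤ ‖y‖}, ‖rad1 g y‖ₑ ^ 2) = A at *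
  generalize (∫⁻ y in {y : E3 | r ≤ ‖y‖}, kf g y ^ 2) = B at *
  have e : ∀ (z : ENNReal) (a b c : ℝ), a * b = c → (z ^ a) ^ b = z ^ c := by
    intro z a b c h; rw [← ENNReal.rpow_mul, h]
  have h2 : (ENNReal.ofReal r * X ^ ((1:ℝ)/3)) ^ (12:ℝ) ≤
      (5 * (A ^ ((1:ℝ)/2)) ^ ((1:ℝ)/2) * (B ^ ((1:ℝ)/2)) ^ ((1:ℝ)/2)) ^ (12:ℝ) := by
    simp only [ENNReal.mul_rpow_of_nonneg _ _ (show (0:ℝ) ≤ 12 by norm_num)]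
    rw [e X _ _ 4 (by norm_num), e A _ _ (1/4) (by norm_num), e B _ _ (1/4) (by norm_num),
      e A _ _ 3 (by norm_num), e B _ _ 3 (by norm_num)]
    have n12 : ∀ z : ENNReal, z ^ (12:ℝ) = z ^ 12 := fun z => by exact_mod_cast ENNReal.rpow_natCast z 12
    have n4 : ∀ z : ENNReal, z ^ (4:ℝ) = z ^ 4 := fun z => by exact_mod_cast ENNReal.rpow_natCast z 4
    have n3 : ∀ z : ENNReal, z ^ (3:ℝ) = z ^ 3 := fun z => by exact_mod_cast ENNReal.rpow_natCast z 3
    rw [n12, n12, n4, n3, n3]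
    refine h.trans ?_
    rw [mul_pow, ← mul_assoc]
    gcongr
    norm_num
  exact (ENNReal.rpow_le_rpow_iff (by norm_num)).1 h2

lemma exists_rot {x : E3} (hx : x ≠ 0) : ∃ R : E3 ≃ₗᵢ[ℝ] E3, ‖x‖ • om R (0, 0) = x := by
  have hn : ‖x‖ ≠ 0 := norm_ne_zero_iff.2 hx
  have h0 : ‖(!₂[1, 0, 0] : E3)‖ = ‖‖x‖⁻¹ • x‖ := by
    rw [norm_smul, norm_inv, norm_norm, inv_mul_cancel₀ hn, EuclideanSpace.norm_eq]
    simp [Fin.sum_univ_three]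
  refine ⟨(ℝ ∙ ((!₂[1, 0, 0] : E3) - ‖x‖⁻¹ • x))ᗮ.reflection, ?_⟩
  unfold om wv
  simp only
  rw [Submodule.reflection_sub h0, norm_smul, norm_inv, norm_norm, inv_mul_cancel₀ hn, inv_one, one_smul,
    smul_smul, mul_inv_cancel₀ hn, one_smul]

/-- Smooth with compact support. -/
def Good (g : E3 → ℝ) : Prop := ContDiff ℝ (⊤ : ℕ∞) g ∧ HasCompactSupport g

lemma Good.c1 {g : E3 → ℝ} (h : Good g) : ContDiff ℝ 1 g := h.1.of_le (by
  exact_mod_cast le_top)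

lemma Good.pd {g : E3 → ℝ} (h : Good g) (k : Fin 3) : Good (pd k g) := by
  refine ⟨?_, ?_⟩
  · unfold _root_.pd
    exact (h.1.fderiv_right (m := (⊤ : ℕ∞)) (by simp)).clm_apply contDiff_const
  · refine (h.2.fderiv ℝ).mono ?_
    intro y hy hz
    apply hy
    simp only [_root_.pd]
    rw [hz]; rfl

lemma Good.ang {g : E3 → ℝ} (h : Good g) (i : Fin 3) : Good (angOp i g) := by
  refine ⟨?_, ?_⟩
  · unfold angOp
    have h1 := (h.pd (i + 1)).1
    have h2 := (h.pd (i + 2)).1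
    fun_prop
  · refine (h.2.fderiv ℝ).mono ?_
    intro y hy hz
    apply hy
    simp only [angOp, _root_.pd]
    rw [hz]; simp

def VGood (v : VF3) : Prop := ∀ j, Good (fun y => v y j)

lemma VGood.omt {v : VF3} (h : VGood v) (i : Fin 3) : VGood (omtV i v) := by
  intro j
  have h1 := (h j).ang i
  refine ⟨?_, ?_⟩
  · unfold omtV
    have h2 := fun k => (h k).1
    exact h1.1.add (ContDiff.sum fun k _ => contDiff_const.mul (h2 k))
  · unfold omtV
    refine h1.2.add ?_
    simp only [Fin.sum_univ_three]
    exact (((h 0).2.mul_left).add ((h 1).2.mul_left)).add ((h 2).2.mul_left)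

lemma comp_le {r : ℝ} {v : VF3} (hi : IntegrableOn (fun y => ∑ j, (v y j) ^ 2) {y : E3 | r ≤ ‖y‖})
    (j : Fin 3) : NN r (fun y => ‖v y j‖ₑ) ≤ ENNReal.ofReal (l2tail r v) := by
  have hnn : ∀ y, 0 ≤ ∑ j, (v y j) ^ 2 := fun y => Finset.sum_nonneg fun _ _ => sq_nonneg _
  unfold l2tail NN
  rw [← ENNReal.ofReal_rpow_of_nonneg (integral_nonneg hnn) (by norm_num)]
  gcongr
  rw [ofReal_integral_eq_lintegral_ofReal hi (Filter.Eventually.of_forall hnn)]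
  gcongr with y
  beta_reduce
  rw [← ofReal_norm, ← ENNReal.ofReal_pow (norm_nonneg _), Real.norm_eq_abs, sq_abs]
  apply ENNReal.ofReal_le_ofReal
  exact Finset.single_le_sum (f := fun j => (v y j) ^ 2) (fun _ _ => sq_nonneg _) (Finset.mem_univ j)

lemma good_int {v : VF3} (h : VGood v) (r : ℝ) :
    IntegrableOn (fun y => ∑ j, (v y j) ^ 2) {y : E3 | r ≤ ‖y‖} := by
  apply Integrable.integrableOn
  apply integrable_finsetSum
  intro j _
  have hc := (h j).1.continuous
  refine (hc.pow 2).integrable_of_hasCompactSupport ?_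
  simp only [pow_two]
  exact (h j).2.mul_left

lemma rad1_abs (g : E3 → ℝ) (y : E3) : |rad1 g y| ≤ ∑ k, |pd k g y| := by
  unfold rad1
  refine (Finset.abs_sum_le_sum_abs _ _).trans ?_
  refine Finset.sum_le_sum fun k _ => ?_
  rw [abs_mul, abs_div, abs_norm]
  refine mul_le_of_le_one_left (abs_nonneg _) ?_
  apply div_le_one_of_le₀ _ (norm_nonneg _)
  exact PiLp.norm_apply_le y k

lemma rad_int {v : VF3} (h : VGood v) (r : ℝ) :
    IntegrableOn (fun y => ∑ j, (radV v y j) ^ 2) {y : E3 | r ≤ ‖y‖} := by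
  apply Integrable.integrableOn
  apply integrable_finsetSum
  intro j _
  have hp := fun k => (h j).pd k
  have hcp := fun k => (hp k).1.continuous
  have hI : Integrable (fun y => (∑ k, |pd k (fun y => v y j) y|) ^ 2) := by
    have hcont : Continuous (fun y => (∑ k, |pd k (fun y => v y j) y|) ^ 2) := by fun_prop
    refine hcont.integrable_of_hasCompactSupport ?_
    refine ((h j).2.fderiv ℝ).mono ?_
    intro y hy hz
    apply hy
    simp only [pd]
    rw [hz]; simp
  refine hI.mono' ?_ ?_
  · have := rad1_meas (h j).c1
    exact (this.pow_const 2).aestronglyMeasurable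
  · refine Filter.Eventually.of_forall fun y => ?_
    rw [Real.norm_eq_abs, abs_pow]
    gcongr
    exact rad1_abs (fun y => v y j) y

lemma Vmat_abs (i j k : Fin 3) : ‖Vmat i j k‖ₑ ≤ 1 := by
  unfold Vmat
  split_ifs <;> simp

lemma ang_eq (i j : Fin 3) (v : VF3) :
    angOp i (fun y => v y j) = fun y => omtV i v y j - ∑ k, Vmat i j k * v y k := by
  ext y; simp [omtV]

lemma enorm_comb_le (a : ℝ) (i j : Fin 3) (w : Fin 3 → ℝ) :
    ‖a - ∑ k, Vmat i j k * w k‖ₑ ≤ ‖a‖ₑ + ∑ k, ‖w k‖ₑ := by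
  refine enorm_sub_le.trans ?_
  gcongr
  refine (enorm_sum_le _ _).trans ?_
  gcongr with k
  rw [enorm_mul]
  exact mul_le_of_le_one_left zero_le (Vmat_abs i j k)

lemma pd_comb (l i j : Fin 3) {v : VF3} (h : VGood v) (y : E3) :
    pd l (angOp i (fun y => v y j)) y =
      pd l (fun y => omtV i v y j) y - ∑ k, Vmat i j k * pd l (fun y => v y k) y := by
  rw [ang_eq]
  have hd : ∀ {g : E3 → ℝ}, Good g → DifferentiableAt ℝ g y := fun hg =>
    (hg.c1.differentiable one_ne_zero) y
  have hv := fun k => hd (h k)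
  have hw := hd (h.omt i j)
  have h0 := (hv 0).hasFDerivAt.const_mul (Vmat i j 0)
  have h1 := (hv 1).hasFDerivAt.const_mul (Vmat i j 1)
  have h2 := (hv 2).hasFDerivAt.const_mul (Vmat i j 2)
  have H := hw.hasFDerivAt.sub ((h0.add h1).add h2)
  unfold pd
  simp only [Fin.sum_univ_three]
  have H2 := congrArg (fun L => L (EuclideanSpace.single l (1:ℝ))) H.fderiv
  exact H2

lemma rad_comb (i j : Fin 3) {v : VF3} (h : VGood v) (y : E3) :
    rad1 (angOp i (fun y => v y j)) y =
      radV (omtV i v) y j - ∑ k, Vmat i j k * radV v y k := by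
  simp only [rad1, radV, pd_comb _ i j h, Fin.sum_univ_three]
  ring

lemma ang_comb (l i j : Fin 3) {v : VF3} (h : VGood v) (y : E3) :
    angOp l (angOp i (fun y => v y j)) y =
      angOp l (fun y => omtV i v y j) y - ∑ k, Vmat i j k * angOp l (fun y => v y k) y := by
  simp only [angOp, Fin.sum_univ_three]
  have := fun l => pd_comb l i j h y
  simp only [Fin.sum_univ_three] at this
  rw [this, this]
  ring

lemma enorm_meas {g : E3 → ℝ} (hg : Continuous g) : Measurable (fun y => ‖g y‖ₑ) := by
  have := hg.measurable
  fun_prop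

lemma kf_NN {g : E3 → ℝ} (hg : Good g) {r : ℝ} {b c : ENNReal} (h0 : NN r (fun y => ‖g y‖ₑ) ≤ b)
    (h1 : ∀ i, NN r (fun y => ‖angOp i g y‖ₑ) ≤ c) : NN r (kf g) ≤ b + 12 * c := by
  have m0 := enorm_meas hg.c1.continuous
  have m1 := fun i => enorm_meas (angOp_cont hg.c1 i)
  unfold kf
  refine (NN_add m0 (by fun_prop)).trans ?_
  rw [NN_mul (by fun_prop)]
  have h3 : NN r (fun y => ∑ i, ‖angOp i g y‖ₑ) ≤ 3 * c := by
    refine (NN_sum3 m1).trans ?_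
    refine (Finset.sum_le_sum fun i _ => h1 i).trans ?_
    simp
  calc _ ≤ b + 4 * (3 * c) := by gcongr
    _ = _ := by ring

lemma comb_NN {r : ℝ} {h a : E3 → ENNReal} {w : Fin 3 → E3 → ENNReal} (ha : Measurable a)
    (hw : ∀ k, Measurable (w k)) (hle : ∀ y, h y ≤ a y + ∑ k, w k y) {b c : ENNReal}
    (h0 : NN r a ≤ b) (h1 : ∀ k, NN r (w k) ≤ c) : NN r h ≤ b + 3 * c := by
  refine (NN_mono hle).trans ((NN_add ha (by fun_prop)).trans ?_)
  gcongr
  refine (NN_sum3 hw).trans ?_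
  refine (Finset.sum_le_sum fun i _ => h1 i).trans ?_
  simp

lemma ang_NN {v : VF3} (hv : VGood v) {r : ℝ} {b : ENNReal}
    (h0 : ENNReal.ofReal (l2tail r v) ≤ b) {i : Fin 3}
    (h1 : ENNReal.ofReal (l2tail r (omtV i v)) ≤ b) (j : Fin 3) :
    NN r (fun y => ‖angOp i (fun y => v y j) y‖ₑ) ≤ 4 * b := by
  have := comb_NN (r := r) (h := fun y => ‖angOp i (fun y => v y j) y‖ₑ)
    (a := fun y => ‖omtV i v y j‖ₑ) (w := fun k y => ‖v y k‖ₑ) (b := b) (c := b)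
    (enorm_meas (hv.omt i j).c1.continuous) (fun k => enorm_meas (hv k).c1.continuous)
    (fun y => by rw [ang_eq]; exact enorm_comb_le _ i j _)
    ((comp_le (good_int (hv.omt i) r) j).trans h1)
    (fun k => (comp_le (good_int hv r) k).trans h0)
  refine this.trans (le_of_eq ?_)
  ring

lemma l2tail_nonneg (r : ℝ) (v : VF3) : 0 ≤ l2tail r v := by
  unfold l2tail
  apply Real.rpow_nonneg
  exact integral_nonneg fun y => Finset.sum_nonneg fun _ _ => sq_nonneg _

lemma vec_main {u : VF3} (hu : VGood u) {x : E3} (hx : x ≠ 0) {a b : ENNReal}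
    (ha0 : ENNReal.ofReal (l2tail ‖x‖ (radV u)) ≤ a)
    (ha1 : ∀ i, ENNReal.ofReal (l2tail ‖x‖ (radV (omtV i u))) ≤ a)
    (hb0 : ENNReal.ofReal (l2tail ‖x‖ u) ≤ b)
    (hb1 : ∀ i, ENNReal.ofReal (l2tail ‖x‖ (omtV i u)) ≤ b)
    (hb2 : ∀ i j, ENNReal.ofReal (l2tail ‖x‖ (omtV i (omtV j u))) ≤ b) (j : Fin 3) :
    ENNReal.ofReal ‖x‖ * ‖u x j‖ₑ ≤ 1750 * (a ^ ((1:ℝ)/2) * b ^ ((1:ℝ)/2)) := by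
  obtain ⟨R, hR⟩ := exists_rot hx
  have hr : 0 < ‖x‖ := norm_pos_iff.2 hx
  set r := ‖x‖ with hrdef
  set f : E3 → ℝ := fun y => u y j with hf
  have hfg : Good f := hu j
  have hA := fun i => hfg.ang i
  have M := morrey_main R hfg.c1 r
  rw [hR] at M
  -- norms
  have n0 : NN r (fun y => ‖rad1 f y‖ₑ) ≤ a := (comp_le (rad_int hu r) j).trans ha0
  have n1 : ∀ i, NN r (fun y => ‖rad1 (angOp i f) y‖ₑ) ≤ 4 * a := by
    intro i
    have := comb_NN (r := r) (h := fun y => ‖rad1 (angOp i f) y‖ₑ)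
      (a := fun y => ‖radV (omtV i u) y j‖ₑ) (w := fun k y => ‖radV u y k‖ₑ) (b := a) (c := a)
      (rad1_meas (hu.omt i j).c1).enorm (fun k => (rad1_meas (hu k).c1).enorm)
      (fun y => by rw [rad_comb i j hu]; exact enorm_comb_le _ i j _)
      ((comp_le (rad_int (hu.omt i) r) j).trans (ha1 i))
      (fun k => (comp_le (rad_int hu r) k).trans ha0)
    refine this.trans (le_of_eq ?_)
    ring
  have k1 : ∀ i k, NN r (fun y => ‖angOp i (fun y => u y k) y‖ₑ) ≤ 4 * b := fun i k =>
    ang_NN hu hb0 (hb1 i) k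
  have k2 : ∀ l i, NN r (fun y => ‖angOp l (angOp i f) y‖ₑ) ≤ 16 * b := by
    intro l i
    have := comb_NN (r := r) (h := fun y => ‖angOp l (angOp i f) y‖ₑ)
      (a := fun y => ‖angOp l (fun y => omtV i u y j) y‖ₑ)
      (w := fun k y => ‖angOp l (fun y => u y k) y‖ₑ) (b := 4 * b) (c := 4 * b)
      (enorm_meas ((hu.omt i j).ang l).c1.continuous)
      (fun k => enorm_meas ((hu k).ang l).c1.continuous)
      (fun y => by rw [ang_comb l i j hu]; exact enorm_comb_le _ i j _)
      (ang_NN (hu.omt i) (hb1 i) (hb2 l i) j) (fun k => k1 l k)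
    refine this.trans (le_of_eq ?_)
    ring
  have kf0 : NN r (kf f) ≤ 49 * b := by
    refine (kf_NN hfg ((comp_le (good_int hu r) j).trans hb0) (fun i => k1 i j)).trans (le_of_eq ?_)
    ring
  have kf1 : ∀ i, NN r (kf (angOp i f)) ≤ 196 * b := by
    intro i
    refine (kf_NN (hA i) (k1 i j) (fun l => k2 l i)).trans (le_of_eq ?_)
    ring
  have sq : ∀ n : ℕ, ((n ^ 2 : ℕ) : ENNReal) ^ ((1:ℝ)/2) = n := by
    intro n
    push_cast
    rw [← ENNReal.rpow_natCast, ← ENNReal.rpow_mul]; norm_num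
  have s4 : (4 : ENNReal) ^ ((1:ℝ)/2) = 2 := by simpa using sq 2
  have s49 : (49 : ENNReal) ^ ((1:ℝ)/2) = 7 := by simpa using sq 7
  have s196 : (196 : ENNReal) ^ ((1:ℝ)/2) = 14 := by simpa using sq 14
  have hh : (0:ℝ) ≤ 1/2 := by norm_num
  have t0 : ENNReal.ofReal r * (∫⁻ q, ‖f (r • om R q)‖ₑ ^ 3 ∂(I01.prod I01)) ^ ((1:ℝ)/3) ≤
      35 * (a ^ ((1:ℝ)/2) * b ^ ((1:ℝ)/2)) := by
    refine (trace_root R hfg.c1 hfg.2 hr).trans ?_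
    calc _ ≤ 5 * a ^ ((1:ℝ)/2) * (49 * b) ^ ((1:ℝ)/2) := by gcongr
      _ = _ := by rw [ENNReal.mul_rpow_of_nonneg _ _ hh, s49]; ring
  have t1 : ∀ i, ENNReal.ofReal r * (∫⁻ q, ‖angOp i f (r • om R q)‖ₑ ^ 3 ∂(I01.prod I01)) ^ ((1:ℝ)/3) ≤
      140 * (a ^ ((1:ℝ)/2) * b ^ ((1:ℝ)/2)) := by
    intro i
    refine (trace_root R (hA i).c1 (hA i).2 hr).trans ?_
    calc _ ≤ 5 * (4 * a) ^ ((1:ℝ)/2) * (196 * b) ^ ((1:ℝ)/2) := by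
          gcongr
          · exact n1 i
          · exact kf1 i
      _ = _ := by
          rw [ENNReal.mul_rpow_of_nonneg _ _ hh, ENNReal.mul_rpow_of_nonneg _ _ hh, s196, s4]; ring
  calc ENNReal.ofReal r * ‖u x j‖ₑ ≤ ENNReal.ofReal r *
        (2 * (∫⁻ q, ‖f (r • om R q)‖ₑ ^ 3 ∂(I01.prod I01)) ^ ((1:ℝ)/3) +
      2 * ∑ i, 2 * (∫⁻ q, ‖angOp i f (r • om R q)‖ₑ ^ 3 ∂(I01.prod I01)) ^ ((1:ℝ)/3)) := by
        gcongr
    _ = 2 * (ENNReal.ofReal r * (∫⁻ q, ‖f (r • om R q)‖ₑ ^ 3 ∂(I01.prod I01)) ^ ((1:ℝ)/3)) +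
      4 * ∑ i, ENNReal.ofReal r * (∫⁻ q, ‖angOp i f (r • om R q)‖ₑ ^ 3 ∂(I01.prod I01)) ^ ((1:ℝ)/3) := by
        simp only [Fin.sum_univ_three]; ring
    _ ≤ 2 * (35 * (a ^ ((1:ℝ)/2) * b ^ ((1:ℝ)/2))) + 4 * ∑ i : Fin 3, 140 * (a ^ ((1:ℝ)/2) * b ^ ((1:ℝ)/2)) := by
        refine add_le_add (mul_le_mul' le_rfl t0) (mul_le_mul' le_rfl (Finset.sum_le_sum fun i _ => t1 i))
    _ = _ := by simp only [Fin.sum_univ_three]; ring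

lemma sqrt_sum_le (a b c : ℝ) : Real.sqrt (a ^ 2 + b ^ 2 + c ^ 2) ≤ |a| + |b| + |c| := by
  apply Real.sqrt_le_iff.2
  refine ⟨by positivity, ?_⟩
  rw [← sq_abs a, ← sq_abs b, ← sq_abs c]
  nlinarith [mul_nonneg (abs_nonneg a) (abs_nonneg b), mul_nonneg (abs_nonneg a) (abs_nonneg c),
    mul_nonneg (abs_nonneg b) (abs_nonneg c)]

/-- there is a constant `C > 0` such that for every `u ∈ C_c^∞(ℝ³;ℝ³)` and every
`x ≠ 0`, with `r = |x|`,
`r |u(x)| ≤ C (Σ_{|α|≤1} ‖∂_ρ Ω̃^α u‖_{L²(|y|≥r)})^{1/2} (Σ_{|α|≤2} ‖Ω̃^α u‖_{L²(|y|≥r)})^{1/2}`. -/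
theorem weighted_sobolev_full_power :
    ∃ C > 0, ∀ u : VF3, ContDiff ℝ (⊤ : ℕ∞) u → HasCompactSupport u →
      ∀ x : E3, x ≠ 0 →
        ‖x‖ * Real.sqrt (∑ j, (u x j) ^ 2) ≤
          C * (l2tail ‖x‖ (radV u) + ∑ i : Fin 3, l2tail ‖x‖ (radV (omtV i u))) ^ ((1 : ℝ) / 2)
            * (l2tail ‖x‖ u + (∑ i : Fin 3, l2tail ‖x‖ (omtV i u))
                + ∑ i : Fin 3, ∑ j : Fin 3, l2tail ‖x‖ (omtV i (omtV j u))) ^ ((1 : ℝ) / 2) := by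
  refine ⟨5250, by norm_num, ?_⟩
  intro u hu hc x hx
  have hug : VGood u := by
    intro j
    refine ⟨contDiff_pi.1 hu j, ?_⟩
    exact hc.comp_left (g := fun w : Fin 3 → ℝ => w j) rfl
  have nn := l2tail_nonneg ‖x‖
  set A := l2tail ‖x‖ (radV u) + ∑ i : Fin 3, l2tail ‖x‖ (radV (omtV i u)) with hA
  set B := l2tail ‖x‖ u + (∑ i : Fin 3, l2tail ‖x‖ (omtV i u))
                + ∑ i : Fin 3, ∑ j : Fin 3, l2tail ‖x‖ (omtV i (omtV j u)) with hB
  have sA : 0 ≤ ∑ i : Fin 3, l2tail ‖x‖ (radV (omtV i u)) := Finset.sum_nonneg fun _ _ => nn _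
  have sB1 : 0 ≤ ∑ i : Fin 3, l2tail ‖x‖ (omtV i u) := Finset.sum_nonneg fun _ _ => nn _
  have sB2 : 0 ≤ ∑ i : Fin 3, ∑ j : Fin 3, l2tail ‖x‖ (omtV i (omtV j u)) :=
    Finset.sum_nonneg fun _ _ => Finset.sum_nonneg fun _ _ => nn _
  have hA0 : 0 ≤ A := add_nonneg (nn _) sA
  have hB0 : 0 ≤ B := add_nonneg (add_nonneg (nn _) sB1) sB2
  have key : ∀ j, ‖x‖ * |u x j| ≤ 1750 * (A ^ ((1:ℝ)/2) * B ^ ((1:ℝ)/2)) := by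
    intro j
    have := vec_main hug hx (a := ENNReal.ofReal A) (b := ENNReal.ofReal B)
      (ENNReal.ofReal_le_ofReal (le_add_of_nonneg_right sA))
      (fun i => ENNReal.ofReal_le_ofReal (by
        have := Finset.single_le_sum (f := fun i => l2tail ‖x‖ (radV (omtV i u)))
          (fun _ _ => nn _) (Finset.mem_univ i)
        have h2 := nn (radV u)
        linarith))
      (ENNReal.ofReal_le_ofReal (by linarith))
      (fun i => ENNReal.ofReal_le_ofReal (by
        have := Finset.single_le_sum (f := fun i => l2tail ‖x‖ (omtV i u))
          (fun _ _ => nn _) (Finset.mem_univ i)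
        have h2 := nn u
        linarith))
      (fun i k => ENNReal.ofReal_le_ofReal (by
        have h1 := Finset.single_le_sum (f := fun k => l2tail ‖x‖ (omtV i (omtV k u)))
          (fun _ _ => nn _) (Finset.mem_univ k)
        have := Finset.single_le_sum (f := fun i => ∑ k : Fin 3, l2tail ‖x‖ (omtV i (omtV k u)))
          (fun _ _ => Finset.sum_nonneg fun _ _ => nn _) (Finset.mem_univ i)
        have h2 := nn u
        linarith)) j
    have e : (1750 : ENNReal) = ENNReal.ofReal 1750 := by simp
    rw [← ofReal_norm, ENNReal.ofReal_rpow_of_nonneg hA0 (by norm_num),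
      ENNReal.ofReal_rpow_of_nonneg hB0 (by norm_num), e, ← ENNReal.ofReal_mul (norm_nonneg _),
      ← ENNReal.ofReal_mul (by positivity), ← ENNReal.ofReal_mul (by norm_num),
      ENNReal.ofReal_le_ofReal_iff (by positivity), Real.norm_eq_abs] at this
    exact this
  rw [Fin.sum_univ_three]
  calc ‖x‖ * Real.sqrt (u x 0 ^ 2 + u x 1 ^ 2 + u x 2 ^ 2)
      ≤ ‖x‖ * (|u x 0| + |u x 1| + |u x 2|) := by
        gcongr
        exact sqrt_sum_le _ _ _
    _ = ‖x‖ * |u x 0| + ‖x‖ * |u x 1| + ‖x‖ * |u x 2| := by ring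
    _ ≤ 5250 * A ^ ((1:ℝ)/2) * B ^ ((1:ℝ)/2) := by linarith [key 0, key 1, key 2]

end
end
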